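/- Let Ω be a bounded C² domain, let F satisfy (F1)–(F4), let b, c, g be continuous on Ω̄, and assume c < 0 in Ω̄. Then: (a) if u ∈ USC(Ω̄) is a viscosity subsolution and v ∈ LSC(Ω̄) is a viscosity supersolution of F(x,Du,D²u) + b(x)·Du|Du|^α + c(x)|u|^α u = g(x) in Ω with ⟨Du, n⟩ = 0 on ∂Ω, and either both u and v are bounded or v ≥ 0 and bounded, then u ≤ v in Ω̄; (b) the Neumann problem F(x,Du,D²u) + b(x)·Du|Du|^α + c(x)|u|^α u = g(x) in Ω, ⟨Du,n⟩ = 0 on ∂Ω, has a unique viscosity solution. -/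

import Mathlib

/-!
The argument is phrased in terms of second order superjets (`JetSub`, `SubJ`). A supersolution `v`
of the equation of `F` is the negative of a subsolution of the dual operator
`(x, p, X) ↦ -F x (-p) (-X)`, so it suffices to treat subsolutions. The equation is singular or
degenerate at vanishing gradients, where the definition of a viscosity solution says something
only at points of local constancy. That clause is equivalent to a more usable one: with `m` so
large that `1 < (2 m - 1) (α + 1)`, whenever `u` is touched from above at `x` by a constant plus a
multiple of `‖· - x‖ ^ (2 m)`, the inequality `g x ≤ c x |u x| ^ α u x` holds (`zer_of_const`).
If this failed, sliding the vertex of the power around would show that every contact point is the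
vertex itself, because the operator is small on such powers off the vertex; then `u` would be
Hölder continuous with exponent `2 m > 1`, hence locally constant.

Comparison. An approximate form of the theorem on sums (`wst`) comes from sup-convolution and a
Jensen type lemma on maximizers of tilted semiconvex functions (`contact_lemma`). The variables
are doubled with penalties `H (x - y) (ψ x + ψ y)`, where the weight `ψ = 1 + exp (L ρ)` makes the
gradient point strictly outwards at boundary points (`Barrier`, `bdry_pos`), so that the equation
itself holds there. With ellipticity and the Hölder conditions on `F` this gives an inequality at
maximum points off the diagonal (`doubling`). A concave `H` yields the Lipschitz bound
`u x - v y ≤ max (u - v) + Λ ‖x - y‖` (`lip_est`). With `H = j ‖·‖ ^ (2 m)` that bound keeps the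
gradients bounded as `j → ∞`, while the errors carry a positive power of `‖x - y‖`, as `θ` and `ν`
exceed `1 / 2`, and tend to zero; a maximum point on the diagonal is handled by the condition at
vanishing gradients. In the limit a positive maximum of `u - v` contradicts `c < 0`
(`comparison`).

Existence is Perron's method. Since `c < 0`, the constants `-K` and `K` are a subsolution and a
supersolution for some `K`. The upper envelope of a supremum of subsolutions is a subsolution
(`sup_subJ`), and the lower envelope of the largest subsolution above `-K` is a supersolution
(`super_subJ`), for otherwise a bump would enlarge it (`bump`). Comparison shows that the two
envelopes coincide (`perron`). Uniqueness is immediate from comparison.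
-/

open Filter Set Metric
open scoped RealInnerProductSpace Topology NNReal

noncomputable section

/-- Euclidean space `ℝ^N`. -/
abbrev EN (N : ℕ) := EuclideanSpace ℝ (Fin N)

/-- The space of `N × N` real matrices. -/
abbrev Mat (N : ℕ) := Matrix (Fin N) (Fin N) ℝ

/-- Operator (spectral) norm of a matrix, viewed as a linear map on Euclidean space. -/
noncomputable def matNorm {N : ℕ} (X : Mat N) : ℝ :=
  ‖LinearMap.toContinuousLinearMap (Matrix.toEuclideanLin X)‖

/-- The Hessian matrix of `φ : ℝ^N → ℝ` at `x`. -/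
noncomputable def hess {N : ℕ} (φ : EN N → ℝ) (x : EN N) : Mat N :=
  Matrix.of fun i j =>
    iteratedFDeriv ℝ 2 φ x ![EuclideanSpace.single i 1, EuclideanSpace.single j 1]

/-- `ρ` is a `C²` defining function for the domain `Ω` with exterior unit normal `nv`. -/
def IsC2DefiningFun {N : ℕ} (Ω : Set (EN N)) (nv : EN N → EN N) (ρ : EN N → ℝ) : Prop :=
  ContDiff ℝ 2 ρ ∧ Ω = {x | ρ x < 0} ∧ frontier Ω = {x | ρ x = 0} ∧
    ∀ x ∈ frontier Ω, gradient ρ x ≠ 0 ∧ nv x = ‖gradient ρ x‖⁻¹ • gradient ρ x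

/-- `Ω` is a bounded domain of class `C²` with exterior unit normal `nv` on `∂Ω`. -/
def IsC2Domain {N : ℕ} (Ω : Set (EN N)) (nv : EN N → EN N) : Prop :=
  IsOpen Ω ∧ IsConnected Ω ∧ Bornology.IsBounded Ω ∧ ∃ ρ : EN N → ℝ, IsC2DefiningFun Ω nv ρ

/-- `Ω` is a bounded domain of class `C¹` with exterior unit normal `nv` on `∂Ω`. -/
def IsC1Domain {N : ℕ} (Ω : Set (EN N)) (nv : EN N → EN N) : Prop :=
  IsOpen Ω ∧ IsConnected Ω ∧ Bornology.IsBounded Ω ∧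
    ∃ ρ : EN N → ℝ, ContDiff ℝ 1 ρ ∧ Ω = {x | ρ x < 0} ∧ frontier Ω = {x | ρ x = 0} ∧
      ∀ x ∈ frontier Ω, gradient ρ x ≠ 0 ∧ nv x = ‖gradient ρ x‖⁻¹ • gradient ρ x

/-- Interior sphere condition (Ω1). -/
def InteriorSphereCond {N : ℕ} (Ω : Set (EN N)) : Prop :=
  ∀ x ∈ frontier Ω, ∃ R > (0 : ℝ), ∃ y ∈ Ω, ‖x - y‖ = R ∧ Metric.ball y R ⊆ Ω

/-- (F1): homogeneity of `F`. -/
def CondF1 {N : ℕ} (Ω : Set (EN N)) (α : ℝ) (F : EN N → EN N → Mat N → ℝ) : Prop :=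
  ∀ x ∈ closure Ω, ∀ t : ℝ, t ≠ 0 → ∀ μ : ℝ, 0 ≤ μ → ∀ p : EN N, p ≠ 0 → ∀ X : Mat N,
    X.IsSymm → F x (t • p) (μ • X) = |t| ^ α * μ * F x p X

/-- (F2): uniform ellipticity of `F` with ellipticity constants `0 < a ≤ A`. -/
def CondF2 {N : ℕ} (Ω : Set (EN N)) (α a A : ℝ) (F : EN N → EN N → Mat N → ℝ) : Prop :=
  0 < a ∧ a ≤ A ∧ ∀ x ∈ closure Ω, ∀ p : EN N, p ≠ 0 → ∀ M P : Mat N, M.IsSymm →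
    P.PosSemidef →
      a * ‖p‖ ^ α * P.trace ≤ F x p (M + P) - F x p M ∧
      F x p (M + P) - F x p M ≤ A * ‖p‖ ^ α * P.trace

/-- (F3): Hölder continuity of `F` in the `x` variable. -/
def CondF3 {N : ℕ} (Ω : Set (EN N)) (α C₁ θ : ℝ) (F : EN N → EN N → Mat N → ℝ) : Prop :=
  0 < C₁ ∧ θ ∈ Set.Ioc (1/2 : ℝ) 1 ∧ ∀ x ∈ closure Ω, ∀ y ∈ closure Ω, ∀ p : EN N, p ≠ 0 →
    ∀ X : Mat N, X.IsSymm → |F x p X - F y p X| ≤ C₁ * ‖x - y‖ ^ θ * ‖p‖ ^ α * matNorm X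

/-- (F4): Hölder continuity of `F` in the gradient variable. -/
def CondF4 {N : ℕ} (Ω : Set (EN N)) (α C₂ ν : ℝ) (F : EN N → EN N → Mat N → ℝ) : Prop :=
  0 < C₂ ∧ ν ∈ Set.Ioc (1/2 : ℝ) 1 ∧ ∀ x ∈ closure Ω, ∀ p : EN N, p ≠ 0 → ∀ q : EN N,
    ‖q‖ ≤ ‖p‖ / 2 → ∀ X : Mat N, X.IsSymm →
      |F x (p + q) X - F x p X| ≤ C₂ * ‖p‖ ^ (α - ν) * ‖q‖ ^ ν * matNorm X

/-- The Neumann boundary operator `B(x,r,p) = ⟨p, n(x)⟩`. -/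
def BNeu {N : ℕ} (nv : EN N → EN N) : EN N → ℝ → EN N → ℝ := fun x _ p => ⟪p, nv x⟫

/-- Viscosity subsolution of
`F(x,Du,D²u) + b(x)·Du |Du|^α + c₀(x, u) = g(x)` in `Ω`, `B(x,u,Du) = 0` on `∂Ω`. -/
def IsSubSol {N : ℕ} (Ω : Set (EN N)) (F : EN N → EN N → Mat N → ℝ) (b : EN N → EN N)
    (α : ℝ) (c₀ : EN N → ℝ → ℝ) (g : EN N → ℝ) (B : EN N → ℝ → EN N → ℝ)
    (u : EN N → ℝ) : Prop :=
  (∀ x₀ ∈ Ω, ∀ φ : EN N → ℝ, ContDiff ℝ 2 φ →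
      IsLocalMaxOn (fun x => u x - φ x) (closure Ω) x₀ → gradient φ x₀ ≠ 0 →
      g x₀ ≤ F x₀ (gradient φ x₀) (hess φ x₀)
        + ⟪b x₀, gradient φ x₀⟫ * ‖gradient φ x₀‖ ^ α + c₀ x₀ (u x₀)) ∧
  (∀ x₀ ∈ Ω, ∀ k : ℝ, (∀ᶠ x in nhdsWithin x₀ (closure Ω), u x = k) → g x₀ ≤ c₀ x₀ k) ∧
  (∀ x₀ ∈ frontier Ω, ∀ φ : EN N → ℝ, ContDiff ℝ 2 φ →
      IsLocalMaxOn (fun x => u x - φ x) (closure Ω) x₀ → gradient φ x₀ ≠ 0 →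
      min (g x₀ - (F x₀ (gradient φ x₀) (hess φ x₀)
          + ⟪b x₀, gradient φ x₀⟫ * ‖gradient φ x₀‖ ^ α + c₀ x₀ (u x₀)))
        (B x₀ (u x₀) (gradient φ x₀)) ≤ 0) ∧
  (∀ x₀ ∈ frontier Ω, ∀ k : ℝ, (∀ᶠ x in nhdsWithin x₀ (closure Ω), u x = k) →
      min (g x₀ - c₀ x₀ k) (B x₀ k 0) ≤ 0)

/-- Viscosity supersolution of
`F(x,Dv,D²v) + b(x)·Dv |Dv|^α + c₀(x, v) = g(x)` in `Ω`, `B(x,v,Dv) = 0` on `∂Ω`. -/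
def IsSuperSol {N : ℕ} (Ω : Set (EN N)) (F : EN N → EN N → Mat N → ℝ) (b : EN N → EN N)
    (α : ℝ) (c₀ : EN N → ℝ → ℝ) (g : EN N → ℝ) (B : EN N → ℝ → EN N → ℝ)
    (v : EN N → ℝ) : Prop :=
  (∀ x₀ ∈ Ω, ∀ φ : EN N → ℝ, ContDiff ℝ 2 φ →
      IsLocalMinOn (fun x => v x - φ x) (closure Ω) x₀ → gradient φ x₀ ≠ 0 →
      F x₀ (gradient φ x₀) (hess φ x₀)
        + ⟪b x₀, gradient φ x₀⟫ * ‖gradient φ x₀‖ ^ α + c₀ x₀ (v x₀) ≤ g x₀) ∧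
  (∀ x₀ ∈ Ω, ∀ k : ℝ, (∀ᶠ x in nhdsWithin x₀ (closure Ω), v x = k) → c₀ x₀ k ≤ g x₀) ∧
  (∀ x₀ ∈ frontier Ω, ∀ φ : EN N → ℝ, ContDiff ℝ 2 φ →
      IsLocalMinOn (fun x => v x - φ x) (closure Ω) x₀ → gradient φ x₀ ≠ 0 →
      0 ≤ max (g x₀ - (F x₀ (gradient φ x₀) (hess φ x₀)
          + ⟪b x₀, gradient φ x₀⟫ * ‖gradient φ x₀‖ ^ α + c₀ x₀ (v x₀)))
        (B x₀ (v x₀) (gradient φ x₀))) ∧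
  (∀ x₀ ∈ frontier Ω, ∀ k : ℝ, (∀ᶠ x in nhdsWithin x₀ (closure Ω), v x = k) →
      0 ≤ max (g x₀ - c₀ x₀ k) (B x₀ k 0))

/-- The admissible set for the principal eigenvalue `λ̄`:
all `λ` such that there is a bounded positive supersolution of
`G(x,v,Dv,D²v) + λ v^{α+1} ≤ 0` in `Ω`, `⟨Dv, n⟩ ≥ 0` on `∂Ω`. -/
def lamBarSet {N : ℕ} (Ω : Set (EN N)) (nv : EN N → EN N) (F : EN N → EN N → Mat N → ℝ)
    (b : EN N → EN N) (c : EN N → ℝ) (α : ℝ) : Set ℝ :=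
  {lam | ∃ v : EN N → ℝ, LowerSemicontinuousOn v (closure Ω) ∧
    (∀ x ∈ closure Ω, 0 < v x) ∧ (∃ M, ∀ x ∈ closure Ω, v x ≤ M) ∧
    IsSuperSol Ω F b α (fun x r => (c x + lam) * |r| ^ α * r) (fun _ => 0) (BNeu nv) v}

/-- The admissible set for the principal eigenvalue `λ̲`:
all `λ` such that there is a bounded negative subsolution of
`G(x,u,Du,D²u) + λ |u|^α u ≥ 0` in `Ω`, `⟨Du, n⟩ ≤ 0` on `∂Ω`. -/
def lamLowSet {N : ℕ} (Ω : Set (EN N)) (nv : EN N → EN N) (F : EN N → EN N → Mat N → ℝ)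
    (b : EN N → EN N) (c : EN N → ℝ) (α : ℝ) : Set ℝ :=
  {lam | ∃ u : EN N → ℝ, UpperSemicontinuousOn u (closure Ω) ∧
    (∀ x ∈ closure Ω, u x < 0) ∧ (∃ M, ∀ x ∈ closure Ω, M ≤ u x) ∧
    IsSubSol Ω F b α (fun x r => (c x + lam) * |r| ^ α * r) (fun _ => 0) (BNeu nv) u}

/-! ### Second order expansions of semiconvex functions -/

/-- Near a density point `z` of `S`, every point at distance at most `s` from `z` is within `η s`
of `S`. -/
lemma density_close {V : Type*} [NormedAddCommGroup V] [InnerProductSpace ℝ V]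
    [FiniteDimensional ℝ V] [MeasurableSpace V] [BorelSpace V] (μ : MeasureTheory.Measure V)
    [μ.IsAddHaarMeasure] {S : Set V} {z : V}
    (h : Tendsto (fun r => μ (S ∩ closedBall z r) / μ (closedBall z r)) (𝓝[>] 0) (𝓝 1))
    {η : ℝ} (hη : 0 < η) (hη1 : η ≤ 1) :
    ∀ᶠ s in 𝓝[>] (0 : ℝ), ∀ z', ‖z' - z‖ ≤ s → ∃ ζ ∈ S, ‖ζ - z'‖ ≤ η * s := by
  set c : ENNReal := ENNReal.ofReal ((η / 2) ^ Module.finrank ℝ V) with hc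
  have hc0 : 0 < c := by
    rw [hc, ENNReal.ofReal_pos]; positivity
  have hlt : (1 : ENNReal) - c < 1 := ENNReal.sub_lt_self (by simp) (by simp) hc0.ne'
  have h2 : Tendsto (fun s : ℝ => 2 * s) (𝓝[>] 0) (𝓝[>] 0) := by
    refine tendsto_nhdsWithin_iff.2 ⟨?_, ?_⟩
    · have : Tendsto (fun s : ℝ => 2 * s) (𝓝 0) (𝓝 (2 * 0)) :=
        (continuous_const.mul continuous_id).tendsto 0
      rw [mul_zero] at this
      exact this.mono_left nhdsWithin_le_nhds
    · filter_upwards [self_mem_nhdsWithin] with s hs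
      have : (0 : ℝ) < s := hs
      simp only [mem_Ioi]; linarith
  have h3 := (h.comp h2).eventually (lt_mem_nhds hlt)
  filter_upwards [h3, self_mem_nhdsWithin] with s hs hs0 z' hz'
  have hs0 : (0 : ℝ) < s := hs0
  by_contra hcon
  push Not at hcon
  simp only [Function.comp] at hs
  set b := closedBall z' (η * s)
  set B := closedBall z (2 * s)
  have hbB : b ⊆ B := by
    intro x hx
    simp only [b, B, mem_closedBall, dist_eq_norm] at hx ⊢
    calc ‖x - z‖ = ‖(x - z') + (z' - z)‖ := by congr 1; abel
      _ ≤ ‖x - z'‖ + ‖z' - z‖ := norm_add_le _ _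
      _ ≤ η * s + s := by linarith
      _ ≤ 2 * s := by nlinarith
  have hdis : Disjoint (S ∩ B) b := by
    rw [Set.disjoint_left]
    rintro x ⟨hxS, _⟩ hxb
    have := hcon x hxS
    simp only [b, mem_closedBall, dist_eq_norm] at hxb
    linarith
  have hle : μ (S ∩ B) + μ b ≤ μ B := by
    rw [← MeasureTheory.measure_union hdis measurableSet_closedBall]
    exact MeasureTheory.measure_mono (union_subset inter_subset_right hbB)
  have hb : μ b = c * μ B := by
    simp only [b, B]
    rw [MeasureTheory.Measure.addHaar_closedBall μ z' (by positivity),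
      MeasureTheory.Measure.addHaar_closedBall μ z (by positivity), ← mul_assoc, hc,
      ← ENNReal.ofReal_mul (by positivity), ← mul_pow]
    congr 3
    ring
  have hB0 : μ B ≠ 0 := (measure_closedBall_pos μ z (by positivity)).ne'
  have hBt : μ B ≠ ⊤ := MeasureTheory.measure_closedBall_lt_top.ne
  have h5 : μ (S ∩ B) / μ B + c ≤ 1 := by
    have := ENNReal.div_le_div_right hle (μ B)
    rw [ENNReal.div_self hB0 hBt, ENNReal.add_div, hb, mul_div_assoc, ENNReal.div_self hB0 hBt, mul_one]
      at this
    exact this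
  have h6 : μ (S ∩ B) / μ B ≤ 1 - c := ENNReal.le_sub_of_add_le_right (by simp [hc]) h5
  exact absurd hs (not_lt.2 h6)

set_option maxHeartbeats 800000 in
/-- A function that is `C^{1,1}` at the points of `S`, whose gradient along `S` is differentiable
at a density point `z`, has a second order expansion at `z`: one walks from `z` to `z + k` in `m`
equal steps, using at each step the first order expansion at a nearby point of `S`. -/
lemma second_order_of_density {V : Type*} [NormedAddCommGroup V] [InnerProductSpace ℝ V]
    {w : V → ℝ} {S : Set V} {P : V → V} {C R₀ : ℝ} (hC : 0 ≤ C) (hR₀ : 0 < R₀)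
    (hw : ∀ ζ ∈ S, ∀ k, ‖k‖ ≤ R₀ → |w (ζ + k) - w ζ - ⟪P ζ, k⟫| ≤ C * ‖k‖ ^ 2)
    {z : V} {B : V →L[ℝ] V} (hB : HasFDerivWithinAt P B S z)
    (hd : ∀ η : ℝ, 0 < η → η ≤ 1 →
      ∀ᶠ s in 𝓝[>] (0 : ℝ), ∀ z', ‖z' - z‖ ≤ s → ∃ ζ ∈ S, ‖ζ - z'‖ ≤ η * s)
    {ε : ℝ} (hε : 0 < ε) :
    ∀ᶠ k in 𝓝 (0 : V), |w (z + k) - w z - ⟪P z, k⟫ - 1 / 2 * ⟪B k, k⟫| ≤ ε * ‖k‖ ^ 2 := by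
  obtain ⟨m, hm⟩ := exists_nat_gt (2 * (5 * C + 2 * ‖B‖) / ε + 1)
  have hBn : 0 ≤ ‖B‖ := norm_nonneg B
  have hm1 : (1 : ℝ) < m := by
    have : 0 ≤ 2 * (5 * C + 2 * ‖B‖) / ε := by positivity
    linarith
  have hm0 : (0 : ℝ) < m := by linarith
  have hmε : (5 * C + 2 * ‖B‖) / m ≤ ε / 2 := by
    rw [div_le_iff₀ hm0]
    have : 2 * (5 * C + 2 * ‖B‖) / ε < m := by linarith
    rw [div_lt_iff₀ hε] at this
    linarith
  have hdiff : ∀ᶠ ζ in 𝓝[S] z, ‖P ζ - P z - B (ζ - z)‖ ≤ ε / 4 * ‖ζ - z‖ :=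
    hB.isLittleO.def (by positivity)
  obtain ⟨r₁, hr₁, hdiff⟩ := Metric.mem_nhdsWithin_iff.1 hdiff
  have hdm := hd (1 / m) (by positivity) (by rw [div_le_one hm0]; exact hm1.le)
  obtain ⟨r₂, hr₂, hdm⟩ := mem_nhdsGT_iff_exists_Ioo_subset.1 hdm
  have hr₂ : (0 : ℝ) < r₂ := hr₂
  have hball : ball (0 : V) (min (min (r₁ / 3) r₂) (R₀ / 2)) ∈ 𝓝 (0 : V) :=
    ball_mem_nhds _ (by positivity)
  filter_upwards [hball] with k hk
  rw [mem_ball_zero_iff, lt_min_iff, lt_min_iff] at hk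
  obtain ⟨⟨hk1, hk2⟩, hk3⟩ := hk
  rcases eq_or_ne k 0 with rfl | hk0
  · simp
  set s := ‖k‖ with hs
  have hs0 : 0 < s := norm_pos_iff.2 hk0
  have hclose : ∀ z', ‖z' - z‖ ≤ s → ∃ ζ ∈ S, ‖ζ - z'‖ ≤ 1 / m * s := hdm ⟨hs0, hk2⟩
  set a := ⟪P z, k⟫
  set q := ⟪B k, k⟫
  have hq : |q| ≤ ‖B‖ * s ^ 2 := by
    calc |q| ≤ ‖B k‖ * ‖k‖ := abs_real_inner_le_norm _ _
      _ ≤ (‖B‖ * ‖k‖) * ‖k‖ := by gcongr; exact B.le_opNorm k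
      _ = ‖B‖ * s ^ 2 := by rw [hs]; ring
  have key : ∀ i : ℕ, i ≤ m →
      |w (z + ((i : ℝ) / m) • k) - (w z + (i / m) * a + 1 / 2 * (i / m) ^ 2 * q)|
        ≤ i * ((5 * C + 2 * ‖B‖) / m + ε / 2) / m * s ^ 2 := by
    intro i
    induction i with
    | zero => intro _; simp
    | succ i ih =>
      intro hi
      have him : (i : ℝ) + 1 ≤ m := by exact_mod_cast hi
      have hi0 : (0 : ℝ) ≤ i := Nat.cast_nonneg i
      have ih := ih (by omega)
      set y := z + ((i : ℝ) / m) • k with hy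
      have hyz : ‖y - z‖ ≤ s := by
        rw [hy, add_sub_cancel_left, norm_smul, Real.norm_of_nonneg (by positivity)]
        have : (i : ℝ) / m ≤ 1 := by rw [div_le_one hm0]; linarith
        nlinarith
      obtain ⟨ζ, hζS, hζ⟩ := hclose y hyz
      have hinv : 1 / (m : ℝ) ≤ 1 := by rw [div_le_one hm0]; exact hm1.le
      have hζz : ‖ζ - z‖ ≤ 2 * s := by
        calc ‖ζ - z‖ = ‖(ζ - y) + (y - z)‖ := by congr 1; abel
          _ ≤ ‖ζ - y‖ + ‖y - z‖ := norm_add_le _ _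
          _ ≤ 1 / m * s + s := by linarith
          _ ≤ 2 * s := by nlinarith
      have hD : ‖P ζ - P z - B (ζ - z)‖ ≤ ε / 4 * ‖ζ - z‖ := by
        refine hdiff ⟨?_, hζS⟩
        rw [mem_ball, dist_eq_norm]; linarith
      have hsucc : z + (((i + 1 : ℕ) : ℝ) / m) • k = y + (1 / (m : ℝ)) • k := by
        rw [hy, add_assoc, ← add_smul]; congr 2; push_cast; ring
      rw [hsucc]
      have hkm : ‖(1 / (m : ℝ)) • k‖ = 1 / m * s := by
        rw [norm_smul, Real.norm_of_nonneg (by positivity)]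
      have hw1 := hw ζ hζS (y - ζ) (by rw [norm_sub_rev]; nlinarith)
      have hn2 : ‖y + (1 / (m : ℝ)) • k - ζ‖ ≤ 2 * (1 / m * s) := by
        calc ‖y + (1 / (m : ℝ)) • k - ζ‖ = ‖(y - ζ) + (1 / (m : ℝ)) • k‖ := by congr 1; abel
          _ ≤ ‖y - ζ‖ + ‖(1 / (m : ℝ)) • k‖ := norm_add_le _ _
          _ ≤ _ := by rw [hkm, norm_sub_rev]; linarith
      have hw2 := hw ζ hζS (y + (1 / (m : ℝ)) • k - ζ) (by nlinarith)
      rw [add_sub_cancel] at hw1 hw2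
      have hn1 : ‖y - ζ‖ ≤ 1 / m * s := by rw [norm_sub_rev]; exact hζ
      have e1 : C * ‖y - ζ‖ ^ 2 ≤ C * (1 / m * s) ^ 2 := by gcongr
      have e2 : C * ‖y + (1 / (m : ℝ)) • k - ζ‖ ^ 2 ≤ C * (2 * (1 / m * s)) ^ 2 := by gcongr
      have hin : ⟪P ζ, y + (1 / (m : ℝ)) • k - ζ⟫ - ⟪P ζ, y - ζ⟫ = 1 / m * ⟪P ζ, k⟫ := by
        rw [← inner_sub_right, ← real_inner_smul_right]; congr 1; abel
      have hdev : |⟪P ζ, k⟫ - a - i / m * q| ≤ (ε / 4 * (2 * s) + ‖B‖ * (1 / m * s)) * s := by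
        have hsplit : ⟪P ζ, k⟫ - a - i / m * q
            = ⟪(P ζ - P z - B (ζ - z)) + B (ζ - y), k⟫ := by
          have : B (ζ - z) = B (ζ - y) + ((i : ℝ) / m) • B k := by
            rw [← map_smul, ← map_add]; congr 1; rw [hy]; abel
          rw [this, inner_add_left, inner_sub_left, inner_sub_left, inner_add_left,
            real_inner_smul_left]
          ring
        rw [hsplit]
        calc |⟪(P ζ - P z - B (ζ - z)) + B (ζ - y), k⟫|
            ≤ ‖(P ζ - P z - B (ζ - z)) + B (ζ - y)‖ * ‖k‖ := abs_real_inner_le_norm _ _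
          _ ≤ (ε / 4 * (2 * s) + ‖B‖ * (1 / m * s)) * s := by
            gcongr
            calc _ ≤ ‖P ζ - P z - B (ζ - z)‖ + ‖B (ζ - y)‖ := norm_add_le _ _
              _ ≤ ε / 4 * ‖ζ - z‖ + ‖B‖ * ‖ζ - y‖ := by gcongr; exact B.le_opNorm _
              _ ≤ _ := by gcongr
      rw [abs_le] at hw1 hw2 hdev ih hq ⊢
      push_cast
      have f1 : 1 / (m : ℝ) * ⟪P ζ, k⟫ - 1 / m * a - 1 / m * (i / m * q)
          = 1 / m * (⟪P ζ, k⟫ - a - i / m * q) := by ring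
      have hm' : 0 ≤ 1 / (m : ℝ) := by positivity
      have g1 := mul_le_mul_of_nonneg_left hdev.1 hm'
      have g2 := mul_le_mul_of_nonneg_left hdev.2 hm'
      have g3 := mul_le_mul_of_nonneg_left hq.1 (mul_nonneg hm' hm')
      have g4 := mul_le_mul_of_nonneg_left hq.2 (mul_nonneg hm' hm')
      have hT : ((i : ℝ) + 1) / m = i / m + 1 / m := by ring
      have hR : ((i : ℝ) + 1) * ((5 * C + 2 * ‖B‖) / m + ε / 2) / m * s ^ 2
          = i * ((5 * C + 2 * ‖B‖) / m + ε / 2) / m * s ^ 2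
            + (5 * C + 2 * ‖B‖) * (1 / m) * (1 / m) * s ^ 2 + ε / 2 * (1 / m) * s ^ 2 := by ring
      rw [hT, hR]
      have hpos : 0 ≤ ‖B‖ * (1 / m * (1 / m)) * s ^ 2 := by positivity
      constructor <;> linarith
  have hfin := key m le_rfl
  rw [div_self hm0.ne', one_smul] at hfin
  calc |w (z + k) - w z - a - 1 / 2 * q|
      = |w (z + k) - (w z + 1 * a + 1 / 2 * 1 ^ 2 * q)| := by congr 1; ring
    _ ≤ _ := hfin
    _ = ((5 * C + 2 * ‖B‖) / m + ε / 2) * s ^ 2 := by field_simp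
    _ ≤ ε * s ^ 2 := by gcongr; linarith

/-- Jensen's lemma for semiconvex functions: if all the maximizers of `w - ⟪p, ·⟫`, `‖p‖ ≤ δ`, stay
away from the boundary of the ball, one of them is a point of twice differentiability of `w`. The
gradient is Lipschitz along the set of maximizers and maps it onto a ball, so that set has positive
measure. -/
lemma contact_lemma {V : Type*} [NormedAddCommGroup V] [InnerProductSpace ℝ V]
    [FiniteDimensional ℝ V] {w : V → ℝ} {C R δ : ℝ} (hC : 0 ≤ C) (hR : 0 < R) (hδ : 0 < δ)
    (hcont : Continuous w)
    (hsc : ∀ z, ∃ p : V, ∀ k, w z + ⟪p, k⟫ - C * ‖k‖ ^ 2 ≤ w (z + k))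
    (hH : ∀ p : V, ‖p‖ ≤ δ → ∀ κ ∈ closedBall (0 : V) R,
      (∀ z ∈ closedBall (0 : V) R, w z - ⟪p, z⟫ ≤ w κ - ⟪p, κ⟫) → ‖κ‖ ≤ R / 4) :
    ∃ (κ p : V) (B : V →L[ℝ] V), ‖κ‖ ≤ R / 4 ∧ ‖p‖ ≤ δ ∧
      (∀ z ∈ closedBall (0 : V) R, w z - ⟪p, z⟫ ≤ w κ - ⟪p, κ⟫) ∧
      ∀ ε : ℝ, 0 < ε → ∀ᶠ k in 𝓝 (0 : V),
        |w (κ + k) - w κ - ⟪p, k⟫ - 1 / 2 * ⟪B k, k⟫| ≤ ε * ‖k‖ ^ 2 := by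
  let : MeasurableSpace V := borel V
  have : BorelSpace V := ⟨rfl⟩
  set n := Module.finrank ℝ V with hn
  set μ : MeasureTheory.Measure V := MeasureTheory.Measure.hausdorffMeasure (n : ℝ) with hμ
  have : μ.IsAddHaarMeasure := MeasureTheory.isAddHaarMeasure_hausdorffMeasure
  let Mx : V → V → Prop := fun p κ => κ ∈ closedBall (0 : V) R ∧
    ∀ z ∈ closedBall (0 : V) R, w z - ⟪p, z⟫ ≤ w κ - ⟪p, κ⟫
  let S : Set V := {κ | ∃ p, ‖p‖ ≤ δ ∧ Mx p κ}
  have hex : ∀ p : V, ‖p‖ ≤ δ → ∃ κ, Mx p κ := by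
    intro p _
    have hc : ContinuousOn (fun z => w z - ⟪p, z⟫) (closedBall (0 : V) R) := by fun_prop
    obtain ⟨κ, hκ, hm⟩ := (isCompact_closedBall (0 : V) R).exists_isMaxOn
      ⟨0, by simp [hR.le]⟩ hc
    exact ⟨κ, hκ, fun z hz => hm hz⟩
  choose! P hP using (fun κ (hκ : κ ∈ S) => hκ)
  have hS4 : ∀ κ ∈ S, ‖κ‖ ≤ R / 4 := fun κ hκ => hH _ (hP κ hκ).1 κ (hP κ hκ).2.1 (hP κ hκ).2.2
  have hup : ∀ κ p, ‖p‖ ≤ δ → Mx p κ → ∀ k, ‖k‖ ≤ 3 * R / 4 → w (κ + k) ≤ w κ + ⟪p, k⟫ := by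
    intro κ p hp hM k hk
    have h4 : ‖κ‖ ≤ R / 4 := hH p hp κ hM.1 hM.2
    have : κ + k ∈ closedBall (0 : V) R := by
      rw [mem_closedBall_zero_iff]
      linarith [norm_add_le κ k]
    have := hM.2 _ this
    rw [inner_add_right] at this
    linarith
  have hlow : ∀ κ p, ‖p‖ ≤ δ → Mx p κ → ∀ k, w κ + ⟪p, k⟫ - C * ‖k‖ ^ 2 ≤ w (κ + k) := by
    intro κ p hp hM
    obtain ⟨p₀, hp₀⟩ := hsc κ
    have : p₀ = p := by
      by_contra hne
      set d := p₀ - p with hd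
      have hd0 : d ≠ 0 := sub_ne_zero.2 hne
      have hdn : 0 < ‖d‖ := norm_pos_iff.2 hd0
      have hall : ∀ t : ℝ, 0 < t → t * ‖d‖ ≤ 3 * R / 4 → 1 ≤ C * t := by
        intro t ht htR
        have hk : ‖t • d‖ = t * ‖d‖ := by rw [norm_smul, Real.norm_of_nonneg ht.le]
        have h1 := hp₀ (t • d)
        have h2 := hup κ p hp hM (t • d) (by rw [hk]; exact htR)
        have h3 : ⟪p₀, t • d⟫ - ⟪p, t • d⟫ = t * ‖d‖ ^ 2 := by
          rw [← inner_sub_left, ← hd, real_inner_smul_right, real_inner_self_eq_norm_sq]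
        rw [hk] at h1
        have h4 : t * ‖d‖ ^ 2 * 1 ≤ t * ‖d‖ ^ 2 * (C * t) := by nlinarith
        exact le_of_mul_le_mul_left h4 (by positivity)
      have h1 : 0 < min (1 / (2 * (C + 1))) (3 * R / 4 / ‖d‖) := by positivity
      have h2 := hall _ h1 (by
        rw [← le_div_iff₀ hdn]; exact min_le_right _ _)
      have h3 : C * min (1 / (2 * (C + 1))) (3 * R / 4 / ‖d‖) ≤ C * (1 / (2 * (C + 1))) := by
        gcongr; exact min_le_left _ _
      have h4 : C * (1 / (2 * (C + 1))) < 1 := by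
        rw [mul_one_div, div_lt_one (by positivity)]; linarith
      linarith
    rw [← this]; exact hp₀
  have hLip : ∀ z p, ‖p‖ ≤ δ → Mx p z → ∀ z' p', ‖p'‖ ≤ δ → Mx p' z' →
      ‖p - p'‖ ≤ 4 * C * ‖z - z'‖ := by
    intro z p hp hz z' p' hp' hz'
    have hz4 := hH p hp z hz.1 hz.2
    have hz4' := hH p' hp' z' hz'.1 hz'.2
    have hs : ‖z - z'‖ ≤ R / 2 := by linarith [norm_sub_le z z']
    set s := ‖z - z'‖ with hsd
    have hmain : ∀ k, ‖k‖ ≤ R / 2 → ⟪p - p', k⟫ ≤ C * (s + ‖k‖) ^ 2 := by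
      intro k hk
      have h1 := hup z' p' hp' hz' k (by linarith)
      have h2 := hlow z p hp hz (z' - z + k)
      have h3 := hup z p hp hz (z' - z) (by rw [norm_sub_rev]; linarith)
      have e1 : z + (z' - z + k) = z' + k := by abel
      have e2 : z + (z' - z) = z' := by abel
      rw [e1, inner_add_right] at h2
      rw [e2] at h3
      have h4 : ‖z' - z + k‖ ≤ s + ‖k‖ := by
        rw [hsd, norm_sub_rev z z']; exact norm_add_le _ _
      have h5 : C * ‖z' - z + k‖ ^ 2 ≤ C * (s + ‖k‖) ^ 2 := by gcongr
      rw [inner_sub_left]; linarith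
    rcases eq_or_ne p p' with rfl | hne
    · simp; positivity
    have hd0 : 0 < ‖p - p'‖ := norm_pos_iff.2 (sub_ne_zero.2 hne)
    rcases eq_or_lt_of_le (norm_nonneg (z - z')) with h0 | hspos
    · have hzz : z = z' := by rw [← sub_eq_zero, ← norm_eq_zero]; exact h0.symm
      exfalso
      have hs0 : s = 0 := h0.symm
      set t := min (1 / (2 * (C + 1))) (R / 2 / ‖p - p'‖) with ht
      have ht0 : 0 < t := by positivity
      have htk : ‖t • (p - p')‖ = t * ‖p - p'‖ := by
        rw [norm_smul, Real.norm_of_nonneg ht0.le]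
      have h1 := hmain (t • (p - p')) (by
        rw [htk, ← le_div_iff₀ hd0]; exact min_le_right _ _)
      rw [real_inner_smul_right, real_inner_self_eq_norm_sq, htk, hs0, zero_add] at h1
      have h4 : t * ‖p - p'‖ ^ 2 * 1 ≤ t * ‖p - p'‖ ^ 2 * (C * t) := by nlinarith
      have h5 := le_of_mul_le_mul_left h4 (by positivity)
      have h3 : C * t ≤ C * (1 / (2 * (C + 1))) := by
        gcongr; exact min_le_left _ _
      have h4 : C * (1 / (2 * (C + 1))) < 1 := by
        rw [mul_one_div, div_lt_one (by positivity)]; linarith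
      linarith
    · have hspos : 0 < s := hspos
      have hk : ‖(s / ‖p - p'‖) • (p - p')‖ = s := by
        rw [norm_smul, Real.norm_of_nonneg (by positivity), div_mul_cancel₀ _ hd0.ne']
      have h1 := hmain ((s / ‖p - p'‖) • (p - p')) (by rw [hk]; exact hs)
      rw [hk, real_inner_smul_right, real_inner_self_eq_norm_sq] at h1
      have e : s / ‖p - p'‖ * ‖p - p'‖ ^ 2 = s * ‖p - p'‖ := by field_simp
      rw [e] at h1
      have : s * ‖p - p'‖ ≤ s * (4 * C * s) := by nlinarith
      exact le_of_mul_le_mul_left this hspos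
  have hPL : LipschitzOnWith (Real.toNNReal (4 * C)) P S := by
    refine LipschitzOnWith.of_dist_le_mul ?_
    intro z hz z' hz'
    rw [dist_eq_norm, dist_eq_norm, Real.coe_toNNReal _ (by positivity)]
    exact hLip z _ (hP z hz).1 (hP z hz).2 z' _ (hP z' hz').1 (hP z' hz').2
  have hcov : closedBall (0 : V) δ ⊆ P '' S := by
    intro p hp
    rw [mem_closedBall_zero_iff] at hp
    obtain ⟨κ, hκ⟩ := hex p hp
    have hS : κ ∈ S := ⟨p, hp, hκ⟩
    refine ⟨κ, hS, ?_⟩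
    have := hLip κ _ (hP κ hS).1 (hP κ hS).2 κ p hp hκ
    simp only [sub_self, norm_zero, mul_zero] at this
    exact sub_eq_zero.1 (norm_le_zero_iff.1 this)
  have hμS : μ S ≠ 0 := by
    intro h0
    have h1 := hPL.hausdorffMeasure_image_le (d := (n : ℝ)) (by positivity)
    rw [← hμ, h0, mul_zero] at h1
    have h2 : μ (closedBall (0 : V) δ) ≤ 0 := (MeasureTheory.measure_mono hcov).trans h1
    exact (measure_closedBall_pos μ (0 : V) hδ).ne' (le_antisymm h2 bot_le)
  have hdens := Besicovitch.ae_tendsto_measure_inter_div μ S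
  have hdiff := hPL.ae_differentiableWithinAt_of_mem (μ := μ)
  obtain ⟨z, hzS, hz1, hz2⟩ : ∃ z ∈ S,
      Tendsto (fun r => μ (S ∩ closedBall z r) / μ (closedBall z r)) (𝓝[>] 0) (𝓝 1) ∧
      DifferentiableWithinAt ℝ P S z := by
    by_contra hcon
    push Not at hcon
    apply hμS
    rw [MeasureTheory.ae_iff] at hdens hdiff
    set T := {z | ¬ Tendsto (fun r => μ (S ∩ closedBall z r) / μ (closedBall z r)) (𝓝[>] 0) (𝓝 1)}
    have hT : μ (T ∩ S) = 0 :=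
      le_antisymm ((MeasureTheory.Measure.le_restrict_apply S T).trans hdens.le) bot_le
    refine MeasureTheory.measure_mono_null ?_ (MeasureTheory.measure_union_null hT hdiff)
    intro z hz
    by_cases hzT : z ∈ T
    · exact Or.inl ⟨hzT, hz⟩
    · right
      simp only [T, mem_ofPred_eq, not_not] at hzT
      intro h
      exact hcon z hz hzT (h hz)
  refine ⟨z, P z, fderivWithin ℝ P S z, hS4 z hzS, (hP z hzS).1, (hP z hzS).2.2, ?_⟩
  intro ε hε
  refine second_order_of_density (S := S) (P := P) hC (R₀ := 3 * R / 4) (by positivity) ?_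
    hz2.hasFDerivWithinAt (fun η h0 h1 => density_close μ hz1 h0 h1) hε
  intro ζ hζ k hk
  have h1 := hup ζ _ (hP ζ hζ).1 (hP ζ hζ).2 k hk
  have h2 := hlow ζ _ (hP ζ hζ).1 (hP ζ hζ).2 k
  have : 0 ≤ C * ‖k‖ ^ 2 := by positivity
  rw [abs_le]; constructor <;> linarith

/-! ### Sup-convolutions and the theorem on sums -/

/-- A local bound on a 2-homogeneous function is global. -/
lemma hom_le {V : Type*} [NormedAddCommGroup V] [NormedSpace ℝ V] {q : V → ℝ}
    (hq : ∀ (t : ℝ) (k : V), q (t • k) = t ^ 2 * q k) {ε : ℝ}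
    (h : ∀ᶠ k in 𝓝 (0 : V), q k ≤ ε * ‖k‖ ^ 2) (k : V) : q k ≤ ε * ‖k‖ ^ 2 := by
  have ht : Tendsto (fun t : ℝ => t • k) (𝓝[>] 0) (𝓝 (0 : V)) := by
    have : Tendsto (fun t : ℝ => t • k) (𝓝 0) (𝓝 ((0 : ℝ) • k)) :=
      (continuous_id.smul continuous_const).tendsto 0
    rw [zero_smul] at this
    exact this.mono_left nhdsWithin_le_nhds
  obtain ⟨t, h1, h2⟩ := ((ht.eventually h).and self_mem_nhdsWithin).exists
  have h2 : (0 : ℝ) < t := h2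
  rw [hq, norm_smul, mul_pow, Real.norm_eq_abs, sq_abs] at h1
  have : t ^ 2 * q k ≤ t ^ 2 * (ε * ‖k‖ ^ 2) := by linarith
  exact le_of_mul_le_mul_left this (by positivity)

/-- The sup-convolution of an upper semicontinuous function on a compact set: it is attained,
semiconvex and continuous. -/
lemma supconv {E : Type*} [NormedAddCommGroup E] [InnerProductSpace ℝ E]
    {K : Set E} (hK : IsCompact K) (hne : K.Nonempty) {f : E → ℝ}
    (hf : UpperSemicontinuousOn f K) {M : ℝ} (hM : 0 < M) :
    ∃ (F : E → ℝ) (h : E → E), (∀ z, h z ∈ K) ∧ (∀ z, F z = f (h z) - M * ‖h z - z‖ ^ 2) ∧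
      (∀ z, ∀ k ∈ K, f k - M * ‖k - z‖ ^ 2 ≤ F z) ∧ Continuous F ∧
      (∀ z k, F z + ⟪(2 * M) • (h z - z), k⟫ - M * ‖k‖ ^ 2 ≤ F (z + k)) := by
  have hex : ∀ z : E, ∃ k ∈ K, ∀ k' ∈ K, f k' - M * ‖k' - z‖ ^ 2 ≤ f k - M * ‖k - z‖ ^ 2 := by
    intro z
    have hc : Continuous (fun k : E => -(M * ‖k - z‖ ^ 2)) := by fun_prop
    have hu : UpperSemicontinuousOn (fun k => f k + -(M * ‖k - z‖ ^ 2)) K :=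
      hf.add (hc.upperSemicontinuous.upperSemicontinuousOn K)
    obtain ⟨k, hk, hm⟩ := hu.exists_isMaxOn hne hK
    exact ⟨k, hk, fun k' hk' => by simpa [sub_eq_add_neg] using hm hk'⟩
  choose h hK' hmax using hex
  set F : E → ℝ := fun z => f (h z) - M * ‖h z - z‖ ^ 2 with hF
  have hsc : ∀ z k, F z + ⟪(2 * M) • (h z - z), k⟫ - M * ‖k‖ ^ 2 ≤ F (z + k) := by
    intro z k
    have h1 := hmax (z + k) (h z) (hK' z)
    have h2 : ‖h z - (z + k)‖ ^ 2 = ‖h z - z‖ ^ 2 - 2 * ⟪h z - z, k⟫ + ‖k‖ ^ 2 := by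
      rw [← sub_sub, norm_sub_sq_real]
    rw [h2] at h1
    rw [real_inner_smul_left]
    simp only [hF]
    linarith
  refine ⟨F, h, hK', fun z => rfl, fun z k hk => hmax z k hk, ?_, hsc⟩
  obtain ⟨C, hC⟩ := hK.isBounded.exists_norm_le
  have hbd : ∀ z k, |F (z + k) - F z| ≤ 2 * M * (C + ‖z‖ + ‖k‖) * ‖k‖ + M * ‖k‖ ^ 2 := by
    intro z k
    have h1 := hsc z k
    have h2 := hsc (z + k) (-k)
    rw [add_neg_cancel_right, norm_neg, inner_neg_right] at h2
    have hn : ∀ y, |⟪(2 * M) • (h y - y), k⟫| ≤ 2 * M * (C + ‖y‖) * ‖k‖ := by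
      intro y
      refine (abs_real_inner_le_norm _ _).trans ?_
      rw [norm_smul, Real.norm_of_nonneg (by positivity)]
      gcongr
      exact (norm_sub_le _ _).trans (by gcongr; exact hC _ (hK' y))
    have a1 := abs_le.1 (hn z)
    have a2 := abs_le.1 (hn (z + k))
    have a3 : 2 * M * (C + ‖z + k‖) * ‖k‖ ≤ 2 * M * (C + ‖z‖ + ‖k‖) * ‖k‖ := by
      have : C + ‖z + k‖ ≤ C + ‖z‖ + ‖k‖ := by linarith [norm_add_le z k]
      exact mul_le_mul_of_nonneg_right (mul_le_mul_of_nonneg_left this (by positivity))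
        (norm_nonneg k)
    have a4 : 2 * M * (C + ‖z‖) * ‖k‖ ≤ 2 * M * (C + ‖z‖ + ‖k‖) * ‖k‖ := by
      have : C + ‖z‖ ≤ C + ‖z‖ + ‖k‖ := by linarith [norm_nonneg k]
      exact mul_le_mul_of_nonneg_right (mul_le_mul_of_nonneg_left this (by positivity))
        (norm_nonneg k)
    rw [abs_le]; constructor <;> linarith
  rw [continuous_iff_continuousAt]
  intro z
  rw [ContinuousAt, tendsto_iff_dist_tendsto_zero]
  have hlim : Tendsto (fun y => 2 * M * (C + ‖z‖ + ‖y - z‖) * ‖y - z‖ + M * ‖y - z‖ ^ 2) (𝓝 z)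
      (𝓝 0) := by
    have : Continuous (fun y => 2 * M * (C + ‖z‖ + ‖y - z‖) * ‖y - z‖ + M * ‖y - z‖ ^ 2) := by
      fun_prop
    have := this.tendsto z
    simpa using this
  refine squeeze_zero (fun _ => dist_nonneg) (fun y => ?_) hlim
  have := hbd z (y - z)
  rwa [add_sub_cancel] at this

/-- The pair `(a, b)` in the `ℓ²` product. -/
abbrev pr {E : Type*} (a b : E) : WithLp 2 (E × E) := WithLp.toLp 2 (a, b)

lemma pr_norm_sq {E : Type*} [NormedAddCommGroup E] (a b : E) :
    ‖pr a b‖ ^ 2 = ‖a‖ ^ 2 + ‖b‖ ^ 2 := WithLp.prod_norm_sq_eq_of_L2 _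

lemma pr_inner {E : Type*} [NormedAddCommGroup E] [InnerProductSpace ℝ E] (a b c d : E) :
    ⟪pr a b, pr c d⟫ = ⟪a, c⟫ + ⟪b, d⟫ := by simp

lemma norm_fst_le_pr {E : Type*} [NormedAddCommGroup E] (v : WithLp 2 (E × E)) :
    ‖v.fst‖ ≤ ‖v‖ := by
  have := WithLp.prod_norm_sq_eq_of_L2 v
  apply (sq_le_sq₀ (norm_nonneg _) (norm_nonneg v)).1
  nlinarith [sq_nonneg ‖v.snd‖]

lemma norm_snd_le_pr {E : Type*} [NormedAddCommGroup E] (v : WithLp 2 (E × E)) :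
    ‖v.snd‖ ≤ ‖v‖ := by
  have := WithLp.prod_norm_sq_eq_of_L2 v
  apply (sq_le_sq₀ (norm_nonneg _) (norm_nonneg v)).1
  nlinarith [sq_nonneg ‖v.fst‖]

lemma pr_norm_le {E : Type*} [NormedAddCommGroup E] (a b : E) :
    ‖pr a b‖ ≤ ‖a‖ + ‖b‖ := by
  apply (sq_le_sq₀ (norm_nonneg _) (by positivity)).1
  rw [pr_norm_sq]
  nlinarith [norm_nonneg a, norm_nonneg b]

/-- Second order superjet, with an arbitrary (not necessarily symmetric) operator `B`. -/
def UJet {E : Type*} [NormedAddCommGroup E] [InnerProductSpace ℝ E] (K : Set E) (f : E → ℝ)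
    (x p : E) (B : E →L[ℝ] E) : Prop :=
  ∀ᶠ x' in 𝓝[K] x, f x' ≤ f x + ⟪p, x' - x⟫ + 1 / 2 * ⟪B (x' - x), x' - x⟫

section
variable {E : Type*} [NormedAddCommGroup E] [InnerProductSpace ℝ E] [FiniteDimensional ℝ E]

set_option maxHeartbeats 2000000 in
/-- An approximate theorem on sums: near a point where `f₁ + f₂` is touched from above by a
quadratic polynomial there are points, with nearby values, superjets of `f₁` and `f₂` whose sum is
almost below the Hessian of that polynomial. -/
lemma wst {K : Set E} (hK : IsCompact K) {f₁ f₂ : E → ℝ}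
    (hf₁ : UpperSemicontinuousOn f₁ K) (hf₂ : UpperSemicontinuousOn f₂ K) {xh yh : E}
    (hx : xh ∈ K) (hy : yh ∈ K) (P₁ P₂ : E) (B : WithLp 2 (E × E) →L[ℝ] WithLp 2 (E × E))
    {r₀ : ℝ} (hr₀ : 0 < r₀)
    (hmax : ∀ k₁ k₂ : E, ‖k₁‖ ≤ r₀ → ‖k₂‖ ≤ r₀ → xh + k₁ ∈ K → yh + k₂ ∈ K →
      f₁ (xh + k₁) + f₂ (yh + k₂) ≤ f₁ xh + f₂ yh + ⟪P₁, k₁⟫ + ⟪P₂, k₂⟫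
        + 1 / 2 * ⟪B (pr k₁ k₂), pr k₁ k₂⟫) {ε : ℝ} (hε : 0 < ε) :
    ∃ (x y p₁ p₂ : E) (B₁ B₂ : E →L[ℝ] E), x ∈ K ∧ y ∈ K ∧ ‖x - xh‖ ≤ ε ∧ ‖y - yh‖ ≤ ε ∧
      ‖p₁ - P₁‖ ≤ ε ∧ ‖p₂ - P₂‖ ≤ ε ∧ |f₁ x - f₁ xh| ≤ ε ∧ |f₂ y - f₂ yh| ≤ ε ∧
      UJet K f₁ x p₁ B₁ ∧ UJet K f₂ y p₂ B₂ ∧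
      ∀ k₁ k₂ : E, ⟪B₁ k₁, k₁⟫ + ⟪B₂ k₂, k₂⟫ ≤ ⟪B (pr k₁ k₂), pr k₁ k₂⟫
        + ε * (‖k₁‖ ^ 2 + ‖k₂‖ ^ 2) := by
  set P : WithLp 2 (E × E) := pr P₁ P₂ with hP
  -- the touching polynomial, made strict
  set e : ℝ := ε / 8 with he
  have he0 : 0 < e := by positivity
  set B₀ : WithLp 2 (E × E) →L[ℝ] WithLp 2 (E × E) := B + (4 * e) • ContinuousLinearMap.id ℝ _
    with hB₀
  set Φ : WithLp 2 (E × E) → ℝ := fun v => ⟪P, v⟫ + 1 / 2 * ⟪B₀ v, v⟫ with hΦ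
  set Gr : WithLp 2 (E × E) → WithLp 2 (E × E) := fun v =>
    P + (1 / 2 : ℝ) • (B₀ v + ContinuousLinearMap.adjoint B₀ v) with hGr
  have hB₀q : ∀ v, ⟪B₀ v, v⟫ = ⟪B v, v⟫ + 4 * e * ‖v‖ ^ 2 := by
    intro v
    simp only [hB₀, add_apply, smul_apply,
      ContinuousLinearMap.id_apply, inner_add_left, real_inner_smul_left,
      real_inner_self_eq_norm_sq]
  have hΦadd : ∀ z k, Φ (z + k) = Φ z + ⟪Gr z, k⟫ + 1 / 2 * ⟪B₀ k, k⟫ := by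
    intro z k
    simp only [hΦ, hGr, map_add, inner_add_left, inner_add_right, real_inner_smul_left,
      ContinuousLinearMap.adjoint_inner_left]
    rw [real_inner_comm (B₀ k) z]
    ring
  have hΦ0 : Φ 0 = 0 := by simp [hΦ]
  have hΦc : Continuous Φ := by
    have := B₀.continuous
    simp only [hΦ]; fun_prop
  have hGrc : Continuous Gr := by
    have := B₀.continuous
    have := (ContinuousLinearMap.adjoint B₀).continuous
    simp only [hGr]; fun_prop
  have hGr0 : Gr 0 = P := by simp [hGr]
  have hη : ∃ η : ℝ, 0 < η ∧ η ≤ r₀ / 8 ∧ η ≤ ε ∧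
      (∀ k, ‖k‖ ≤ η → xh + k ∈ K → f₁ (xh + k) ≤ f₁ xh + ε / 3) ∧
      (∀ k, ‖k‖ ≤ η → yh + k ∈ K → f₂ (yh + k) ≤ f₂ yh + ε / 3) ∧
      (∀ v, ‖v‖ ≤ 2 * η → |Φ v| ≤ ε / 6) ∧ (∀ v, ‖v‖ ≤ 2 * η → ‖Gr v - P‖ ≤ ε / 2) := by
    have u1 : ∀ᶠ z in 𝓝[K] xh, f₁ z < f₁ xh + ε / 3 := hf₁ xh hx _ (by linarith)
    have u2 : ∀ᶠ z in 𝓝[K] yh, f₂ z < f₂ yh + ε / 3 := hf₂ yh hy _ (by linarith)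
    have u3 : ∀ᶠ v in 𝓝 (0 : WithLp 2 (E × E)), |Φ v| < ε / 6 := by
      have : Tendsto (fun v => |Φ v|) (𝓝 0) (𝓝 |Φ 0|) := (hΦc.abs).tendsto 0
      rw [hΦ0, abs_zero] at this
      exact this.eventually (gt_mem_nhds (by positivity))
    have u4 : ∀ᶠ v in 𝓝 (0 : WithLp 2 (E × E)), ‖Gr v - P‖ < ε / 2 := by
      have : Tendsto (fun v => ‖Gr v - P‖) (𝓝 0) (𝓝 ‖Gr 0 - P‖) :=
        ((hGrc.sub continuous_const).norm).tendsto 0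
      rw [hGr0, sub_self, norm_zero] at this
      exact this.eventually (gt_mem_nhds (by positivity))
    obtain ⟨r1, h1, u1⟩ := Metric.mem_nhdsWithin_iff.1 u1
    obtain ⟨r2, h2, u2⟩ := Metric.mem_nhdsWithin_iff.1 u2
    obtain ⟨r3, h3, u3⟩ := Metric.mem_nhds_iff.1 u3
    obtain ⟨r4, h4, u4⟩ := Metric.mem_nhds_iff.1 u4
    set m := min (min (min r1 r2) (min r3 r4)) (min r₀ ε) with hm
    have hm0 : 0 < m := by positivity
    have m1 : m ≤ r1 := (min_le_left _ _).trans ((min_le_left _ _).trans (min_le_left _ _))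
    have m2 : m ≤ r2 := (min_le_left _ _).trans ((min_le_left _ _).trans (min_le_right _ _))
    have m3 : m ≤ r3 := (min_le_left _ _).trans ((min_le_right _ _).trans (min_le_left _ _))
    have m4 : m ≤ r4 := (min_le_left _ _).trans ((min_le_right _ _).trans (min_le_right _ _))
    have m5 : m ≤ r₀ := (min_le_right _ _).trans (min_le_left _ _)
    have m6 : m ≤ ε := (min_le_right _ _).trans (min_le_right _ _)
    refine ⟨m / 8, by positivity, by linarith, by linarith, ?_, ?_, ?_, ?_⟩
    · intro k hk hkK
      exact (u1 ⟨by simp [dist_eq_norm]; linarith, hkK⟩ : _ < _).le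
    · intro k hk hkK
      exact (u2 ⟨by simp [dist_eq_norm]; linarith, hkK⟩ : _ < _).le
    · intro v hv
      exact (u3 (by simp; linarith) : _ < _).le
    · intro v hv
      exact (u4 (by simp; linarith) : _ < _).le
  obtain ⟨η, hη0, hηr, hηε, hη1, hη2, hη3, hη4⟩ := hη
  set L : ℝ := ‖P‖ + 2 * r₀ * ‖B₀‖ with hL
  have hL0 : 0 ≤ L := by positivity
  have hΦL : ∀ k κ, ‖k‖ ≤ 2 * r₀ → ‖κ‖ ≤ 2 * r₀ → Φ k - Φ κ ≤ L * ‖k - κ‖ := by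
    intro k κ hk hκ
    have e1 : Φ k - Φ κ = ⟪P, k - κ⟫ + 1 / 2 * (⟪B₀ (k - κ), k⟫ + ⟪B₀ κ, k - κ⟫) := by
      simp only [hΦ, map_sub, inner_sub_left, inner_sub_right]; ring
    have e2 : ⟪P, k - κ⟫ ≤ ‖P‖ * ‖k - κ‖ := real_inner_le_norm _ _
    have e3 : ⟪B₀ (k - κ), k⟫ ≤ (‖B₀‖ * ‖k - κ‖) * (2 * r₀) := by
      refine (real_inner_le_norm _ _).trans ?_
      gcongr; exact B₀.le_opNorm _
    have e4 : ⟪B₀ κ, k - κ⟫ ≤ (‖B₀‖ * (2 * r₀)) * ‖k - κ‖ := by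
      refine (real_inner_le_norm _ _).trans ?_
      gcongr
      exact (B₀.le_opNorm _).trans (by gcongr)
    rw [e1, hL]; linarith
  set δ : ℝ := min (e * η ^ 2 / r₀) (min (ε / 2) (ε / 6 / r₀)) with hδ
  have hδ0 : 0 < δ := by positivity
  have hδ1 : δ * r₀ ≤ e * η ^ 2 := by
    rw [← le_div_iff₀ hr₀]; exact min_le_left _ _
  have hδ2 : δ ≤ ε / 2 := (min_le_right _ _).trans (min_le_left _ _)
  have hδ3 : δ * r₀ ≤ ε / 6 := by
    rw [← le_div_iff₀ hr₀]; exact (min_le_right _ _).trans (min_le_right _ _)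
  set M : ℝ := 4 * e + L ^ 2 / (2 * (e * η ^ 2)) with hM
  have hM0 : 0 < M := by positivity
  have hM1 : 4 * e ≤ M := by
    have : 0 ≤ L ^ 2 / (2 * (e * η ^ 2)) := by positivity
    linarith
  have hM2 : L ^ 2 ≤ 2 * M * (e * η ^ 2) := by
    have : L ^ 2 / (2 * (e * η ^ 2)) ≤ M := by rw [hM]; linarith
    rw [div_le_iff₀ (by positivity)] at this
    linarith
  set K₁ : Set E := {k | xh + k ∈ K ∧ ‖k‖ ≤ r₀} with hK₁
  set K₂ : Set E := {k | yh + k ∈ K ∧ ‖k‖ ≤ r₀} with hK₂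
  have hcpt : ∀ z : E, IsCompact {k : E | z + k ∈ K ∧ ‖k‖ ≤ r₀} := by
    intro z
    have h1 : IsClosed {k : E | z + k ∈ K} := hK.isClosed.preimage (by fun_prop)
    have h2 := (isCompact_closedBall (0 : E) r₀).inter_left h1
    convert h2 using 1
    ext k; simp
  have husc : ∀ (f : E → ℝ) (z : E), UpperSemicontinuousOn f K →
      UpperSemicontinuousOn (fun k => f (z + k)) {k : E | z + k ∈ K ∧ ‖k‖ ≤ r₀} := by
    intro f z hf k hk t ht
    have h1 := hf (z + k) hk.1 t ht
    have h2 : Tendsto (fun k : E => z + k) (𝓝[{k : E | z + k ∈ K ∧ ‖k‖ ≤ r₀}] k) (𝓝[K] (z + k)) := by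
      refine tendsto_nhdsWithin_iff.2 ⟨?_, ?_⟩
      · exact ((continuous_const.add continuous_id).tendsto k).mono_left nhdsWithin_le_nhds
      · filter_upwards [self_mem_nhdsWithin] with k' hk'
        exact hk'.1
    exact h2.eventually h1
  have h01 : (0 : E) ∈ K₁ := ⟨by simpa using hx, by simp [hr₀.le]⟩
  have h02 : (0 : E) ∈ K₂ := ⟨by simpa using hy, by simp [hr₀.le]⟩
  obtain ⟨F₁, h₁, hhK₁, hF₁, hle₁, hcF₁, hsc₁⟩ := supconv (hcpt xh) ⟨0, h01⟩ (husc f₁ xh hf₁) hM0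
  obtain ⟨F₂, h₂, hhK₂, hF₂, hle₂, hcF₂, hsc₂⟩ := supconv (hcpt yh) ⟨0, h02⟩ (husc f₂ yh hf₂) hM0
  set w : WithLp 2 (E × E) → ℝ := fun v => F₁ v.fst + F₂ v.snd - Φ v with hw
  have hwc : Continuous w := by
    simp only [hw]; fun_prop
  have hest : ∀ p : WithLp 2 (E × E), ‖p‖ ≤ δ → ∀ κ ∈ closedBall (0 : WithLp 2 (E × E)) r₀,
      (∀ z ∈ closedBall (0 : WithLp 2 (E × E)) r₀, w z - ⟪p, z⟫ ≤ w κ - ⟪p, κ⟫) →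
      ‖pr (h₁ κ.fst) (h₂ κ.snd)‖ ≤ η ∧ ‖κ‖ ≤ 2 * η ∧
        f₁ xh + f₂ yh ≤ f₁ (xh + h₁ κ.fst) + f₂ (yh + h₂ κ.snd) + |Φ κ| + δ * r₀ := by
    intro p hp κ hκ hm
    rw [mem_closedBall_zero_iff] at hκ
    have m0 := hm 0 (by simp [hr₀.le])
    have c1 := hle₁ 0 0 h01
    have c2 := hle₂ 0 0 h02
    simp only [add_zero, sub_zero, norm_zero] at c1 c2
    have hp' : -⟪p, κ⟫ ≤ δ * r₀ := by
      have := abs_le.1 (abs_real_inner_le_norm p κ)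
      have h3 : ‖p‖ * ‖κ‖ ≤ δ * r₀ := by gcongr
      linarith [this.1]
    set k := pr (h₁ κ.fst) (h₂ κ.snd) with hk
    have d1 := hF₁ κ.fst
    have d2 := hF₂ κ.snd
    have hks : ‖k - κ‖ ^ 2 = ‖h₁ κ.fst - κ.fst‖ ^ 2 + ‖h₂ κ.snd - κ.snd‖ ^ 2 :=
      pr_norm_sq (h₁ κ.fst - κ.fst) (h₂ κ.snd - κ.snd)
    have m1 := hmax _ _ (hhK₁ κ.fst).2 (hhK₂ κ.snd).2 (hhK₁ κ.fst).1 (hhK₂ κ.snd).1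
    have hΦk : Φ k = ⟪P₁, h₁ κ.fst⟫ + ⟪P₂, h₂ κ.snd⟫ + 1 / 2 * ⟪B k, k⟫ + 2 * e * ‖k‖ ^ 2 := by
      simp only [hΦ]
      rw [hB₀q, hP, hk, pr_inner]; ring
    simp only [hw, hΦ0, inner_zero_right] at m0
    have hz1 : (0 : WithLp 2 (E × E)).fst = (0 : E) := rfl
    have hz2 : (0 : WithLp 2 (E × E)).snd = (0 : E) := rfl
    rw [hz1, hz2] at m0
    rw [← hk] at m1
    have hk2 : ‖k‖ ≤ 2 * r₀ := by
      refine (pr_norm_le _ _).trans ?_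
      linarith [(hhK₁ κ.fst).2, (hhK₂ κ.snd).2]
    have hLk := hΦL k κ hk2 (by linarith)
    -- `M t² + 2 e ‖k‖² ≤ L t + δ r₀` with `t = ‖k - κ‖`
    set t := ‖k - κ‖ with ht
    have ht0 : 0 ≤ t := norm_nonneg _
    have hmain : M * t ^ 2 + 2 * e * ‖k‖ ^ 2 ≤ L * t + δ * r₀ := by
      rw [hks]; linarith
    have hLt : L * t ≤ M / 2 * t ^ 2 + e * η ^ 2 := by
      have h1 : 0 ≤ (M * t - L) ^ 2 := sq_nonneg _
      have h2 : 2 * M * (L * t) ≤ 2 * M * (M / 2 * t ^ 2 + e * η ^ 2) := by linarith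
      exact le_of_mul_le_mul_left h2 (by positivity)
    have hfin : M / 2 * t ^ 2 + 2 * e * ‖k‖ ^ 2 ≤ 2 * e * η ^ 2 := by linarith
    have hkη : ‖k‖ ≤ η := by
      apply (sq_le_sq₀ (norm_nonneg _) hη0.le).1
      have : 2 * e * ‖k‖ ^ 2 ≤ 2 * e * η ^ 2 := by
        have : 0 ≤ M / 2 * t ^ 2 := by positivity
        linarith
      exact le_of_mul_le_mul_left this (by positivity)
    have htη : t ≤ η := by
      apply (sq_le_sq₀ ht0 hη0.le).1
      have h1 : 0 ≤ 2 * e * ‖k‖ ^ 2 := by positivity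
      have h2 : 2 * e * t ^ 2 ≤ M / 2 * t ^ 2 := by gcongr; linarith
      have h3 : 2 * e * t ^ 2 ≤ 2 * e * η ^ 2 := by linarith
      exact le_of_mul_le_mul_left h3 (by positivity)
    refine ⟨hkη, ?_, ?_⟩
    · have : ‖κ‖ ≤ ‖k‖ + ‖k - κ‖ := by
        have := norm_sub_le k (k - κ)
        rwa [sub_sub_cancel] at this
      linarith
    · have h1 : 0 ≤ M * ‖h₁ κ.fst - κ.fst‖ ^ 2 := by positivity
      have h2 : 0 ≤ M * ‖h₂ κ.snd - κ.snd‖ ^ 2 := by positivity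
      have h3 := neg_abs_le (Φ κ)
      linarith
  obtain ⟨κ, p, Bw, hκ, hp, hκm, hexp⟩ := contact_lemma (w := w) (C := M + ‖B₀‖) (R := r₀)
    (δ := δ) (by positivity) hr₀ hδ0 hwc
    (by
      intro z
      refine ⟨pr ((2 * M) • (h₁ z.fst - z.fst)) ((2 * M) • (h₂ z.snd - z.snd)) - Gr z, ?_⟩
      intro k
      have a1 := hsc₁ z.fst k.fst
      have a2 := hsc₂ z.snd k.snd
      have a3 := hΦadd z k
      have a4 : ⟪B₀ k, k⟫ ≤ ‖B₀‖ * ‖k‖ ^ 2 := by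
        refine (real_inner_le_norm _ _).trans ?_
        exact (mul_le_mul_of_nonneg_right (B₀.le_opNorm k) (norm_nonneg k)).trans_eq (by ring)
      have a5 := WithLp.prod_norm_sq_eq_of_L2 k
      have a6 : ⟪pr ((2 * M) • (h₁ z.fst - z.fst)) ((2 * M) • (h₂ z.snd - z.snd)) - Gr z, k⟫
          = ⟪(2 * M) • (h₁ z.fst - z.fst), k.fst⟫ + ⟪(2 * M) • (h₂ z.snd - z.snd), k.snd⟫
            - ⟪Gr z, k⟫ := by
        rw [inner_sub_left]
        congr 1
      have a7 : 0 ≤ ‖B₀‖ * ‖k‖ ^ 2 := by positivity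
      have a8 : M * ‖k‖ ^ 2 = M * ‖k.fst‖ ^ 2 + M * ‖k.snd‖ ^ 2 := by rw [a5]; ring
      rw [a6]
      simp only [hw]
      rw [a3]
      have b1 : (z + k).fst = z.fst + k.fst := rfl
      have b2 : (z + k).snd = z.snd + k.snd := rfl
      rw [b1, b2, add_mul]
      linarith)
    (by
      intro p hp κ hκ hm
      have := (hest p hp κ hκ hm).2.1
      linarith)
  obtain ⟨hkη, hκη, hval⟩ := hest p hp κ (by rw [mem_closedBall_zero_iff]; linarith) hκm
  have n1 : ‖h₁ κ.fst‖ ≤ η := (norm_fst_le_pr (pr (h₁ κ.fst) (h₂ κ.snd))).trans hkη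
  have n2 : ‖h₂ κ.snd‖ ≤ η := (norm_snd_le_pr (pr (h₁ κ.fst) (h₂ κ.snd))).trans hkη
  have v1 := hη1 _ n1 (hhK₁ κ.fst).1
  have v2 := hη2 _ n2 (hhK₂ κ.snd).1
  have v3 := hη3 _ hκη
  set Bh : WithLp 2 (E × E) →L[ℝ] WithLp 2 (E × E) := Bw + B₀ with hBh
  set pt := p + Gr κ with hpt
  have hexp' : ∀ ε' : ℝ, 0 < ε' → ∀ᶠ k in 𝓝 (0 : WithLp 2 (E × E)),
      |F₁ (κ.fst + k.fst) + F₂ (κ.snd + k.snd) - (F₁ κ.fst + F₂ κ.snd) - ⟪pt, k⟫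
        - 1 / 2 * ⟪Bh k, k⟫| ≤ ε' * ‖k‖ ^ 2 := by
    intro ε' hε'
    filter_upwards [hexp ε' hε'] with k hk
    have : F₁ (κ.fst + k.fst) + F₂ (κ.snd + k.snd) - (F₁ κ.fst + F₂ κ.snd) - ⟪pt, k⟫
        - 1 / 2 * ⟪Bh k, k⟫ = w (κ + k) - w κ - ⟪p, k⟫ - 1 / 2 * ⟪Bw k, k⟫ := by
      simp only [hw]
      rw [hΦadd]
      have b1 : (κ + k).fst = κ.fst + k.fst := rfl
      have b2 : (κ + k).snd = κ.snd + k.snd := rfl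
      have b3 : ⟪Bh k, k⟫ = ⟪Bw k, k⟫ + ⟪B₀ k, k⟫ := by
        rw [hBh, add_apply, inner_add_left]
      have b4 : ⟪pt, k⟫ = ⟪p, k⟫ + ⟪Gr κ, k⟫ := by rw [hpt, inner_add_left]
      rw [b1, b2, b3, b4]
      ring
    rw [this]; exact hk
  have hBwneg : ∀ k, ⟪Bw k, k⟫ ≤ 0 := by
    intro k
    refine le_of_forall_pos_le_add fun τ hτ => ?_
    have hnear : ∀ᶠ k in 𝓝 (0 : WithLp 2 (E × E)), ‖k‖ < r₀ / 2 := by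
      filter_upwards [ball_mem_nhds (0 : WithLp 2 (E × E)) (half_pos hr₀)] with k hk
      simpa using hk
    have := hom_le (q := fun k => ⟪Bw k, k⟫) (ε := 2 * (τ / (2 * (‖k‖ ^ 2 + 1)))) (by
      intro t k
      simp only [map_smul, real_inner_smul_left, real_inner_smul_right]; ring) (by
      filter_upwards [hexp (τ / (2 * (‖k‖ ^ 2 + 1))) (by positivity), hnear] with k' hk' hk''
      have h1 := hκm (κ + k') (by
        rw [mem_closedBall_zero_iff]; linarith [norm_add_le κ k'])
      rw [inner_add_right] at h1
      have h2 := (abs_le.1 hk').1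
      linarith) k
    have h3 : 2 * (τ / (2 * (‖k‖ ^ 2 + 1))) * ‖k‖ ^ 2 ≤ τ := by
      have : 2 * (τ / (2 * (‖k‖ ^ 2 + 1))) * ‖k‖ ^ 2 = τ * (‖k‖ ^ 2 / (‖k‖ ^ 2 + 1)) := by
        field_simp
      rw [this]
      have : ‖k‖ ^ 2 / (‖k‖ ^ 2 + 1) ≤ 1 := by rw [div_le_one (by positivity)]; linarith
      exact mul_le_of_le_one_right hτ.le this
    linarith
  let i₁ : E →L[ℝ] WithLp 2 (E × E) :=
    (WithLp.prodContinuousLinearEquiv 2 ℝ E E).symm.toContinuousLinearMap.comp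
      (ContinuousLinearMap.inl ℝ E E)
  let i₂ : E →L[ℝ] WithLp 2 (E × E) :=
    (WithLp.prodContinuousLinearEquiv 2 ℝ E E).symm.toContinuousLinearMap.comp
      (ContinuousLinearMap.inr ℝ E E)
  have hi₁ : ∀ k, i₁ k = pr k 0 := fun k => rfl
  have hi₂ : ∀ k, i₂ k = pr 0 k := fun k => rfl
  let j₁ : WithLp 2 (E × E) →L[ℝ] E := WithLp.fstL 2 ℝ E E
  let j₂ : WithLp 2 (E × E) →L[ℝ] E := WithLp.sndL 2 ℝ E E
  have hj₁ : ∀ (v : WithLp 2 (E × E)) k, ⟪j₁ v, k⟫ = ⟪v, pr k 0⟫ := by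
    intro v k
    have : ⟪v, pr k 0⟫ = ⟪v.fst, k⟫ + ⟪v.snd, (0 : E)⟫ := rfl
    rw [this, inner_zero_right, add_zero]; rfl
  have hj₂ : ∀ (v : WithLp 2 (E × E)) k, ⟪j₂ v, k⟫ = ⟪v, pr 0 k⟫ := by
    intro v k
    have : ⟪v, pr 0 k⟫ = ⟪v.fst, (0 : E)⟫ + ⟪v.snd, k⟫ := rfl
    rw [this, inner_zero_right, zero_add]; rfl
  have hsep : ∀ k₁ k₂ : E, ⟪Bh (pr k₁ 0), pr k₁ 0⟫ + ⟪Bh (pr 0 k₂), pr 0 k₂⟫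
      ≤ ⟪Bh (pr k₁ k₂), pr k₁ k₂⟫ := by
    intro k₁ k₂
    refine le_of_forall_pos_le_add fun τ hτ => ?_
    set k : WithLp 2 (E × E) := pr k₁ k₂ with hk
    set ε' : ℝ := τ / (6 * (‖k‖ ^ 2 + 1)) with hε'
    have hε'0 : 0 < ε' := by positivity
    let π₁ := i₁.comp j₁
    let π₂ := i₂.comp j₂
    have hπ₁ : ∀ v, π₁ v = pr v.fst 0 := fun v => rfl
    have hπ₂ : ∀ v, π₂ v = pr 0 v.snd := fun v => rfl
    have t1 : Tendsto π₁ (𝓝 0) (𝓝 0) := by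
      have := π₁.continuous.tendsto 0; rwa [map_zero] at this
    have t2 : Tendsto π₂ (𝓝 0) (𝓝 0) := by
      have := π₂.continuous.tendsto 0; rwa [map_zero] at this
    have := hom_le (q := fun k => ⟪Bh (π₁ k), π₁ k⟫ + ⟪Bh (π₂ k), π₂ k⟫ - ⟪Bh k, k⟫)
      (ε := 6 * ε') (by
      intro t k
      simp only [map_smul, real_inner_smul_left, real_inner_smul_right]; ring) (by
      filter_upwards [hexp' ε' hε'0, t1.eventually (hexp' ε' hε'0), t2.eventually (hexp' ε' hε'0)]
        with v e0 e1 e2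
      have q1 : (π₁ v).fst = v.fst := rfl
      have q2 : (π₁ v).snd = 0 := rfl
      have q3 : (π₂ v).fst = 0 := rfl
      have q4 : (π₂ v).snd = v.snd := rfl
      have q5 : ‖π₁ v‖ ^ 2 ≤ ‖v‖ ^ 2 := by
        rw [WithLp.prod_norm_sq_eq_of_L2 (π₁ v), WithLp.prod_norm_sq_eq_of_L2 v, q1, q2, norm_zero]
        linarith [sq_nonneg ‖v.snd‖]
      have q6 : ‖π₂ v‖ ^ 2 ≤ ‖v‖ ^ 2 := by
        rw [WithLp.prod_norm_sq_eq_of_L2 (π₂ v), WithLp.prod_norm_sq_eq_of_L2 v, q3, q4, norm_zero]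
        linarith [sq_nonneg ‖v.fst‖]
      have q7 : ⟪pt, v⟫ = ⟪pt, π₁ v⟫ + ⟪pt, π₂ v⟫ := by
        rw [← inner_add_right]; congr 1
        have : π₁ v + π₂ v = pr (v.fst + 0) (0 + v.snd) := rfl
        rw [this, add_zero, zero_add]
        rfl
      rw [q1, q2, add_zero] at e1
      rw [q3, q4, add_zero] at e2
      have g1 : ε' * ‖π₁ v‖ ^ 2 ≤ ε' * ‖v‖ ^ 2 := by gcongr
      have g2 : ε' * ‖π₂ v‖ ^ 2 ≤ ε' * ‖v‖ ^ 2 := by gcongr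
      have f0 := abs_le.1 e0
      have f1 := abs_le.1 e1
      have f2 := abs_le.1 e2
      linarith [f0.1, f0.2, f1.1, f1.2, f2.1, f2.2]) k
    simp only [hπ₁, hπ₂] at this
    have h3 : 6 * ε' * ‖k‖ ^ 2 ≤ τ := by
      have : 6 * ε' * ‖k‖ ^ 2 = τ * (‖k‖ ^ 2 / (‖k‖ ^ 2 + 1)) := by
        rw [hε']; field_simp
      rw [this]
      have : ‖k‖ ^ 2 / (‖k‖ ^ 2 + 1) ≤ 1 := by rw [div_le_one (by positivity)]; linarith
      exact mul_le_of_le_one_right hτ.le this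
    have r1 : k.fst = k₁ := rfl
    have r2 : k.snd = k₂ := rfl
    rw [r1, r2] at this
    linarith
  have hB₁ : ∀ k, ⟪(j₁.comp (Bh.comp i₁) + (2 * e) • ContinuousLinearMap.id ℝ E) k, k⟫
      = ⟪Bh (pr k 0), pr k 0⟫ + 2 * e * ‖k‖ ^ 2 := by
    intro k
    rw [add_apply, inner_add_left, smul_apply,
      real_inner_smul_left, ContinuousLinearMap.id_apply, real_inner_self_eq_norm_sq]
    congr 1
    exact hj₁ _ _
  have hB₂ : ∀ k, ⟪(j₂.comp (Bh.comp i₂) + (2 * e) • ContinuousLinearMap.id ℝ E) k, k⟫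
      = ⟪Bh (pr 0 k), pr 0 k⟫ + 2 * e * ‖k‖ ^ 2 := by
    intro k
    rw [add_apply, inner_add_left, smul_apply,
      real_inner_smul_left, ContinuousLinearMap.id_apply, real_inner_self_eq_norm_sq]
    congr 1
    exact hj₂ _ _
  have hptP : ‖pt - P‖ ≤ ε := by
    have : pt - P = p + (Gr κ - P) := by rw [hpt]; abel
    rw [this]
    linarith [norm_add_le p (Gr κ - P), hη4 κ hκη]
  refine ⟨xh + h₁ κ.fst, yh + h₂ κ.snd, j₁ pt, j₂ pt,
    j₁.comp (Bh.comp i₁) + (2 * e) • ContinuousLinearMap.id ℝ E,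
    j₂.comp (Bh.comp i₂) + (2 * e) • ContinuousLinearMap.id ℝ E,
    (hhK₁ κ.fst).1, (hhK₂ κ.snd).1, ?_, ?_, ?_, ?_, ?_, ?_, ?_, ?_, ?_⟩
  · rw [add_sub_cancel_left]; linarith
  · rw [add_sub_cancel_left]; linarith
  · exact (norm_fst_le_pr (pt - P)).trans hptP
  · exact (norm_snd_le_pr (pt - P)).trans hptP
  · rw [abs_le]; constructor <;> linarith
  · rw [abs_le]; constructor <;> linarith
  · -- the superjet of the sup-convolution is one of `f₁` at the point realizing it
    have t0 : Tendsto (fun x' => x' - (xh + h₁ κ.fst)) (𝓝[K] (xh + h₁ κ.fst)) (𝓝 (0 : E)) := by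
      have : Continuous (fun x' => x' - (xh + h₁ κ.fst)) := by fun_prop
      have := this.tendsto (xh + h₁ κ.fst)
      rw [sub_self] at this
      exact this.mono_left nhdsWithin_le_nhds
    have t1 : Tendsto (fun x' => i₁ (x' - (xh + h₁ κ.fst))) (𝓝[K] (xh + h₁ κ.fst)) (𝓝 0) := by
      have := (i₁.continuous.tendsto 0).comp t0
      rwa [map_zero] at this
    filter_upwards [self_mem_nhdsWithin, t1.eventually (hexp' e he0),
      t0.eventually (ball_mem_nhds (0 : E) (half_pos hr₀))] with x' hx'K he1 hnear
    set k := x' - (xh + h₁ κ.fst) with hk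
    have hk' : ‖k‖ < r₀ / 2 := by simpa using hnear
    rw [hi₁] at he1
    have q1 : (pr k (0 : E)).fst = k := rfl
    have q2 : (pr k (0 : E)).snd = 0 := rfl
    rw [q1, q2, add_zero, pr_norm_sq, norm_zero, ← hj₁] at he1
    have c1 := hle₁ (κ.fst + k) (h₁ κ.fst + k) ⟨by
      have : xh + (h₁ κ.fst + k) = x' := by rw [hk]; abel
      rw [this]; exact hx'K, by linarith [norm_add_le (h₁ κ.fst) k]⟩
    have c2 : h₁ κ.fst + k - (κ.fst + k) = h₁ κ.fst - κ.fst := by abel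
    have c3 : xh + (h₁ κ.fst + k) = x' := by rw [hk]; abel
    rw [c2, c3] at c1
    have c4 := hF₁ κ.fst
    rw [hB₁]
    have := (abs_le.1 he1).2
    linarith
  · have t0 : Tendsto (fun x' => x' - (yh + h₂ κ.snd)) (𝓝[K] (yh + h₂ κ.snd)) (𝓝 (0 : E)) := by
      have : Continuous (fun x' => x' - (yh + h₂ κ.snd)) := by fun_prop
      have := this.tendsto (yh + h₂ κ.snd)
      rw [sub_self] at this
      exact this.mono_left nhdsWithin_le_nhds
    have t1 : Tendsto (fun x' => i₂ (x' - (yh + h₂ κ.snd))) (𝓝[K] (yh + h₂ κ.snd)) (𝓝 0) := by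
      have := (i₂.continuous.tendsto 0).comp t0
      rwa [map_zero] at this
    filter_upwards [self_mem_nhdsWithin, t1.eventually (hexp' e he0),
      t0.eventually (ball_mem_nhds (0 : E) (half_pos hr₀))] with x' hx'K he1 hnear
    set k := x' - (yh + h₂ κ.snd) with hk
    have hk' : ‖k‖ < r₀ / 2 := by simpa using hnear
    rw [hi₂] at he1
    have q1 : (pr (0 : E) k).fst = 0 := rfl
    have q2 : (pr (0 : E) k).snd = k := rfl
    rw [q1, q2, add_zero, pr_norm_sq, norm_zero, ← hj₂] at he1
    have c1 := hle₂ (κ.snd + k) (h₂ κ.snd + k) ⟨by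
      have : yh + (h₂ κ.snd + k) = x' := by rw [hk]; abel
      rw [this]; exact hx'K, by linarith [norm_add_le (h₂ κ.snd) k]⟩
    have c2 : h₂ κ.snd + k - (κ.snd + k) = h₂ κ.snd - κ.snd := by abel
    have c3 : yh + (h₂ κ.snd + k) = x' := by rw [hk]; abel
    rw [c2, c3] at c1
    have c4 := hF₂ κ.snd
    rw [hB₂]
    have := (abs_le.1 he1).2
    linarith
  · intro k₁ k₂
    rw [hB₁, hB₂]
    have s1 := hsep k₁ k₂
    have s2 := hBwneg (pr k₁ k₂)
    have s3 := hB₀q (pr k₁ k₂)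
    rw [pr_norm_sq] at s3
    have s4 : ⟪Bh (pr k₁ k₂), pr k₁ k₂⟫ = ⟪Bw (pr k₁ k₂), pr k₁ k₂⟫
        + ⟪B₀ (pr k₁ k₂), pr k₁ k₂⟫ := by
      rw [hBh, add_apply, inner_add_left]
    have s5 : 0 ≤ ε * (‖k₁‖ ^ 2 + ‖k₂‖ ^ 2) := by positivity
    have s6 : e * (‖k₁‖ ^ 2 + ‖k₂‖ ^ 2) = 1 / 8 * (ε * (‖k₁‖ ^ 2 + ‖k₂‖ ^ 2)) := by rw [he]; ring
    linarith
end

/-! ### Quadratic forms of matrices -/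

/-- The quadratic form of a matrix. -/
def qf {N : ℕ} (X : Mat N) (k : EN N) : ℝ := ⟪Matrix.toEuclideanLin X k, k⟫

section
variable {N : ℕ}

lemma qf_add (X Y : Mat N) (k : EN N) : qf (X + Y) k = qf X k + qf Y k := by
  simp [qf, inner_add_left]

lemma qf_sub (X Y : Mat N) (k : EN N) : qf (X - Y) k = qf X k - qf Y k := by
  simp [qf, inner_sub_left]

lemma qf_neg (X : Mat N) (k : EN N) : qf (-X) k = -qf X k := by
  simp [qf]

lemma qf_smul (t : ℝ) (X : Mat N) (k : EN N) : qf (t • X) k = t * qf X k := by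
  simp [qf, real_inner_smul_left]

lemma toEuclideanLin_one' (k : EN N) : Matrix.toEuclideanLin (1 : Mat N) k = k := by
  ext i; simp [Matrix.toLpLin_apply]

lemma qf_one (k : EN N) : qf (1 : Mat N) k = ‖k‖ ^ 2 := by
  rw [qf, toEuclideanLin_one', real_inner_self_eq_norm_sq]

lemma inner_mat (X : Mat N) (k l : EN N) :
    ⟪Matrix.toEuclideanLin X k, l⟫ = l.ofLp ⬝ᵥ (X.mulVec k.ofLp) := by
  simp [Matrix.toLpLin_apply, PiLp.inner_apply, dotProduct]

lemma mat_symm {X : Mat N} (hX : X.IsSymm) (k l : EN N) :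
    ⟪Matrix.toEuclideanLin X k, l⟫ = ⟪Matrix.toEuclideanLin X l, k⟫ := by
  rw [inner_mat, inner_mat, Matrix.dotProduct_mulVec, ← Matrix.mulVec_transpose, hX.eq,
    dotProduct_comm]

lemma qf_smul_arg (X : Mat N) (t : ℝ) (k : EN N) : qf X (t • k) = t ^ 2 * qf X k := by
  simp only [qf, map_smul, real_inner_smul_left, real_inner_smul_right]; ring

lemma qf_add_arg {X : Mat N} (hX : X.IsSymm) (k l : EN N) :
    qf X (k + l) = qf X k + 2 * ⟪Matrix.toEuclideanLin X k, l⟫ + qf X l := by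
  simp only [qf, map_add, inner_add_left, inner_add_right]
  rw [mat_symm hX l k]; ring

lemma qf_sub_arg {X : Mat N} (hX : X.IsSymm) (k l : EN N) :
    qf X (k - l) = qf X k - 2 * ⟪Matrix.toEuclideanLin X k, l⟫ + qf X l := by
  simp only [qf, map_sub, inner_sub_left, inner_sub_right]
  rw [mat_symm hX l k]; ring

lemma posSemidef_of_qf {X : Mat N} (hX : X.IsSymm) (h : ∀ k, 0 ≤ qf X k) : X.PosSemidef := by
  refine Matrix.posSemidef_iff_dotProduct_mulVec.2 ⟨?_, ?_⟩
  · rw [Matrix.IsHermitian, Matrix.conjTranspose_eq_transpose_of_trivial]; exact hX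
  · intro x
    have := h (WithLp.toLp 2 x)
    rw [qf, inner_mat] at this
    simpa using this

lemma qf_nonneg_of_posSemidef {X : Mat N} (h : X.PosSemidef) (k : EN N) : 0 ≤ qf X k := by
  have := (Matrix.posSemidef_iff_dotProduct_mulVec.1 h).2 k.ofLp
  rw [qf, inner_mat]; simpa using this

open scoped MatrixOrder Matrix.Norms.L2Operator in
lemma exists_sq_mat {Z : Mat N} (h : Z.PosSemidef) : ∃ B : Mat N, Z = B.conjTranspose * B :=
  CStarAlgebra.nonneg_iff_eq_star_mul_self.1 (Matrix.nonneg_iff_posSemidef.2 h)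

lemma qf_le_trace {Z : Mat N} (h : Z.PosSemidef) (k : EN N) : qf Z k ≤ Z.trace * ‖k‖ ^ 2 := by
  obtain ⟨B, rfl⟩ := exists_sq_mat h
  have h1 : qf (B.conjTranspose * B) k = ∑ i, (∑ j, B i j * k j) ^ 2 := by
    rw [qf, inner_mat, ← Matrix.mulVec_mulVec, Matrix.dotProduct_mulVec,
      Matrix.conjTranspose_eq_transpose_of_trivial, Matrix.vecMul_transpose]
    simp only [dotProduct, Matrix.mulVec, sq]
  have h2 : (B.conjTranspose * B).trace = ∑ i, ∑ j, B i j ^ 2 := by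
    simp only [Matrix.trace, Matrix.diag, Matrix.mul_apply,
      Matrix.conjTranspose_eq_transpose_of_trivial, Matrix.transpose_apply, ← sq]
    exact Finset.sum_comm
  have h3 : ‖k‖ ^ 2 = ∑ j, k j ^ 2 := by
    rw [EuclideanSpace.norm_sq_eq]; simp
  rw [h1, h2, h3, Finset.sum_mul]
  exact Finset.sum_le_sum fun i _ => Finset.sum_mul_sq_le_sq_mul_sq _ _ _

lemma exists_symm_mat (B : EN N →L[ℝ] EN N) :
    ∃ X : Mat N, X.IsSymm ∧ ∀ k, qf X k = ⟪B k, k⟫ := by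
  set Y : Mat N := Matrix.toEuclideanLin.symm (B : EN N →ₗ[ℝ] EN N) with hY
  have hYB : ∀ k, Matrix.toEuclideanLin Y k = B k := by
    intro k; rw [hY, LinearEquiv.apply_symm_apply]; rfl
  refine ⟨(1 / 2 : ℝ) • (Y + Y.transpose), ?_, ?_⟩
  · rw [Matrix.IsSymm, Matrix.transpose_smul, Matrix.transpose_add, Matrix.transpose_transpose,
      add_comm]
  · intro k
    rw [qf_smul, qf_add]
    have : qf Y.transpose k = qf Y k := by
      rw [qf, qf, inner_mat, inner_mat, Matrix.mulVec_transpose, Matrix.dotProduct_mulVec,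
        dotProduct_comm]
    rw [this, ← hYB, qf]; ring

lemma matNorm_le {Y : Mat N} {C : ℝ} (hC : 0 ≤ C)
    (h : ∀ k l, ⟪Matrix.toEuclideanLin Y k, l⟫ ≤ C * ‖k‖ * ‖l‖) : matNorm Y ≤ C := by
  refine ContinuousLinearMap.opNorm_le_bound _ hC fun k => ?_
  have h1 := h k (Matrix.toEuclideanLin Y k)
  rw [real_inner_self_eq_norm_sq] at h1
  change ‖Matrix.toEuclideanLin Y k‖ ≤ C * ‖k‖
  rcases eq_or_lt_of_le (norm_nonneg (Matrix.toEuclideanLin Y k)) with h0 | h0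
  · rw [← h0]; positivity
  · rw [sq] at h1; exact le_of_mul_le_mul_right h1 h0

lemma matNorm_nonneg (Y : Mat N) : 0 ≤ matNorm Y := norm_nonneg _

lemma abs_inner_le_matNorm (Y : Mat N) (k l : EN N) :
    |⟪Matrix.toEuclideanLin Y k, l⟫| ≤ matNorm Y * ‖k‖ * ‖l‖ := by
  refine (abs_real_inner_le_norm _ _).trans ?_
  gcongr
  exact (LinearMap.toContinuousLinearMap (Matrix.toEuclideanLin Y)).le_opNorm k

lemma abs_qf_le (Y : Mat N) (k : EN N) : |qf Y k| ≤ matNorm Y * ‖k‖ ^ 2 :=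
  (abs_inner_le_matNorm Y k k).trans_eq (by ring)

lemma smul_one_isSymm (t : ℝ) : (t • (1 : Mat N)).IsSymm := by
  rw [Matrix.IsSymm, Matrix.transpose_smul, Matrix.transpose_one]

lemma smul_one_posSemidef {t : ℝ} (ht : 0 ≤ t) : (t • (1 : Mat N)).PosSemidef :=
  posSemidef_of_qf (smul_one_isSymm t) fun k => by
    rw [qf_smul, qf_one]; positivity

lemma trace_smul_one (t : ℝ) : (t • (1 : Mat N)).trace = t * N := by
  simp [Matrix.trace_smul, Matrix.trace_one]

lemma matNorm_neg (Y : Mat N) : matNorm (-Y) = matNorm Y := by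
  simp [matNorm]

lemma matNorm_smul_one {t : ℝ} : matNorm (t • (1 : Mat N)) ≤ |t| := by
  refine matNorm_le (abs_nonneg t) fun k l => ?_
  rw [map_smul, LinearMap.smul_apply, toEuclideanLin_one', real_inner_smul_left]
  refine (le_abs_self _).trans ?_
  rw [abs_mul, mul_assoc]
  gcongr; exact abs_real_inner_le_norm _ _

/-- Second order superjet of `f` relative to `K`. -/
def MJet (K : Set (EN N)) (f : EN N → ℝ) (x p : EN N) (X : Mat N) : Prop :=
  ∀ᶠ x' in 𝓝[K] x, f x' ≤ f x + ⟪p, x' - x⟫ + 1 / 2 * qf X (x' - x)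

end

/-! ### Taylor expansions and quadratic test functions -/

section
variable {N : ℕ}

lemma fderiv_eq_inner_gradient (φ : EN N → ℝ) (x k : EN N) : fderiv ℝ φ x k = ⟪gradient φ x, k⟫ := by
  rw [gradient, InnerProductSpace.toDual_symm_apply]

lemma hess_inner {φ : EN N → ℝ} (x k l : EN N) :
    ⟪Matrix.toEuclideanLin (hess φ x) k, l⟫ = fderiv ℝ (fderiv ℝ φ) x l k := by
  have hk : k = ∑ j, k j • EuclideanSpace.single j (1 : ℝ) := by
    ext i; simp [Finset.sum_apply, Pi.single_apply]
  have hl : l = ∑ i, l i • EuclideanSpace.single i (1 : ℝ) := by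
    ext i; simp [Finset.sum_apply, Pi.single_apply]
  rw [inner_mat]
  conv_rhs => rw [hk, hl]
  simp only [map_sum, map_smul, sum_apply, smul_apply, smul_eq_mul, dotProduct, Matrix.mulVec,
    hess, Matrix.of_apply, iteratedFDeriv_two_apply, Matrix.cons_val_zero, Matrix.cons_val_one]
  simp only [Finset.mul_sum]
  rw [Finset.sum_comm]
  refine Finset.sum_congr rfl fun i _ => ?_
  refine Finset.sum_congr rfl fun j _ => ?_
  ring

lemma hess_symm {φ : EN N → ℝ} (h : ContDiff ℝ 2 φ) (x : EN N) : (hess φ x).IsSymm := by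
  have hs : IsSymmSndFDerivAt ℝ φ x := h.contDiffAt.isSymmSndFDerivAt (by simp)
  ext i j
  simp only [hess, Matrix.transpose_apply, Matrix.of_apply, iteratedFDeriv_two_apply,
    Matrix.cons_val_zero, Matrix.cons_val_one]
  exact hs _ _

/-- The mean value inequality for the remainder of a first or second order expansion. -/
lemma remainder_le {φ : EN N → ℝ} (h : Differentiable ℝ φ) {T : EN N → ℝ} {T' : EN N → EN N →L[ℝ] ℝ}
    (hT : ∀ y, HasFDerivAt T (T' y) y) {x x' : EN N} {C : ℝ}
    (hC : ∀ y ∈ segment ℝ x x', ‖fderiv ℝ φ y - T' y‖ ≤ C) :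
    |φ x' - T x' - (φ x - T x)| ≤ C * ‖x' - x‖ := by
  have := (convex_segment x x').norm_image_sub_le_of_norm_hasFDerivWithin_le
    (f := fun y => φ y - T y) (f' := fun y => fderiv ℝ φ y - T' y)
    (fun y _ => (((h y).hasFDerivAt).sub (hT y)).hasFDerivWithinAt) hC (left_mem_segment ℝ x x')
    (right_mem_segment ℝ x x')
  exact this

lemma segment_norm_le {E : Type*} [NormedAddCommGroup E] [NormedSpace ℝ E] {x x' y : E}
    (hy : y ∈ segment ℝ x x') : ‖y - x‖ ≤ ‖x' - x‖ := by
  have h := (convex_closedBall x ‖x' - x‖).segment_subset (by simp) (by simp [dist_eq_norm]) hy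
  simpa [dist_eq_norm] using h

/-- Taylor's formula with Peano remainder at order two. -/
lemma taylor_two {φ : EN N → ℝ} (h : ContDiff ℝ 2 φ) (x : EN N) {ε : ℝ} (hε : 0 < ε) :
    ∀ᶠ x' in 𝓝 x, |φ x' - φ x - ⟪gradient φ x, x' - x⟫ - 1 / 2 * qf (hess φ x) (x' - x)|
      ≤ ε * ‖x' - x‖ ^ 2 := by
  have hd : DifferentiableAt ℝ (fderiv ℝ φ) x :=
    (h.fderiv_right (m := 1) (by norm_num)).differentiable (by norm_num) x
  have h1 := hd.hasFDerivAt.isLittleO.def hε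
  obtain ⟨r, hr, h1⟩ := Metric.mem_nhds_iff.1 h1
  filter_upwards [ball_mem_nhds x hr] with x' hx'
  set D := fderiv ℝ (fderiv ℝ φ) x with hD
  have hsymm : ∀ k l, D k l = D l k := fun k l =>
    (h.contDiffAt.isSymmSndFDerivAt (by simp) : IsSymmSndFDerivAt ℝ φ x) k l
  have hT : ∀ y, HasFDerivAt (fun y => ⟪gradient φ x, y - x⟫ + 1 / 2 * D (y - x) (y - x))
      (fderiv ℝ φ x + D (y - x)) y := by
    intro y
    have a1 : HasFDerivAt (fun y : EN N => y - x) (ContinuousLinearMap.id ℝ (EN N)) y :=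
      (hasFDerivAt_id y).sub_const x
    have a2 : HasFDerivAt (fun y => fderiv ℝ φ x (y - x)) (fderiv ℝ φ x) y := by
      have := (fderiv ℝ φ x).hasFDerivAt.comp y a1
      exact this
    have a3 := (D.hasFDerivAt.comp y a1).clm_apply a1
    have a4 := a2.add (a3.const_mul (1 / 2))
    have e1 : (fun y => ⟪gradient φ x, y - x⟫ + 1 / 2 * D (y - x) (y - x))
        = ((fun y => fderiv ℝ φ x (y - x)) + fun y => 1 / 2 * D (y - x) (y - x)) := by
      funext y; simp
    rw [e1]
    refine a4.congr_fderiv ?_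
    ext k
    simp
    rw [hsymm k y, hsymm k x]
    ring
  have := remainder_le (h.differentiable (by norm_num)) hT (x := x) (x' := x')
    (C := ε * ‖x' - x‖) (by
      intro y hy
      have hyn := segment_norm_le hy
      have : ‖fderiv ℝ φ y - fderiv ℝ φ x - D (y - x)‖ ≤ ε * ‖y - x‖ := by
        apply h1
        rw [mem_ball, dist_eq_norm] at hx' ⊢
        linarith
      rw [← sub_sub]
      exact this.trans (by gcongr))
  simp only [sub_self, map_zero, inner_zero_right, mul_zero, add_zero, sub_zero] at this
  rw [qf, hess_inner]
  calc _ = |φ x' - (⟪gradient φ x, x' - x⟫ + 1 / 2 * D (x' - x) (x' - x)) - φ x| := by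
        congr 1; ring
    _ ≤ _ := this
    _ = _ := by ring

lemma continuous_norm_fderiv {E G : Type*} [NormedAddCommGroup E] [NormedSpace ℝ E]
    [NormedAddCommGroup G] [NormedSpace ℝ G] {f : E → G} (h : ContDiff ℝ 1 f) :
    Continuous fun z => ‖fderiv ℝ f z‖ :=
  (h.continuous_fderiv (by norm_num)).norm

/-- Uniform first order Taylor bounds for a `C²` function on balls. -/
lemma c2_bound {ψ : EN N → ℝ} (h : ContDiff ℝ 2 ψ) (R : ℝ) :
    ∃ C : ℝ, 0 ≤ C ∧ (∀ x ∈ closedBall (0 : EN N) R, ‖gradient ψ x‖ ≤ C) ∧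
      ∀ x ∈ closedBall (0 : EN N) R, ∀ x' ∈ closedBall (0 : EN N) R,
        |ψ x' - ψ x - ⟪gradient ψ x, x' - x⟫| ≤ C * ‖x' - x‖ ^ 2 := by
  have h1 : ContDiff ℝ 1 (fderiv ℝ ψ) := h.fderiv_right (by norm_num)
  have hc1 : Continuous (fderiv ℝ ψ) := h1.continuous
  obtain ⟨C1, hC1⟩ := (isCompact_closedBall (0 : EN N) R).exists_bound_of_continuousOn
    hc1.continuousOn
  have hc3 : Continuous fun z => ‖fderiv ℝ (fderiv ℝ ψ) z‖ := continuous_norm_fderiv h1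
  obtain ⟨C2, hC2⟩ := (isCompact_closedBall (0 : EN N) R).exists_bound_of_continuousOn
    hc3.continuousOn
  refine ⟨|C1| + |C2|, by positivity, ?_, ?_⟩
  · intro x hx
    have : ‖gradient ψ x‖ = ‖fderiv ℝ ψ x‖ := by rw [gradient, LinearIsometryEquiv.norm_map]
    rw [this]
    exact (hC1 x hx).trans ((le_abs_self _).trans (by linarith [abs_nonneg C2]))
  · intro x hx x' hx'
    have hconv := convex_closedBall (0 : EN N) R
    have hL : ∀ y ∈ closedBall (0 : EN N) R, ‖fderiv ℝ ψ y - fderiv ℝ ψ x‖ ≤ |C2| * ‖y - x‖ := by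
      intro y hy
      exact hconv.norm_image_sub_le_of_norm_hasFDerivWithin_le
        (fun z _ => ((h1.differentiable (by norm_num)) z).hasFDerivAt.hasFDerivWithinAt)
        (fun z hz => by have := hC2 z hz; rw [Real.norm_eq_abs] at this; exact (le_abs_self _).trans (this.trans (le_abs_self _))) hx hy
    have hT : ∀ y, HasFDerivAt (fun y => fderiv ℝ ψ x (y - x)) (fderiv ℝ ψ x) y := by
      intro y
      have a1 : HasFDerivAt (fun y : EN N => y - x) (ContinuousLinearMap.id ℝ (EN N)) y :=
        (hasFDerivAt_id y).sub_const x
      exact (fderiv ℝ ψ x).hasFDerivAt.comp y a1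
    have := remainder_le (h.differentiable (by norm_num)) hT (x := x) (x' := x')
      (C := |C2| * ‖x' - x‖) (by
        intro y hy
        exact (hL y (hconv.segment_subset hx hx' hy)).trans
          (by gcongr; exact segment_norm_le hy))
    simp only [sub_self, map_zero, sub_zero] at this
    rw [fderiv_eq_inner_gradient] at this
    calc _ = |ψ x' - ⟪gradient ψ x, x' - x⟫ - ψ x| := by congr 1; ring
      _ ≤ _ := this
      _ ≤ (|C1| + |C2|) * ‖x' - x‖ ^ 2 := by
        have : 0 ≤ |C1| * ‖x' - x‖ ^ 2 := by positivity
        linarith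

/-- The quadratic test function with prescribed jet `(p, X)` at `x`. -/
def qtest (x p : EN N) (X : Mat N) : EN N → ℝ := fun x' => ⟪p, x' - x⟫ + 1 / 2 * qf X (x' - x)

lemma qtest_contDiff (x p : EN N) (X : Mat N) : ContDiff ℝ 2 (qtest x p X) := by
  have : ContDiff ℝ 2 (fun k : EN N => Matrix.toEuclideanLin X k) :=
    (LinearMap.toContinuousLinearMap (Matrix.toEuclideanLin X)).contDiff
  unfold qtest qf
  have h2 : ContDiff ℝ 2 (fun k : EN N => k - x) := by fun_prop
  exact (contDiff_const.inner ℝ h2).add (contDiff_const.mul ((this.comp h2).inner ℝ h2))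

lemma qtest_fderiv (x p : EN N) {X : Mat N} (hX : X.IsSymm) (y : EN N) :
    HasFDerivAt (qtest x p X) (innerSL ℝ (p + Matrix.toEuclideanLin X (y - x))) y := by
  set L := LinearMap.toContinuousLinearMap (Matrix.toEuclideanLin X)
  have a1 : HasFDerivAt (fun y : EN N => y - x) (ContinuousLinearMap.id ℝ (EN N)) y :=
    (hasFDerivAt_id y).sub_const x
  have a2 := (hasFDerivAt_const p y).inner ℝ a1
  have a3 := ((L.hasFDerivAt.comp y a1).inner ℝ a1).const_mul (1 / 2)
  refine (a2.add a3).congr_fderiv ?_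
  ext k
  simp [fderivInnerCLM_apply, L]
  have := mat_symm hX k (y - x)
  rw [this, map_sub, inner_sub_left]
  ring

lemma qtest_gradient (x p : EN N) {X : Mat N} (hX : X.IsSymm) : gradient (qtest x p X) x = p := by
  refine ext_inner_right ℝ fun k => ?_
  rw [← fderiv_eq_inner_gradient, (qtest_fderiv x p hX x).fderiv]
  simp

lemma qtest_hess (x p : EN N) {X : Mat N} (hX : X.IsSymm) : hess (qtest x p X) x = X := by
  apply Matrix.toEuclideanLin.injective
  refine LinearMap.ext fun k => ext_inner_right ℝ fun l => ?_
  rw [hess_inner]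
  have h1 : fderiv ℝ (qtest x p X) = fun y => innerSL ℝ (p + Matrix.toEuclideanLin X (y - x)) :=
    funext fun y => (qtest_fderiv x p hX y).fderiv
  rw [h1]
  set L := LinearMap.toContinuousLinearMap (Matrix.toEuclideanLin X)
  have a1 : HasFDerivAt (fun y : EN N => y - x) (ContinuousLinearMap.id ℝ (EN N)) x :=
    (hasFDerivAt_id x).sub_const x
  have a2 := (L.hasFDerivAt.comp x a1).const_add p
  have a3 := (innerSL ℝ (E := EN N)).hasFDerivAt.comp x a2
  have a4 : HasFDerivAt (fun y => innerSL ℝ (p + Matrix.toEuclideanLin X (y - x))) _ x := a3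
  rw [a4.fderiv]
  simp [L]
  exact mat_symm hX l k

end

/-! ### The barrier function -/

section
variable {N : ℕ}

/-- A `C²` weight `ψ` with values in `[1, 2]` on the closed domain, whose normal derivative on the
boundary is so large that it compensates the non-convexity of `Ω`, together with a constant `C`
controlling its first order Taylor expansions. -/
structure Barrier (Ω : Set (EN N)) (nv : EN N → EN N) (q : ℕ) (ψ : EN N → ℝ) (C : ℝ) : Prop where
  one_le : ∀ x ∈ closure Ω, 1 ≤ ψ x
  le_two : ∀ x ∈ closure Ω, ψ x ≤ 2
  const_nonneg : 0 ≤ C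
  grad : ∀ x ∈ closure Ω, ‖gradient ψ x‖ ≤ C
  taylor : ∀ x ∈ closure Ω, ∀ x' ∈ closure Ω,
    |ψ x' - ψ x - ⟪gradient ψ x, x' - x⟫| ≤ C * ‖x' - x‖ ^ 2
  nrm : ∀ x ∈ frontier Ω, 0 ≤ ⟪gradient ψ x, nv x⟫
  bdry : ∀ x ∈ frontier Ω, ∀ y ∈ closure Ω, y ≠ x → ∀ S : ℝ, 2 ≤ S → S ≤ 4 →
    0 < S * ⟪x - y, nv x⟫ + ‖x - y‖ ^ 2 / q * ⟪gradient ψ x, nv x⟫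

lemma dom_compact {Ω : Set (EN N)} {nv : EN N → EN N} (h : IsC2Domain Ω nv) :
    IsCompact (closure Ω) := h.2.2.1.isCompact_closure

lemma mem_closure_cases {Ω : Set (EN N)} {x : EN N} (hx : x ∈ closure Ω) :
    x ∈ Ω ∨ x ∈ frontier Ω := by
  rw [closure_eq_self_union_frontier] at hx
  exact hx

lemma gradient_continuous {ρ : EN N → ℝ} (h : ContDiff ℝ 2 ρ) : Continuous (gradient ρ) := by
  have h1 : Continuous (fderiv ℝ ρ) := h.continuous_fderiv (by norm_num)
  exact (InnerProductSpace.toDual ℝ (EN N)).symm.continuous.comp h1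

/-- The weight is `ψ = 1 + exp (L ρ)`, with `L` so large that its normal derivative on the boundary
dominates the second order Taylor bound of the defining function `ρ`. -/
lemma exists_barrier {Ω : Set (EN N)} {nv : EN N → EN N} (h : IsC2Domain Ω nv) {q : ℕ}
    (hq : 0 < q) : ∃ ψ C, Barrier Ω nv q ψ C := by
  have hcomp := dom_compact h
  obtain ⟨ho, -, hb, ρ, hρ, hΩ, hfr, hn⟩ := h
  obtain ⟨R, hR⟩ := hcomp.isBounded.subset_closedBall (0 : EN N)
  obtain ⟨C1, hC1, -, hT⟩ := c2_bound hρ R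
  have hle : ∀ x ∈ closure Ω, ρ x ≤ 0 := by
    intro x hx
    rcases mem_closure_cases hx with hx | hx
    · rw [hΩ] at hx; exact le_of_lt hx
    · rw [hfr] at hx; exact le_of_eq hx
  have hfc : IsCompact (frontier Ω) :=
    hcomp.of_isClosed_subset isClosed_frontier frontier_subset_closure
  obtain ⟨m, hm, hmle⟩ : ∃ m : ℝ, 0 < m ∧ ∀ x ∈ frontier Ω, m ≤ ‖gradient ρ x‖ := by
    rcases (frontier Ω).eq_empty_or_nonempty with he | hne
    · exact ⟨1, one_pos, by simp [he]⟩
    · obtain ⟨x, hx, hmin⟩ := hfc.exists_isMinOn hne (gradient_continuous hρ).norm.continuousOn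
      exact ⟨‖gradient ρ x‖, norm_pos_iff.2 (hn x hx).1, fun y hy => hmin hy⟩
  set L : ℝ := (4 * C1 * q + 1) / m ^ 2 with hL
  have hLpos : 0 < L := by positivity
  have hLm : L * m ^ 2 = 4 * C1 * q + 1 := by rw [hL]; field_simp
  set ψ : EN N → ℝ := fun x => 1 + Real.exp (L * ρ x) with hψ
  have hψ2 : ContDiff ℝ 2 ψ :=
    contDiff_const.add (Real.contDiff_exp.comp (contDiff_const.mul hρ))
  have hgrad : ∀ x, gradient ψ x = (Real.exp (L * ρ x) * L) • gradient ρ x := by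
    intro x
    have h1 : HasFDerivAt ρ (fderiv ℝ ρ x) x :=
      (hρ.differentiable (by norm_num) x).hasFDerivAt
    have h2 := ((h1.const_mul L).exp).const_add 1
    refine ext_inner_right ℝ fun k => ?_
    rw [← fderiv_eq_inner_gradient, h2.fderiv, inner_smul_left, ← fderiv_eq_inner_gradient]
    simp
    ring
  have hfrgrad : ∀ x ∈ frontier Ω, ⟪gradient ψ x, nv x⟫ = L * ‖gradient ρ x‖ := by
    intro x hx
    have h0 : ρ x = 0 := by rw [hfr] at hx; exact hx
    have hg := norm_pos_iff.2 (hn x hx).1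
    rw [hgrad, (hn x hx).2, h0, inner_smul_left, inner_smul_right, real_inner_self_eq_norm_sq]
    simp
    field_simp
    exact Or.inl trivial
  obtain ⟨C, hC, hg, hT2⟩ := c2_bound hψ2 R
  refine ⟨ψ, C, ?_, ?_, hC, fun x hx => hg x (hR hx),
    fun x hx x' hx' => hT2 x (hR hx) x' (hR hx'), ?_, ?_⟩
  · intro x _
    have := Real.exp_pos (L * ρ x)
    simp only [hψ]; linarith
  · intro x hx
    have : Real.exp (L * ρ x) ≤ 1 :=
      Real.exp_le_one_iff.2 (mul_nonpos_of_nonneg_of_nonpos hLpos.le (hle x hx))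
    simp only [hψ]; linarith
  · intro x hx
    rw [hfrgrad x hx]; positivity
  · intro x hx y hy hyx S hS2 hS4
    rw [hfrgrad x hx, (hn x hx).2, inner_smul_right]
    set G := ‖gradient ρ x‖ with hG
    have hGm : m ≤ G := hmle x hx
    have hGpos : 0 < G := hm.trans_le hGm
    have h0 : ρ x = 0 := by have := hx; rw [hfr] at this; exact this
    have h1 := hT x (hR (frontier_subset_closure hx)) y (hR hy)
    have h2 := hle y hy
    have h3 := (abs_le.1 h1).1
    rw [h0] at h3
    have h4 : ⟪x - y, gradient ρ x⟫ = - ⟪gradient ρ x, y - x⟫ := by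
      rw [real_inner_comm, ← inner_neg_right, neg_sub]
    have h5 : -(C1 * ‖x - y‖ ^ 2) ≤ ⟪x - y, gradient ρ x⟫ := by
      rw [h4, norm_sub_rev x y]; linarith
    have hd : 0 < ‖x - y‖ ^ 2 := by
      have : 0 < ‖x - y‖ := norm_pos_iff.2 (sub_ne_zero.2 hyx.symm)
      positivity
    have h6 : -(4 * (C1 * ‖x - y‖ ^ 2)) ≤ S * ⟪x - y, gradient ρ x⟫ := by
      have hz : 0 ≤ C1 * ‖x - y‖ ^ 2 := by positivity
      calc -(4 * (C1 * ‖x - y‖ ^ 2)) ≤ -(S * (C1 * ‖x - y‖ ^ 2)) := by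
            have := mul_le_mul_of_nonneg_right hS4 hz; linarith
        _ = S * -(C1 * ‖x - y‖ ^ 2) := by ring
        _ ≤ _ := mul_le_mul_of_nonneg_left h5 (by linarith)
    have hqp : (0 : ℝ) < q := by exact_mod_cast hq
    have hLG : 4 * C1 * q + 1 ≤ L * G ^ 2 := by
      rw [← hLm]; gcongr
    have : S * (G⁻¹ * ⟪x - y, gradient ρ x⟫) + ‖x - y‖ ^ 2 / q * (L * G)
        = (q * (S * ⟪x - y, gradient ρ x⟫) + ‖x - y‖ ^ 2 * (L * G ^ 2)) / (q * G) := by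
      field_simp
    rw [this]
    apply div_pos _ (by positivity)
    have h7 := mul_le_mul_of_nonneg_left h6 hqp.le
    have h8 := mul_le_mul_of_nonneg_left hLG hd.le
    linarith

/-- Strict positivity of the normal component is stable under small perturbations. -/
lemma normal_stable {Ω : Set (EN N)} {nv : EN N → EN N} (h : IsC2Domain Ω nv) {xh P : EN N}
    (hP : xh ∈ frontier Ω → 0 < ⟪P, nv xh⟫) :
    ∃ ε > 0, ∀ x p, ‖x - xh‖ ≤ ε → ‖p - P‖ ≤ ε → x ∈ frontier Ω → 0 < ⟪p, nv x⟫ := by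
  obtain ⟨ho, -, hb, ρ, hρ, hΩ, hfr, hn⟩ := h
  by_cases hx : xh ∈ frontier Ω
  · have hc : Continuous fun z : EN N × EN N => ⟪z.2, gradient ρ z.1⟫ :=
      continuous_snd.inner ((gradient_continuous hρ).comp continuous_fst)
    have h0 : 0 < ⟪P, gradient ρ xh⟫ := by
      have := hP hx
      rw [(hn xh hx).2, inner_smul_right] at this
      exact pos_of_mul_pos_right this (by positivity)
    have h1 := (hc.tendsto (xh, P)).eventually (lt_mem_nhds h0)
    obtain ⟨ε, hε, h2⟩ := Metric.mem_nhds_iff.1 h1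
    refine ⟨ε / 2, by positivity, fun x p hxx hp hxf => ?_⟩
    rw [(hn x hxf).2, inner_smul_right]
    refine mul_pos (inv_pos.2 (norm_pos_iff.2 (hn x hxf).1)) (h2 (a := (x, p)) ?_)
    rw [mem_ball, Prod.dist_eq, max_lt_iff, dist_eq_norm, dist_eq_norm]
    constructor <;> simp only <;> linarith
  · obtain ⟨ε, hε, h2⟩ := Metric.mem_nhds_iff.1 (isClosed_frontier.isOpen_compl.mem_nhds hx)
    refine ⟨ε / 2, by positivity, fun x p hxx hp hxf => absurd hxf (h2 ?_)⟩
    rw [mem_ball, dist_eq_norm]; linarith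

/-- The direction `-n` points into the domain. -/
lemma inward {Ω : Set (EN N)} {nv : EN N → EN N} (h : IsC2Domain Ω nv) {x : EN N}
    (hx : x ∈ frontier Ω) : ∀ᶠ t in 𝓝[>] (0 : ℝ), x - t • nv x ∈ closure Ω := by
  obtain ⟨ho, -, hb, ρ, hρ, hΩ, hfr, hn⟩ := h
  have h0 : ρ x = 0 := by have := hx; rw [hfr] at this; exact this
  have h1 : HasFDerivAt ρ (fderiv ℝ ρ x) x := (hρ.differentiable (by norm_num) x).hasFDerivAt
  have h2 : HasDerivAt (fun t : ℝ => x - t • nv x) (-nv x) 0 := by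
    have := ((hasDerivAt_id (0 : ℝ)).smul_const (nv x)).const_sub x
    simpa using this
  have h3 : HasDerivAt (fun t : ℝ => ρ (x - t • nv x)) (fderiv ℝ ρ x (-nv x)) 0 := by
    have h1' : HasFDerivAt ρ (fderiv ℝ ρ x) (x - (0 : ℝ) • nv x) := by simpa using h1
    exact h1'.comp_hasDerivAt (0 : ℝ) h2
  have hneg : fderiv ℝ ρ x (-nv x) < 0 := by
    rw [fderiv_eq_inner_gradient, (hn x hx).2, inner_neg_right, inner_smul_right,
      real_inner_self_eq_norm_sq]
    have := norm_pos_iff.2 (hn x hx).1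
    have : 0 < ‖gradient ρ x‖⁻¹ * ‖gradient ρ x‖ ^ 2 := by positivity
    linarith
  have h4 := (hasDerivAt_iff_tendsto_slope.1 h3).eventually (gt_mem_nhds hneg)
  have h5 : ∀ᶠ t in 𝓝[>] (0 : ℝ), slope (fun t : ℝ => ρ (x - t • nv x)) 0 t < 0 :=
    h4.filter_mono (nhdsWithin_mono _ fun t ht => ne_of_gt ht)
  filter_upwards [h5, self_mem_nhdsWithin] with t ht ht0
  apply subset_closure
  rw [hΩ]
  rw [slope_def_field] at ht
  simp only [zero_smul, sub_zero, h0] at ht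
  have ht0 : 0 < t := ht0
  show ρ (x - t • nv x) < 0
  by_contra hcon
  have : 0 ≤ ρ (x - t • nv x) / t := div_nonneg (not_lt.1 hcon) ht0.le
  linarith

lemma norm_nv {Ω : Set (EN N)} {nv : EN N → EN N} (h : IsC2Domain Ω nv) {x : EN N}
    (hx : x ∈ frontier Ω) : ‖nv x‖ = 1 := by
  obtain ⟨ho, -, hb, ρ, hρ, hΩ, hfr, hn⟩ := h
  rw [(hn x hx).2, norm_smul, norm_inv, norm_norm]
  exact inv_mul_cancel₀ (norm_ne_zero_iff.2 (hn x hx).1)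

end

/-! ### Expansions of the penalty functions -/

section

/-- `Q` is the quadratic form of a bounded operator. -/
def IsQuad {V : Type*} [NormedAddCommGroup V] [InnerProductSpace ℝ V] (Q : V → ℝ) : Prop :=
  ∃ B : V →L[ℝ] V, ∀ v, Q v = ⟪B v, v⟫

variable {V W : Type*} [NormedAddCommGroup V] [InnerProductSpace ℝ V]
  [NormedAddCommGroup W] [InnerProductSpace ℝ W]

lemma IsQuad.add {Q R : V → ℝ} (hQ : IsQuad Q) (hR : IsQuad R) : IsQuad fun v => Q v + R v := by
  obtain ⟨B, hB⟩ := hQ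
  obtain ⟨D, hD⟩ := hR
  exact ⟨B + D, fun v => by beta_reduce; rw [hB, hD, add_apply, inner_add_left]⟩

lemma IsQuad.const_mul {Q : V → ℝ} (hQ : IsQuad Q) (t : ℝ) : IsQuad fun v => t * Q v := by
  obtain ⟨B, hB⟩ := hQ
  exact ⟨t • B, fun v => by beta_reduce; rw [hB, smul_apply, real_inner_smul_left]⟩

lemma isQuad_mul [CompleteSpace V] (f h : V →L[ℝ] ℝ) : IsQuad fun v => f v * h v := by
  refine ⟨f.smulRight ((InnerProductSpace.toDual ℝ V).symm h), fun v => ?_⟩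
  rw [ContinuousLinearMap.smulRight_apply, real_inner_smul_left,
    InnerProductSpace.toDual_symm_apply]

lemma isQuad_norm_sq [CompleteSpace V] [CompleteSpace W] (L : V →L[ℝ] W) : IsQuad fun v => ‖L v‖ ^ 2 := by
  refine ⟨L.adjoint ∘L L, fun v => ?_⟩
  rw [ContinuousLinearMap.comp_apply, ContinuousLinearMap.adjoint_inner_left,
    real_inner_self_eq_norm_sq]

end

section
variable {N : ℕ}

lemma norm_add_sq_exp {w : EN N} (hw : w ≠ 0) (d : EN N) :
    ‖w + d‖ ^ 2 = ‖w‖ ^ 2 + 2 * ‖w‖ * ⟪‖w‖⁻¹ • w, d⟫ + ‖d‖ ^ 2 := by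
  have : 0 < ‖w‖ := norm_pos_iff.2 hw
  rw [norm_add_sq_real, real_inner_smul_left]
  field_simp

lemma abs_dir_le {w : EN N} (hw : w ≠ 0) (d : EN N) : |⟪‖w‖⁻¹ • w, d⟫| ≤ ‖d‖ := by
  have h1 := abs_real_inner_le_norm (‖w‖⁻¹ • w) d
  rwa [norm_smul, norm_inv, norm_norm, inv_mul_cancel₀ (norm_ne_zero_iff.2 hw), one_mul] at h1

lemma dir_sq_le {w : EN N} (hw : w ≠ 0) (d : EN N) : ⟪‖w‖⁻¹ • w, d⟫ ^ 2 ≤ ‖d‖ ^ 2 := by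
  rw [← sq_abs]
  exact pow_le_pow_left₀ (abs_nonneg _) (abs_dir_le hw d) 2

lemma norm_exp_aux {r a D n ε : ℝ} (hr : 0 < r) (hε : 0 < ε) (ha : |a| ≤ n)
    (hD : D = n ^ 2) (h1 : n ≤ r / 2) (h2 : n ≤ r ^ 2 * ε) :
    r ^ 2 + 2 * r * a + D ≤ (r + a + (D - a ^ 2) / (2 * r) + ε * D) ^ 2 ∧
      0 ≤ r + a + (D - a ^ 2) / (2 * r) + ε * D := by
  have ha1 := (abs_le.1 ha).1
  have hn : 0 ≤ n := (abs_nonneg a).trans ha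
  have haD : a ^ 2 ≤ D := by rw [hD, ← sq_abs]; exact pow_le_pow_left₀ (abs_nonneg _) ha 2
  have hD0 : 0 ≤ D := by rw [hD]; positivity
  set s := (D - a ^ 2) / (2 * r) with hs
  have hs0 : 0 ≤ s := div_nonneg (by linarith) (by linarith)
  have hsD : 2 * r * s = D - a ^ 2 := by rw [hs]; field_simp
  have hεD : 0 ≤ ε * D := by positivity
  have hra : r / 2 ≤ r + a := by linarith
  refine ⟨?_, by linarith⟩
  have hexp : (r + a + s + ε * D) ^ 2 = r ^ 2 + 2 * r * a + a ^ 2 + 2 * r * s + 2 * (a * s)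
      + 2 * ((r + a) * (ε * D)) + (s + ε * D) ^ 2 := by ring
  rw [hexp, hsD]
  have h3 : r / 2 * (ε * D) ≤ (r + a) * (ε * D) := mul_le_mul_of_nonneg_right hra hεD
  have h4 : -(n * s) ≤ a * s := by
    have := mul_le_mul_of_nonneg_right ha1 hs0; linarith
  have h5 : 2 * (n * s) ≤ r * (ε * D) := by
    have h6 : n * s ≤ r ^ 2 * ε * s := mul_le_mul_of_nonneg_right h2 hs0
    have h7 : r ^ 2 * ε * s = r * ε / 2 * (2 * r * s) := by ring
    have h8 : r * ε / 2 * (2 * r * s) ≤ r * ε / 2 * D := by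
      apply mul_le_mul_of_nonneg_left _ (by positivity)
      rw [hsD]; linarith [sq_nonneg a]
    linarith
  have := sq_nonneg (s + ε * D)
  linarith

/-- Second order upper expansion of the Euclidean norm. -/
lemma norm_exp {w : EN N} (hw : w ≠ 0) {ε : ℝ} (hε : 0 < ε) :
    ∀ᶠ d in 𝓝 (0 : EN N), ‖w + d‖ ≤ ‖w‖ + ⟪‖w‖⁻¹ • w, d⟫
      + (‖d‖ ^ 2 - ⟪‖w‖⁻¹ • w, d⟫ ^ 2) / (2 * ‖w‖) + ε * ‖d‖ ^ 2 := by
  have hr : 0 < ‖w‖ := norm_pos_iff.2 hw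
  have hball : ∀ t : ℝ, 0 < t → ∀ᶠ d in 𝓝 (0 : EN N), ‖d‖ ≤ t := fun t ht => by
    filter_upwards [closedBall_mem_nhds (0 : EN N) ht] with d hd
    simpa using hd
  filter_upwards [hball (‖w‖ / 2) (by positivity), hball (‖w‖ ^ 2 * ε) (by positivity)]
    with d h1 h2
  obtain ⟨h3, h4⟩ := norm_exp_aux hr hε (abs_dir_le hw d) rfl h1 h2
  rw [← norm_add_sq_exp hw] at h3
  exact (le_abs_self _).trans (abs_le_of_sq_le_sq h3 h4)

lemma pow_exp_aux {m : ℕ} {x : ℝ} (hx : |x * m| ≤ 1) (hx1 : -1 ≤ x) :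
    (1 + x) ^ m ≤ 1 + x * m + (x * m) ^ 2 := by
  have h1 : (1 + x) ^ m ≤ Real.exp (x * m) := by
    rw [mul_comm, Real.exp_nat_mul]
    exact pow_le_pow_left₀ (by linarith) (by linarith [Real.add_one_le_exp x]) m
  have h2 := (abs_le.1 (Real.abs_exp_sub_one_sub_id_le hx)).2
  linarith

/-- Second order upper expansion of an even power of the Euclidean norm. -/
lemma pow_exp {w : EN N} (hw : w ≠ 0) {m : ℕ} (hm : 1 ≤ m) :
    ∀ᶠ d in 𝓝 (0 : EN N), ‖w + d‖ ^ (2 * m) ≤ ‖w‖ ^ (2 * m) *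
      (1 + 2 * m / ‖w‖ * ⟪‖w‖⁻¹ • w, d⟫ + (m + 9 * m ^ 2) / ‖w‖ ^ 2 * ‖d‖ ^ 2) := by
  have hr : 0 < ‖w‖ := norm_pos_iff.2 hw
  have hm0 : (1 : ℝ) ≤ m := by exact_mod_cast hm
  have hball : ∀ t : ℝ, 0 < t → ∀ᶠ d in 𝓝 (0 : EN N), ‖d‖ ≤ t := fun t ht => by
    filter_upwards [closedBall_mem_nhds (0 : EN N) ht] with d hd
    simpa using hd
  filter_upwards [hball (‖w‖ / (3 * m)) (by positivity)] with d h1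
  set a := ⟪‖w‖⁻¹ • w, d⟫ with ha
  set r := ‖w‖ with hrr
  have ha1 : |a| ≤ ‖d‖ := abs_dir_le hw d
  set x := (2 * r * a + ‖d‖ ^ 2) / r ^ 2 with hx
  have hd1 : ‖d‖ ≤ r := h1.trans (div_le_self hr.le (by linarith))
  have hxa : |x| ≤ 3 * ‖d‖ / r := by
    rw [hx, abs_div, abs_of_pos (by positivity : 0 < r ^ 2), div_le_div_iff₀ (by positivity) hr]
    have h2 : |2 * r * a + ‖d‖ ^ 2| ≤ 3 * ‖d‖ * r := by
      calc _ ≤ |2 * r * a| + |‖d‖ ^ 2| := abs_add_le _ _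
        _ = 2 * r * |a| + ‖d‖ * ‖d‖ := by
          rw [abs_mul, abs_of_pos (by positivity : 0 < 2 * r), abs_of_nonneg (sq_nonneg ‖d‖)]; ring
        _ ≤ 2 * r * ‖d‖ + ‖d‖ * r := by gcongr
        _ = _ := by ring
    calc _ ≤ 3 * ‖d‖ * r * r := by gcongr
      _ = _ := by ring
  have hxm : |x * m| ≤ 1 := by
    rw [abs_mul, Nat.abs_cast]
    calc |x| * m ≤ 3 * ‖d‖ / r * m := by gcongr
      _ ≤ 3 * (r / (3 * m)) / r * m := by gcongr
      _ = 1 := by field_simp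
  have hx1 : -1 ≤ x := by
    have : |x| ≤ 1 := by
      calc |x| = |x| * 1 := by ring
        _ ≤ |x| * m := by gcongr
        _ = |x * m| := by rw [abs_mul, Nat.abs_cast]
        _ ≤ 1 := hxm
    exact (abs_le.1 this).1
  have hkey : ‖w + d‖ ^ 2 = r ^ 2 * (1 + x) := by
    rw [norm_add_sq_exp hw, hx, ← hrr, ← ha]; field_simp; ring
  rw [pow_mul, hkey, mul_pow, ← pow_mul]
  apply mul_le_mul_of_nonneg_left _ (by positivity)
  refine (pow_exp_aux hxm hx1).trans ?_
  have hx2 : x ^ 2 ≤ 9 * ‖d‖ ^ 2 / r ^ 2 := by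
    calc x ^ 2 = |x| ^ 2 := (sq_abs x).symm
      _ ≤ (3 * ‖d‖ / r) ^ 2 := by gcongr
      _ = _ := by ring
  calc 1 + x * m + (x * m) ^ 2 = 1 + x * m + m ^ 2 * x ^ 2 := by ring
    _ ≤ 1 + x * m + m ^ 2 * (9 * ‖d‖ ^ 2 / r ^ 2) := by gcongr
    _ = _ := by rw [hx]; field_simp; ring

lemma quad_abs_le {τ σ a D : ℝ} (ha : a ^ 2 ≤ D) :
    |τ * (D - a ^ 2) + σ * a ^ 2| ≤ (|τ| + |σ|) * D := by
  have h0 := sq_nonneg a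
  calc _ ≤ |τ * (D - a ^ 2)| + |σ * a ^ 2| := abs_add_le _ _
    _ = |τ| * (D - a ^ 2) + |σ| * a ^ 2 := by
      rw [abs_mul, abs_mul, abs_of_nonneg h0, abs_of_nonneg (sub_nonneg.2 ha)]
    _ ≤ |τ| * D + |σ| * D := by gcongr; linarith
    _ = _ := by ring

/-- The arithmetic core of the product expansion. -/
lemma prod_exp_aux {H0 H1 a T S ℓ E n2 C r0 δ M Hv Pv : ℝ} (hn2 : 0 ≤ n2) (hC : 0 ≤ C)
    (hr0 : 0 < r0) (hH0 : 0 ≤ H0)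
    (ha : |a| ≤ 2 * r0) (hE : |E| ≤ C * n2) (hT : |T| ≤ M * n2) (hℓ : |ℓ + E| ≤ 4 * C * r0)
    (hδ : (2 * |H1| * C + 2 * M * C) * r0 ≤ δ)
    (hPv : Pv = S + ℓ + E) (hPv0 : 0 ≤ Pv) (hHv : Hv ≤ H0 + H1 * a + 1 / 2 * T) :
    Hv * Pv ≤ H0 * S + (H1 * S * a + H0 * ℓ)
      + 1 / 2 * (S * T + 2 * H1 * a * ℓ + 2 * (H0 * C + δ) * n2) := by
  have h1 : Hv * Pv ≤ (H0 + H1 * a + 1 / 2 * T) * Pv := mul_le_mul_of_nonneg_right hHv hPv0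
  have h2 : H0 * E ≤ H0 * (C * n2) := mul_le_mul_of_nonneg_left ((le_abs_self E).trans hE) hH0
  have h3 : H1 * a * E ≤ |H1| * (2 * r0) * (C * n2) := by
    calc H1 * a * E ≤ |H1 * a * E| := le_abs_self _
      _ = |H1| * |a| * |E| := by rw [abs_mul, abs_mul]
      _ ≤ _ := by gcongr
  have h4 : T * (ℓ + E) ≤ M * n2 * (4 * C * r0) := by
    calc T * (ℓ + E) ≤ |T * (ℓ + E)| := le_abs_self _
      _ = |T| * |ℓ + E| := abs_mul _ _
      _ ≤ _ := mul_le_mul hT hℓ (abs_nonneg _) ((abs_nonneg _).trans hT)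
  have h5 : (2 * |H1| * C + 2 * M * C) * r0 * n2 ≤ δ * n2 := mul_le_mul_of_nonneg_right hδ hn2
  have h6 : (H0 + H1 * a + 1 / 2 * T) * Pv = H0 * S + (H1 * S * a + H0 * ℓ)
      + 1 / 2 * (S * T + 2 * H1 * a * ℓ) + H0 * E + H1 * a * E + 1 / 2 * (T * (ℓ + E)) := by
    rw [hPv]; ring
  linarith

/-- Second order upper expansion of the penalty `H(x - y) (ψ(x) + ψ(y))`. -/
lemma prod_exp {Ω : Set (EN N)} {nv : EN N → EN N} {q : ℕ} {ψ : EN N → ℝ} {C : ℝ}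
    (hB : Barrier Ω nv q ψ C) {x y : EN N} (hx : x ∈ closure Ω) (hy : y ∈ closure Ω)
    {Hf : EN N → ℝ} {H0 H1 τ σ δ : ℝ} {e : EN N} (he : ‖e‖ ≤ 1) (hH0 : 0 ≤ H0) (hδ : 0 < δ)
    (hHf : ∀ᶠ d in 𝓝 (0 : EN N), Hf (x - y + d) ≤
      H0 + H1 * ⟪e, d⟫ + 1 / 2 * (τ * (‖d‖ ^ 2 - ⟪e, d⟫ ^ 2) + σ * ⟪e, d⟫ ^ 2)) :
    ∃ r0 > 0, ∀ k₁ k₂ : EN N, ‖k₁‖ ≤ r0 → ‖k₂‖ ≤ r0 → x + k₁ ∈ closure Ω → y + k₂ ∈ closure Ω →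
      Hf (x + k₁ - (y + k₂)) * (ψ (x + k₁) + ψ (y + k₂)) ≤ H0 * (ψ x + ψ y)
        + (H1 * (ψ x + ψ y) * ⟪e, k₁ - k₂⟫ + H0 * (⟪gradient ψ x, k₁⟫ + ⟪gradient ψ y, k₂⟫))
        + 1 / 2 * ((ψ x + ψ y) * (τ * (‖k₁ - k₂‖ ^ 2 - ⟪e, k₁ - k₂⟫ ^ 2) + σ * ⟪e, k₁ - k₂⟫ ^ 2)
          + 2 * H1 * ⟪e, k₁ - k₂⟫ * (⟪gradient ψ x, k₁⟫ + ⟪gradient ψ y, k₂⟫)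
          + 2 * (H0 * C + δ) * (‖k₁‖ ^ 2 + ‖k₂‖ ^ 2)) := by
  obtain ⟨r1, hr1, hHf⟩ := Metric.eventually_nhds_iff.1 hHf
  have hC := hB.const_nonneg
  set M := 2 * (|τ| + |σ|) with hM
  have hM0 : 0 ≤ M := by positivity
  set D := 2 * |H1| * C + 2 * M * C + 1 with hD
  have hDp : 0 < D := by positivity
  refine ⟨min (r1 / 4) (min 1 (δ / D)), by positivity, fun k₁ k₂ h1 h2 hk1 hk2 => ?_⟩
  set r0 := min (r1 / 4) (min 1 (δ / D)) with hr0
  have hr0p : 0 < r0 := by positivity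
  have hr01 : r0 ≤ r1 / 4 := min_le_left _ _
  have hr02 : r0 ≤ 1 := (min_le_right _ _).trans (min_le_left _ _)
  have hr03 : r0 ≤ δ / D := (min_le_right _ _).trans (min_le_right _ _)
  have hd : ‖k₁ - k₂‖ ≤ 2 * r0 := (norm_sub_le _ _).trans (by linarith)
  have ha : |⟪e, k₁ - k₂⟫| ≤ ‖k₁ - k₂‖ :=
    (abs_real_inner_le_norm _ _).trans (mul_le_of_le_one_left (norm_nonneg _) he)
  have hd2 : ‖k₁ - k₂‖ ^ 2 ≤ 2 * (‖k₁‖ ^ 2 + ‖k₂‖ ^ 2) := by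
    have := parallelogram_law_with_norm ℝ k₁ k₂
    have := mul_self_nonneg ‖k₁ + k₂‖
    simp only [sq]; linarith
  have ht1 := hB.taylor x hx (x + k₁) hk1
  have ht2 := hB.taylor y hy (y + k₂) hk2
  rw [add_sub_cancel_left] at ht1 ht2
  set n2 := ‖k₁‖ ^ 2 + ‖k₂‖ ^ 2 with hn2
  have hn20 : 0 ≤ n2 := by positivity
  set ℓ := ⟪gradient ψ x, k₁⟫ + ⟪gradient ψ y, k₂⟫ with hℓ
  have hℓ1 : |ℓ| ≤ 2 * C * r0 := by
    have g1 := (abs_real_inner_le_norm (gradient ψ x) k₁).trans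
      (mul_le_mul (hB.grad x hx) h1 (norm_nonneg _) hC)
    have g2 := (abs_real_inner_le_norm (gradient ψ y) k₂).trans
      (mul_le_mul (hB.grad y hy) h2 (norm_nonneg _) hC)
    have := abs_add_le ⟪gradient ψ x, k₁⟫ ⟪gradient ψ y, k₂⟫
    linarith
  have hn2r : n2 ≤ 2 * r0 := by
    have g1 : ‖k₁‖ ^ 2 ≤ r0 * 1 := by
      rw [sq]; exact mul_le_mul h1 (h1.trans hr02) (norm_nonneg _) hr0p.le
    have g2 : ‖k₂‖ ^ 2 ≤ r0 * 1 := by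
      rw [sq]; exact mul_le_mul h2 (h2.trans hr02) (norm_nonneg _) hr0p.le
    linarith
  set E := ψ (x + k₁) + ψ (y + k₂) - (ψ x + ψ y) - ℓ with hE
  have hE1 : |E| ≤ C * n2 := by
    have : E = (ψ (x + k₁) - ψ x - ⟪gradient ψ x, k₁⟫) + (ψ (y + k₂) - ψ y - ⟪gradient ψ y, k₂⟫) := by
      rw [hE, hℓ]; ring
    rw [this]
    refine (abs_add_le _ _).trans ?_
    rw [hn2]; linarith
  apply prod_exp_aux (E := E) (r0 := r0) (M := M) hn20 hC hr0p hH0 (ha.trans hd) hE1 ?_ ?_ ?_ ?_ ?_ ?_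
  · have ha2 : ⟪e, k₁ - k₂⟫ ^ 2 ≤ ‖k₁ - k₂‖ ^ 2 := by
      rw [← sq_abs]; exact pow_le_pow_left₀ (abs_nonneg _) ha 2
    refine (quad_abs_le ha2).trans ?_
    have := mul_le_mul_of_nonneg_left hd2 (by positivity : 0 ≤ |τ| + |σ|)
    rw [hM]; linarith
  · have h6 : C * n2 ≤ C * (2 * r0) := mul_le_mul_of_nonneg_left hn2r hC
    have := abs_add_le ℓ E
    linarith
  · rw [le_div_iff₀ hDp] at hr03
    have : (2 * |H1| * C + 2 * M * C) * r0 ≤ D * r0 :=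
      mul_le_mul_of_nonneg_right (by rw [hD]; linarith) hr0p.le
    linarith
  · rw [hE]; ring
  · have g1 := hB.one_le _ hk1
    have g2 := hB.one_le _ hk2
    linarith
  · have hlt : dist (k₁ - k₂) 0 < r1 := by rw [dist_zero_right]; linarith
    have := hHf hlt
    rwa [show x - y + (k₁ - k₂) = x + k₁ - (y + k₂) by abel] at this

end

/-! ### Structure estimate for the nonlinear operator -/

section
variable {N : ℕ}

lemma matNorm_le_of_unit {Y : Mat N} {C : ℝ} (hC : 0 ≤ C)
    (h : ∀ k l : EN N, ‖k‖ = 1 → ‖l‖ = 1 → ⟪Matrix.toEuclideanLin Y k, l⟫ ≤ C) : matNorm Y ≤ C := by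
  refine matNorm_le hC fun k l => ?_
  rcases eq_or_ne k 0 with rfl | hk
  · simp
  rcases eq_or_ne l 0 with rfl | hl
  · simp
  have hk' := norm_pos_iff.2 hk
  have hl' := norm_pos_iff.2 hl
  have hu : ∀ w : EN N, w ≠ 0 → ‖‖w‖⁻¹ • w‖ = 1 := fun w hw => by
    rw [norm_smul, norm_inv, norm_norm, inv_mul_cancel₀ (norm_ne_zero_iff.2 hw)]
  have := h (‖k‖⁻¹ • k) (‖l‖⁻¹ • l) (hu k hk) (hu l hl)
  rw [map_smul, real_inner_smul_left, real_inner_smul_right] at this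
  calc _ = (‖k‖⁻¹ * (‖l‖⁻¹ * ⟪Matrix.toEuclideanLin Y k, l⟫)) * (‖k‖ * ‖l‖) := by field_simp
    _ ≤ C * (‖k‖ * ‖l‖) := by gcongr
    _ = _ := by ring

lemma psd_inner_le {Z : Mat N} (hZ : Z.PosSemidef) {k l : EN N} (hk : ‖k‖ = 1) (hl : ‖l‖ = 1) :
    ⟪Matrix.toEuclideanLin Z k, l⟫ ≤ Z.trace := by
  have hs : Z.IsSymm := by
    have := hZ.isHermitian
    rwa [Matrix.IsHermitian, Matrix.conjTranspose_eq_transpose_of_trivial] at this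
  have h1 := qf_nonneg_of_posSemidef hZ (k - l)
  rw [qf_sub_arg hs] at h1
  have h2 := qf_le_trace hZ k
  have h3 := qf_le_trace hZ l
  rw [hk] at h2
  rw [hl] at h3
  linarith

/-- The matrix inequality of the doubling argument controls the norm of `Y` through the trace
of the difference `Y - X`. -/
lemma matNorm_bound {X Y : Mat N} (hX : X.IsSymm) (hY : Y.IsSymm) {J m σ : ℝ} (hJ : 0 ≤ J)
    (hm : 0 ≤ m) (hσ : 0 < σ) (hσ1 : σ ≤ 1)
    (hQ : ∀ k₁ k₂, qf X k₁ - qf Y k₂ ≤ J * ‖k₁ - k₂‖ ^ 2 + m * (‖k₁‖ ^ 2 + ‖k₂‖ ^ 2)) :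
    (Y - X + (2 * m) • (1 : Mat N)).PosSemidef ∧
      matNorm Y ≤ (Y - X + (2 * m) • (1 : Mat N)).trace / σ + σ * J + m := by
  set Z := Y - X + (2 * m) • (1 : Mat N) with hZdef
  have hqZ : ∀ k, qf Z k = qf Y k - qf X k + 2 * m * ‖k‖ ^ 2 := fun k => by
    rw [hZdef, qf_add, qf_sub, qf_smul, qf_one]
  have hZs : Z.IsSymm := (hY.sub hX).add (smul_one_isSymm _)
  have hZ : Z.PosSemidef := by
    refine posSemidef_of_qf hZs fun k => ?_
    have := hQ k k
    rw [hqZ]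
    simp at this
    linarith
  refine ⟨hZ, ?_⟩
  have ht : 0 ≤ Z.trace := hZ.trace_nonneg
  set t := Z.trace
  refine matNorm_le_of_unit (by positivity) fun k l hk hl => ?_
  have h1 := hQ (k + σ • l) (k - σ • l)
  rw [qf_add_arg hX, qf_sub_arg hY, qf_smul_arg, qf_smul_arg,
    show k + σ • l - (k - σ • l) = (2 * σ) • l by rw [two_mul, add_smul]; abel,
    norm_smul, hl, real_inner_smul_right, real_inner_smul_right] at h1
  have h2 : ‖k + σ • l‖ ^ 2 + ‖k - σ • l‖ ^ 2 = 2 * (1 + σ ^ 2) := by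
    have := parallelogram_law_with_norm ℝ k (σ • l)
    rw [norm_smul, hk, hl, Real.norm_of_nonneg hσ.le] at this
    simp only [sq]; linarith
  rw [h2, mul_one, Real.norm_of_nonneg (by positivity)] at h1
  have h3 := qf_le_trace hZ k
  have h4 := qf_le_trace hZ l
  have h5 := psd_inner_le hZ hk hl
  rw [hqZ, hk] at h3
  rw [hqZ, hl] at h4
  have h6 : ⟪Matrix.toEuclideanLin Z k, l⟫ = ⟪Matrix.toEuclideanLin Y k, l⟫
      - ⟪Matrix.toEuclideanLin X k, l⟫ + 2 * m * ⟪k, l⟫ := by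
    rw [hZdef]
    simp [inner_add_left, inner_sub_left, real_inner_smul_left, toEuclideanLin_one']
  have h7 : -1 ≤ ⟪k, l⟫ := by
    have := neg_le_of_abs_le (abs_real_inner_le_norm k l)
    rw [hk, hl] at this; linarith
  set yy := ⟪Matrix.toEuclideanLin Y k, l⟫
  set xx := ⟪Matrix.toEuclideanLin X k, l⟫
  have h8 : -(2 * m) ≤ 2 * m * ⟪k, l⟫ := by
    have := mul_le_mul_of_nonneg_left h7 (by linarith : 0 ≤ 2 * m); linarith
  have h9 : σ ^ 2 * (qf Y l - qf X l + 2 * m * 1 ^ 2) ≤ σ ^ 2 * (t * 1 ^ 2) :=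
    mul_le_mul_of_nonneg_left h4 (by positivity)
  have h10 : 2 * σ * (xx + yy) ≤ t + σ ^ 2 * t + 4 * σ ^ 2 * J := by linarith
  have h11 : σ ^ 2 * t ≤ 1 * t :=
    mul_le_mul_of_nonneg_right (pow_le_one₀ hσ.le hσ1) ht
  have h12 : xx + yy ≤ t / σ + 2 * (σ * J) := by
    have e : 2 * σ * (t / σ + 2 * (σ * J)) = 2 * t + 4 * σ ^ 2 * J := by field_simp; ring
    have : 2 * σ * (xx + yy) ≤ 2 * σ * (t / σ + 2 * (σ * J)) := by rw [e]; linarith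
    exact le_of_mul_le_mul_left this (by positivity)
  have h13 : t ≤ t / σ := by rw [le_div_iff₀ hσ]; exact mul_le_of_le_one_right ht hσ1
  linarith

/-- Passing from `(x, p, X)` to `(y, q, Y)` by changing the matrix (F2), the point (F3) and the
gradient (F4) in turn. -/
lemma fd_split {Ω : Set (EN N)} {α a A C₁ θ C₂ ν : ℝ} {F : EN N → EN N → Mat N → ℝ}
    (hF2 : CondF2 Ω α a A F) (hF3 : CondF3 Ω α C₁ θ F) (hF4 : CondF4 Ω α C₂ ν F)
    {x y p q : EN N} (hx : x ∈ closure Ω) (hy : y ∈ closure Ω) (hp : p ≠ 0)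
    (hpq : ‖p - q‖ ≤ ‖p‖ / 2) {X Y : Mat N} (hX : X.IsSymm) (hY : Y.IsSymm) {m : ℝ} (hm : 0 ≤ m)
    (hZ : (Y - X + (2 * m) • (1 : Mat N)).PosSemidef) :
    F x p X - F y q Y ≤ ‖p‖ ^ α * (A * (2 * m * N) - a * (Y - X + (2 * m) • (1 : Mat N)).trace
      + (C₁ * ‖x - y‖ ^ θ + C₂ * (‖p - q‖ / ‖p‖) ^ ν) * matNorm Y) := by
  have hpn := norm_pos_iff.2 hp
  have h1 := (hF2.2.2 x hx p hp X _ hX hZ).1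
  have h2 := (hF2.2.2 x hx p hp Y ((2 * m) • (1 : Mat N)) hY (smul_one_posSemidef (by linarith))).2
  rw [show X + (Y - X + (2 * m) • (1 : Mat N)) = Y + (2 * m) • (1 : Mat N) by abel] at h1
  rw [trace_smul_one] at h2
  have h3 := (abs_le.1 (hF3.2.2 x hx y hy p hp Y hY)).2
  have h4 := (abs_le.1 (hF4.2.2 y hy p hp (q - p) (by rwa [norm_sub_rev]) Y hY)).1
  rw [add_sub_cancel, norm_sub_rev q p] at h4
  have h5 : ‖p‖ ^ (α - ν) * ‖p - q‖ ^ ν = ‖p‖ ^ α * (‖p - q‖ / ‖p‖) ^ ν := by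
    rw [Real.rpow_sub hpn, Real.div_rpow (norm_nonneg _) (norm_nonneg _)]; field_simp
  have h6 : C₂ * ‖p‖ ^ (α - ν) * ‖p - q‖ ^ ν * matNorm Y
      = C₂ * (‖p‖ ^ α * (‖p - q‖ / ‖p‖) ^ ν) * matNorm Y := by rw [← h5]; ring
  rw [h6] at h4
  linarith

/-- Difference of the operator at the two points of the doubling argument. -/
lemma fd_core {Ω : Set (EN N)} {α a A C₁ θ C₂ ν : ℝ} {F : EN N → EN N → Mat N → ℝ}
    (hF2 : CondF2 Ω α a A F) (hF3 : CondF3 Ω α C₁ θ F) (hF4 : CondF4 Ω α C₂ ν F)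
    {κ : ℝ} (hκ : 1 ≤ κ) :
    ∃ r0 > 0, r0 ≤ 1 ∧ ∃ Cf : ℝ, 0 ≤ Cf ∧ ∀ x ∈ closure Ω, ∀ y ∈ closure Ω,
      ∀ (r s G : ℝ) (p q : EN N) (X Y : Mat N), 0 < r → r ≤ r0 → ‖x - y‖ ≤ 2 * r → 0 < s →
      s ≤ ‖p‖ → ‖p - q‖ ≤ κ * r * s → X.IsSymm → Y.IsSymm →
      (∀ k₁ k₂, qf X k₁ - qf Y k₂ ≤
        κ * (s / r) * ‖k₁ - k₂‖ ^ 2 + κ * r * s * (‖k₁‖ ^ 2 + ‖k₂‖ ^ 2)) →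
      0 ≤ G → (G = 0 ∨ ∃ e : EN N, ‖e‖ = 1 ∧ G ≤ qf Y e - qf X e) →
      F x p X - F y q Y ≤ ‖p‖ ^ α * (Cf * s * r ^ (2 * min θ ν - 1) - a / 2 * G) := by
  obtain ⟨ha, haA, -⟩ := id hF2
  obtain ⟨hC1, ⟨hθ0, hθ1⟩, -⟩ := id hF3
  obtain ⟨hC2, ⟨hν0, hν1⟩, -⟩ := id hF4
  set μ := min θ ν with hμ
  have hμ0 : 1 / 2 < μ := lt_min hθ0 hν0
  have hμ1 : μ ≤ 1 := (min_le_left _ _).trans hθ1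
  set C3 := 2 * C₁ + C₂ * κ with hC3
  have hC3p : 0 < C3 := by positivity
  set B := 2 * C3 / a with hB
  have hBp : 0 < B := by positivity
  -- `σ = B r ^ μ` has to be at most one
  set r0 := min (1 / (2 * κ)) (min 1 (B⁻¹ ^ (1 / μ))) with hr0
  have hr0p : 0 < r0 := by positivity
  refine ⟨r0, hr0p, (min_le_right _ _).trans (min_le_left _ _),
    A * (2 * κ * N) + C3 * B * κ + C3 * κ, by have : 0 < A := ha.trans_le haA; positivity, ?_⟩
  intro x hx y hy r s G p q X Y hr hrr0 hxy hs hsp hpq hX hY hQ hG0 hG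
  have hA : 0 < A := ha.trans_le haA
  have hr1 : r ≤ 1 := hrr0.trans ((min_le_right _ _).trans (min_le_left _ _))
  have hκr : κ * r ≤ 1 / 2 := by
    have h1 : r ≤ 1 / (2 * κ) := hrr0.trans (min_le_left _ _)
    calc κ * r ≤ κ * (1 / (2 * κ)) := by gcongr
      _ = 1 / 2 := by field_simp
  have hpn : 0 < ‖p‖ := hs.trans_le hsp
  have hp : p ≠ 0 := norm_pos_iff.1 hpn
  have hpq2 : ‖p - q‖ ≤ κ * r * ‖p‖ := hpq.trans (by gcongr)
  have hpq3 : ‖p - q‖ ≤ ‖p‖ / 2 := by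
    have := mul_le_mul_of_nonneg_right hκr hpn.le; linarith
  set σ := B * r ^ μ with hσ
  have hrμ : 0 < r ^ μ := Real.rpow_pos_of_pos hr _
  have hσp : 0 < σ := by positivity
  have hσ1 : σ ≤ 1 := by
    have h1 : r ≤ B⁻¹ ^ (1 / μ) := hrr0.trans ((min_le_right _ _).trans (min_le_right _ _))
    have h2 : r ^ μ ≤ B⁻¹ := by
      calc r ^ μ ≤ (B⁻¹ ^ (1 / μ)) ^ μ := Real.rpow_le_rpow hr.le h1 (by linarith)
        _ = B⁻¹ := by
          rw [← Real.rpow_mul (by positivity), one_div, inv_mul_cancel₀ (by linarith), Real.rpow_one]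
    calc B * r ^ μ ≤ B * B⁻¹ := by gcongr
      _ = 1 := mul_inv_cancel₀ hBp.ne'
  set m := κ * r * s with hm
  have hm0 : 0 ≤ m := by positivity
  obtain ⟨hZ, hYn⟩ := matNorm_bound hX hY (J := κ * (s / r)) (m := m) (by positivity) hm0 hσp hσ1 hQ
  have hsplit := fd_split hF2 hF3 hF4 hx hy hp hpq3 hX hY hm0 hZ
  set Z := Y - X + (2 * m) • (1 : Mat N) with hZdef
  have ht : 0 ≤ Z.trace := hZ.trace_nonneg
  set t := Z.trace
  have hGt : G ≤ t := by
    rcases hG with h | ⟨e, he, h⟩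
    · rw [h]; exact ht
    · have := qf_le_trace hZ e
      rw [hZdef, qf_add, qf_sub, qf_smul, qf_one, he] at this
      have : 0 ≤ 2 * m := by linarith
      linarith
  have hcoef : C₁ * ‖x - y‖ ^ θ + C₂ * (‖p - q‖ / ‖p‖) ^ ν ≤ C3 * r ^ μ := by
    have h1 : ‖x - y‖ ^ θ ≤ 2 * r ^ μ := by
      calc ‖x - y‖ ^ θ ≤ (2 * r) ^ θ := Real.rpow_le_rpow (norm_nonneg _) hxy (by linarith)
        _ = 2 ^ θ * r ^ θ := Real.mul_rpow (by norm_num) hr.le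
        _ ≤ 2 ^ (1 : ℝ) * r ^ μ := by
          exact mul_le_mul (Real.rpow_le_rpow_of_exponent_le (by norm_num) hθ1)
            (Real.rpow_le_rpow_of_exponent_ge hr hr1 (min_le_left _ _)) (by positivity)
            (by positivity)
        _ = _ := by rw [Real.rpow_one]
    have h2 : (‖p - q‖ / ‖p‖) ^ ν ≤ κ * r ^ μ := by
      calc (‖p - q‖ / ‖p‖) ^ ν ≤ (κ * r) ^ ν := by
            apply Real.rpow_le_rpow (by positivity) _ (by linarith)
            rwa [div_le_iff₀ hpn]
        _ = κ ^ ν * r ^ ν := Real.mul_rpow (by linarith) hr.le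
        _ ≤ κ ^ (1 : ℝ) * r ^ μ := by
          exact mul_le_mul (Real.rpow_le_rpow_of_exponent_le hκ hν1)
            (Real.rpow_le_rpow_of_exponent_ge hr hr1 (min_le_right _ _)) (by positivity)
            (by positivity)
        _ = _ := by rw [Real.rpow_one]
    calc _ ≤ C₁ * (2 * r ^ μ) + C₂ * (κ * r ^ μ) := by gcongr
      _ = _ := by rw [hC3]; ring
  have hη : r ^ (2 * μ - 1) = r ^ μ * r ^ μ / r := by
    rw [Real.rpow_sub hr, Real.rpow_one, two_mul, Real.rpow_add hr]
  have hprod : (C₁ * ‖x - y‖ ^ θ + C₂ * (‖p - q‖ / ‖p‖) ^ ν) * matNorm Y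
      ≤ a / 2 * t + C3 * B * κ * s * r ^ (2 * μ - 1) + C3 * r ^ μ * m := by
    calc _ ≤ C3 * r ^ μ * (t / σ + σ * (κ * (s / r)) + m) :=
          mul_le_mul hcoef hYn (matNorm_nonneg _) (by positivity)
      _ = _ := by rw [hη, hσ, hB]; field_simp
  have hrη : r ≤ r ^ (2 * μ - 1) := by
    have := Real.rpow_le_rpow_of_exponent_ge hr hr1 (show 2 * μ - 1 ≤ 1 by linarith)
    rwa [Real.rpow_one] at this
  have hmη : m ≤ κ * s * r ^ (2 * μ - 1) := by
    calc m = κ * s * r := by rw [hm]; ring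
      _ ≤ _ := by gcongr
  have hrμ1 : r ^ μ ≤ 1 := Real.rpow_le_one hr.le hr1 (by linarith)
  have h8 : C3 * r ^ μ * m ≤ C3 * 1 * (κ * s * r ^ (2 * μ - 1)) := by gcongr
  have h9 : A * (2 * m * N) ≤ A * (2 * (κ * s * r ^ (2 * μ - 1)) * N) := by gcongr
  refine hsplit.trans (mul_le_mul_of_nonneg_left ?_ (Real.rpow_nonneg hpn.le _))
  have h10 : a * G ≤ a * t := mul_le_mul_of_nonneg_left hGt ha.le
  linarith

/-- `t ↦ t ^ α` is Lipschitz near `1`. -/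
lemma rpow_lip (α : ℝ) : ∃ C : ℝ, 0 ≤ C ∧ ∀ t ∈ Icc (1 / 2 : ℝ) (3 / 2), |t ^ α - 1| ≤ C * |t - 1| := by
  have hd : ∀ t ∈ Icc (1 / 2 : ℝ) (3 / 2), HasDerivWithinAt (fun t : ℝ => t ^ α) (α * t ^ (α - 1))
      (Icc (1 / 2 : ℝ) (3 / 2)) t := fun t ht =>
    (Real.hasDerivAt_rpow_const (Or.inl (by linarith [ht.1]))).hasDerivWithinAt
  have hc : ContinuousOn (fun t : ℝ => α * t ^ (α - 1)) (Icc (1 / 2 : ℝ) (3 / 2)) := by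
    refine continuousOn_const.mul (continuousOn_id.rpow_const fun t ht => Or.inl ?_)
    have := ht.1
    simp only [id]; linarith
  obtain ⟨C, hC⟩ := isCompact_Icc.exists_bound_of_continuousOn hc
  have h1 : (1 : ℝ) ∈ Icc (1 / 2 : ℝ) (3 / 2) := by constructor <;> norm_num
  refine ⟨C, (norm_nonneg _).trans (hC 1 h1), fun t ht => ?_⟩
  have := (convex_Icc (1 / 2 : ℝ) (3 / 2)).norm_image_sub_le_of_norm_hasDerivWithin_le hd hC h1 ht
  simpa using this

/-- Difference of the drift terms at the two points of the doubling argument. -/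
lemma drift_diff (α : ℝ) : ∃ C : ℝ, 0 ≤ C ∧ ∀ b₁ b₂ p q : EN N, p ≠ 0 → ‖p - q‖ ≤ ‖p‖ / 2 →
    ⟪b₁, p⟫ * ‖p‖ ^ α - ⟪b₂, q⟫ * ‖q‖ ^ α
      ≤ ‖p‖ ^ α * (‖b₁ - b₂‖ * ‖p‖ + C * ‖b₂‖ * ‖p - q‖) := by
  obtain ⟨C, hC, h⟩ := rpow_lip α
  refine ⟨1 + 2 * C, by positivity, fun b₁ b₂ p q hp hpq => ?_⟩
  have hpn := norm_pos_iff.2 hp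
  have hd : |‖q‖ - ‖p‖| ≤ ‖p - q‖ := by rw [norm_sub_rev]; exact abs_norm_sub_norm_le q p
  have hd' := abs_le.1 hd
  have ht : ‖q‖ / ‖p‖ ∈ Icc (1 / 2 : ℝ) (3 / 2) := by
    constructor
    · rw [le_div_iff₀ hpn]; linarith
    · rw [div_le_iff₀ hpn]; linarith
  have h1 := h _ ht
  rw [Real.div_rpow (norm_nonneg _) hpn.le] at h1
  have hpα : 0 < ‖p‖ ^ α := Real.rpow_pos_of_pos hpn _
  have e2 : |‖q‖ ^ α / ‖p‖ ^ α - 1| = |‖q‖ ^ α - ‖p‖ ^ α| / ‖p‖ ^ α := by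
    rw [← abs_of_pos hpα, ← abs_div, abs_of_pos hpα]; congr 1; field_simp
  have e3 : |‖q‖ / ‖p‖ - 1| = |‖q‖ - ‖p‖| / ‖p‖ := by
    rw [← abs_of_pos hpn, ← abs_div, abs_of_pos hpn]; congr 1; field_simp
  rw [e2, e3, div_le_iff₀ hpα] at h1
  have h2 : |‖q‖ ^ α - ‖p‖ ^ α| ≤ C * (‖p - q‖ / ‖p‖) * ‖p‖ ^ α := h1.trans (by gcongr)
  have hq : ‖q‖ ≤ 2 * ‖p‖ := by linarith
  have h3 : ⟪b₁ - b₂, p⟫ ≤ ‖b₁ - b₂‖ * ‖p‖ := real_inner_le_norm _ _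
  have h4 : ⟪b₂, p - q⟫ ≤ ‖b₂‖ * ‖p - q‖ := real_inner_le_norm _ _
  have h5 : ⟪b₂, q⟫ * (‖p‖ ^ α - ‖q‖ ^ α) ≤ ‖p‖ ^ α * (2 * C * ‖b₂‖ * ‖p - q‖) := by
    calc _ ≤ |⟪b₂, q⟫ * (‖p‖ ^ α - ‖q‖ ^ α)| := le_abs_self _
      _ = |⟪b₂, q⟫| * |‖q‖ ^ α - ‖p‖ ^ α| := by rw [abs_mul, abs_sub_comm (‖p‖ ^ α)]
      _ ≤ (‖b₂‖ * (2 * ‖p‖)) * (C * (‖p - q‖ / ‖p‖) * ‖p‖ ^ α) := by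
        gcongr
        exact (abs_real_inner_le_norm _ _).trans (by gcongr)
      _ = _ := by field_simp
  have h6 := mul_le_mul_of_nonneg_left h3 hpα.le
  have h7 := mul_le_mul_of_nonneg_left h4 hpα.le
  rw [inner_sub_left] at h6
  rw [inner_sub_right] at h7
  linarith

end

/-! ### The doubling lemma -/

section
variable {N : ℕ}

/-- The standing assumptions on the domain and the coefficients. -/
structure Std (Ω : Set (EN N)) (nv : EN N → EN N) (α a A C₁ θ C₂ ν : ℝ)
    (F : EN N → EN N → Mat N → ℝ) (b : EN N → EN N) (c g : EN N → ℝ) : Prop where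
  dom : IsC2Domain Ω nv
  hα : -1 < α
  f1 : CondF1 Ω α F
  f2 : CondF2 Ω α a A F
  f3 : CondF3 Ω α C₁ θ F
  f4 : CondF4 Ω α C₂ ν F
  bc : ContinuousOn b (closure Ω)
  cc : ContinuousOn c (closure Ω)
  gc : ContinuousOn g (closure Ω)
  neg : ∀ x ∈ closure Ω, c x < 0

/-- The operator governing the equation of `-v` when `v` solves the equation of `F`. -/
def dualF (F : EN N → EN N → Mat N → ℝ) : EN N → EN N → Mat N → ℝ := fun x p X => -F x (-p) (-X)

/-- The subsolution inequality for nonzero gradients in terms of second order superjets; at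
boundary points it is only required of superjets with outward pointing gradient. -/
def JetSub (Ω : Set (EN N)) (nv : EN N → EN N) (α : ℝ) (F : EN N → EN N → Mat N → ℝ)
    (b : EN N → EN N) (c g u : EN N → ℝ) : Prop :=
  ∀ x ∈ closure Ω, ∀ p, p ≠ 0 → ∀ X : Mat N, X.IsSymm → MJet (closure Ω) u x p X →
    (x ∈ frontier Ω → 0 < ⟪p, nv x⟫) →
    g x ≤ F x p X + ⟪b x, p⟫ * ‖p‖ ^ α + c x * |u x| ^ α * u x

/-- The quadratic form of the expansion of the doubling penalty. -/
def Qd (S H1 τ σ D : ℝ) (e g₁ g₂ : EN N) (k₁ k₂ : EN N) : ℝ :=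
  S * (τ * (‖k₁ - k₂‖ ^ 2 - ⟪e, k₁ - k₂⟫ ^ 2) + σ * ⟪e, k₁ - k₂⟫ ^ 2)
    + 2 * H1 * ⟪e, k₁ - k₂⟫ * (⟪g₁, k₁⟫ + ⟪g₂, k₂⟫) + 2 * D * (‖k₁‖ ^ 2 + ‖k₂‖ ^ 2)

lemma Qd_quad (S H1 τ σ D : ℝ) (e g₁ g₂ : EN N) :
    ∃ B : WithLp 2 (EN N × EN N) →L[ℝ] WithLp 2 (EN N × EN N), ∀ k₁ k₂,
      Qd S H1 τ σ D e g₁ g₂ k₁ k₂ = ⟪B (pr k₁ k₂), pr k₁ k₂⟫ := by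
  set p1 : WithLp 2 (EN N × EN N) →L[ℝ] EN N := WithLp.fstL 2 ℝ (EN N) (EN N)
  set p2 : WithLp 2 (EN N × EN N) →L[ℝ] EN N := WithLp.sndL 2 ℝ (EN N) (EN N)
  have q1 := isQuad_norm_sq (p1 - p2)
  have q2 := isQuad_mul (innerSL ℝ e ∘L (p1 - p2)) (innerSL ℝ e ∘L (p1 - p2))
  have q3 := isQuad_mul (innerSL ℝ e ∘L (p1 - p2)) (innerSL ℝ g₁ ∘L p1 + innerSL ℝ g₂ ∘L p2)
  have q4 := (isQuad_norm_sq p1).add (isQuad_norm_sq p2)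
  obtain ⟨B, hB⟩ := (((q1.const_mul (S * τ)).add (q2.const_mul (S * (σ - τ)))).add
    (q3.const_mul (2 * H1))).add (q4.const_mul (2 * D))
  refine ⟨B, fun k₁ k₂ => ?_⟩
  rw [← hB]
  simp only [Qd, sub_apply, add_apply, ContinuousLinearMap.comp_apply, innerSL_apply_apply]
  have e1 : p1 (pr k₁ k₂) = k₁ := rfl
  have e2 : p2 (pr k₁ k₂) = k₂ := rfl
  rw [e1, e2]
  ring

lemma Qd_le_aux {S κ H1 r H0 C σ a ℓ d2 n2 : ℝ} (hS : 0 ≤ S) (hS4 : S ≤ 4) (hκ : 1 ≤ κ) (hr : 0 < r)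
    (hH1 : 0 < H1) (hC : 0 ≤ C) (hH0 : H0 ≤ κ * r * H1) (hσ : σ ≤ κ * H1 / r) (ha : a ^ 2 ≤ d2)
    (hℓ : ℓ ^ 2 ≤ 2 * C ^ 2 * n2) (hn2 : 0 ≤ n2) :
    S * (κ * H1 / r * (d2 - a ^ 2) + σ * a ^ 2) + 2 * H1 * a * ℓ + 2 * (H0 * C + r * H1) * n2
      ≤ (4 * κ + 1) * (H1 / r) * d2 + (2 * C ^ 2 + 2 * κ * C + 2) * r * H1 * n2 := by
  have ha0 := sq_nonneg a
  have hd0 : 0 ≤ d2 := ha0.trans ha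
  have h1 : κ * H1 / r * (d2 - a ^ 2) + σ * a ^ 2 ≤ κ * H1 / r * d2 := by
    have := mul_le_mul_of_nonneg_right hσ ha0; linarith
  have h2 : S * (κ * H1 / r * (d2 - a ^ 2) + σ * a ^ 2) ≤ 4 * (κ * H1 / r * d2) :=
    (mul_le_mul_of_nonneg_left h1 hS).trans (mul_le_mul_of_nonneg_right hS4 (by positivity))
  have h3 : 2 * H1 * a * ℓ ≤ H1 / r * a ^ 2 + H1 * r * ℓ ^ 2 := by
    have : 0 ≤ H1 / r * (a - r * ℓ) ^ 2 := by positivity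
    have e : H1 / r * (a - r * ℓ) ^ 2 = H1 / r * a ^ 2 + H1 * r * ℓ ^ 2 - 2 * H1 * a * ℓ := by
      field_simp; ring
    linarith
  have h4 : H1 / r * a ^ 2 ≤ H1 / r * d2 := by gcongr
  have h5 : H1 * r * ℓ ^ 2 ≤ H1 * r * (2 * C ^ 2 * n2) := by gcongr
  have h6 : H0 * C * n2 ≤ κ * r * H1 * C * n2 := by gcongr
  have e : (4 * κ + 1) * (H1 / r) * d2 = 4 * (κ * H1 / r * d2) + H1 / r * d2 := by ring
  rw [e]
  linarith

/-- The upper bound that controls the matrices of the doubling argument: a large multiple of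
`‖k₁ - k₂‖ ^ 2` and an error of order `r H1`. -/
lemma Qd_le {S κ H1 r H0 C σ : ℝ} {e g₁ g₂ : EN N} (hS : 0 ≤ S) (hS4 : S ≤ 4) (hκ : 1 ≤ κ)
    (hr : 0 < r) (hH1 : 0 < H1) (hC : 0 ≤ C) (hH0 : H0 ≤ κ * r * H1) (hσ : σ ≤ κ * H1 / r)
    (he : ‖e‖ ≤ 1) (hg₁ : ‖g₁‖ ≤ C) (hg₂ : ‖g₂‖ ≤ C) (k₁ k₂ : EN N) :
    Qd S H1 (κ * H1 / r) σ (H0 * C + r * H1) e g₁ g₂ k₁ k₂ ≤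
      (4 * κ + 1) * (H1 / r) * ‖k₁ - k₂‖ ^ 2
        + (2 * C ^ 2 + 2 * κ * C + 2) * r * H1 * (‖k₁‖ ^ 2 + ‖k₂‖ ^ 2) := by
  refine Qd_le_aux hS hS4 hκ hr hH1 hC hH0 hσ ?_ ?_ (by positivity)
  · rw [← sq_abs]
    exact pow_le_pow_left₀ (abs_nonneg _) ((abs_real_inner_le_norm _ _).trans
      (mul_le_of_le_one_left (norm_nonneg _) he)) 2
  · have h1 : |⟪g₁, k₁⟫ + ⟪g₂, k₂⟫| ≤ C * (‖k₁‖ + ‖k₂‖) := by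
      have g1 := (abs_real_inner_le_norm g₁ k₁).trans
        (mul_le_mul_of_nonneg_right hg₁ (norm_nonneg _))
      have g2 := (abs_real_inner_le_norm g₂ k₂).trans
        (mul_le_mul_of_nonneg_right hg₂ (norm_nonneg _))
      have := abs_add_le ⟪g₁, k₁⟫ ⟪g₂, k₂⟫
      linarith
    calc _ = |⟪g₁, k₁⟫ + ⟪g₂, k₂⟫| ^ 2 := (sq_abs _).symm
      _ ≤ (C * (‖k₁‖ + ‖k₂‖)) ^ 2 := pow_le_pow_left₀ (abs_nonneg _) h1 2
      _ = C ^ 2 * (‖k₁‖ + ‖k₂‖) ^ 2 := by ring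
      _ ≤ C ^ 2 * (2 * (‖k₁‖ ^ 2 + ‖k₂‖ ^ 2)) := by
        gcongr; linarith [sq_nonneg (‖k₁‖ - ‖k₂‖)]
      _ = _ := by ring

/-- In the direction `(e, -e)` the form inherits the second derivative `σ ≤ 0` of the penalty along
`e`. This is the source of the gain for concave penalties. -/
lemma Qd_dir {S κ H1 r H0 C σ : ℝ} {e g₁ g₂ : EN N} (hS : 2 ≤ S) (hr1 : r ≤ 1)
    (hH1 : 0 < H1) (hC : 0 ≤ C) (hκ : 1 ≤ κ) (hH0 : H0 ≤ κ * r * H1) (hσ : σ ≤ 0)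
    (he : ‖e‖ = 1) (hg₁ : ‖g₁‖ ≤ C) (hg₂ : ‖g₂‖ ≤ C) :
    Qd S H1 (κ * H1 / r) σ (H0 * C + r * H1) e g₁ g₂ e (-e) ≤
      8 * σ + (8 * C + 4 * κ * C + 4) * H1 := by
  have h1 : ⟪e, e⟫ = 1 := by rw [real_inner_self_eq_norm_sq, he]; norm_num
  have h2 : e - -e = (2 : ℝ) • e := by rw [two_smul]; abel
  rw [Qd, h2, norm_neg, norm_smul, real_inner_smul_right, h1, he]
  have g1 := (abs_le.1 ((abs_real_inner_le_norm g₁ e).trans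
    (mul_le_mul_of_nonneg_right hg₁ (norm_nonneg _)))).2
  have g2 := (abs_le.1 ((abs_real_inner_le_norm g₂ (-e)).trans
    (mul_le_mul_of_nonneg_right hg₂ (norm_nonneg _)))).2
  rw [norm_neg, he] at g2
  rw [he] at g1
  have h3 : H1 * (⟪g₁, e⟫ + ⟪g₂, -e⟫) ≤ H1 * (2 * C) := by gcongr; linarith
  have h4 : H0 * C ≤ κ * H1 * C := by
    gcongr
    calc H0 ≤ κ * r * H1 := hH0
      _ ≤ κ * 1 * H1 := by gcongr
      _ = _ := by ring
  have h5 : r * H1 ≤ 1 * H1 := by gcongr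
  have h6 : S * σ ≤ 2 * σ := mul_le_mul_of_nonpos_right hS hσ
  rw [inner_neg_right] at h3
  norm_num
  linarith

lemma rpow_pinch (α : ℝ) : ∃ k K : ℝ, 0 < k ∧ 0 < K ∧ ∀ s p : ℝ, 0 < s → s ≤ p → p ≤ 6 * s →
    k * s ^ α ≤ p ^ α ∧ p ^ α ≤ K * s ^ α := by
  refine ⟨6 ^ (-|α|), 6 ^ |α|, by positivity, by positivity, fun s p hs h1 h2 => ?_⟩
  have hp : p = p / s * s := by field_simp
  have ht1 : 1 ≤ p / s := by rwa [le_div_iff₀ hs, one_mul]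
  have ht6 : p / s ≤ 6 := by rwa [div_le_iff₀ hs]
  have hsα : 0 < s ^ α := Real.rpow_pos_of_pos hs _
  have e : p ^ α = (p / s) ^ α * s ^ α := by
    rw [← Real.mul_rpow (by positivity) hs.le, ← hp]
  rw [e]
  constructor
  · apply mul_le_mul_of_nonneg_right _ hsα.le
    calc (6 : ℝ) ^ (-|α|) ≤ (p / s) ^ (-|α|) :=
          Real.rpow_le_rpow_of_nonpos (by linarith) ht6 (by simp)
      _ ≤ _ := Real.rpow_le_rpow_of_exponent_le ht1 (neg_abs_le α)
  · apply mul_le_mul_of_nonneg_right _ hsα.le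
    calc (p / s) ^ α ≤ (p / s) ^ |α| := Real.rpow_le_rpow_of_exponent_le ht1 (le_abs_self α)
      _ ≤ _ := Real.rpow_le_rpow (by linarith) ht6 (abs_nonneg _)

end

section
variable {N : ℕ}

lemma abs_rpow_mul_self {α : ℝ} (hα : -1 < α) (r : ℝ) : |(|r| ^ α * r)| = |r| ^ (α + 1) := by
  rcases eq_or_ne r 0 with rfl | hr
  · rw [mul_zero, abs_zero, Real.zero_rpow (by linarith)]
  · have h := abs_pos.2 hr
    rw [abs_mul, abs_of_nonneg (Real.rpow_nonneg (abs_nonneg r) α), Real.rpow_add h, Real.rpow_one]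

/-- The zero order nonlinearity is continuous also at `0`, where `|r| ^ α` may be singular. -/
lemma continuous_ph {α : ℝ} (hα : -1 < α) : Continuous fun r : ℝ => |r| ^ α * r := by
  rw [continuous_iff_continuousAt]
  intro r
  rcases eq_or_ne r 0 with rfl | hr
  · have h : Tendsto (fun r : ℝ => |r| ^ (α + 1)) (𝓝 0) (𝓝 0) := by
      have h1 : ContinuousAt (fun r : ℝ => |r| ^ (α + 1)) 0 :=
        continuous_abs.continuousAt.rpow_const (Or.inr (by linarith))
      have h2 := h1.tendsto
      simp only [abs_zero] at h2
      rwa [Real.zero_rpow (by linarith)] at h2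
    rw [ContinuousAt, mul_zero]
    refine squeeze_zero_norm (fun r => ?_) h
    rw [Real.norm_eq_abs, abs_rpow_mul_self hα]
  · exact (continuous_abs.continuousAt.rpow_const (Or.inl (abs_ne_zero.2 hr))).mul continuousAt_id

lemma strictMono_ph {α : ℝ} (hα : -1 < α) : StrictMono fun r : ℝ => |r| ^ α * r := by
  have hpos : ∀ r : ℝ, 0 ≤ r → |r| ^ α * r = r ^ (α + 1) := by
    intro r hr
    have h := abs_rpow_mul_self hα r
    rw [abs_of_nonneg (mul_nonneg (Real.rpow_nonneg (abs_nonneg r) α) hr)] at h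
    rw [h, abs_of_nonneg hr]
  have hneg : ∀ r : ℝ, r ≤ 0 → |r| ^ α * r = -(-r) ^ (α + 1) := by
    intro r hr
    have h := hpos (-r) (by linarith)
    rw [abs_neg] at h
    linarith
  intro r s hrs
  beta_reduce
  rcases le_total 0 r with hr | hr
  · rw [hpos r hr, hpos s (by linarith)]
    exact Real.rpow_lt_rpow hr hrs (by linarith)
  · rcases le_total s 0 with hs | hs
    · rw [hneg r hr, hneg s hs]
      have := Real.rpow_lt_rpow (by linarith : 0 ≤ -s) (neg_lt_neg hrs)
        (by linarith : 0 < α + 1)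
      linarith
    · rw [hneg r hr, hpos s hs]
      have h1 : 0 ≤ s ^ (α + 1) := Real.rpow_nonneg hs _
      have h2 : 0 ≤ (-r) ^ (α + 1) := Real.rpow_nonneg (by linarith) _
      rcases hr.lt_or_eq with h | h
      · have := Real.rpow_pos_of_pos (by linarith : 0 < -r) (α + 1); linarith
      · have := Real.rpow_pos_of_pos (by linarith : 0 < s) (α + 1); linarith

lemma MJet.of_UJet {K : Set (EN N)} {f : EN N → ℝ} {x p : EN N} {B : EN N →L[ℝ] EN N} {X : Mat N}
    (h : UJet K f x p B) (hX : ∀ k, qf X k = ⟪B k, k⟫) : MJet K f x p X := by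
  filter_upwards [h] with x' hx'
  rw [hX]; exact hx'

/-- At boundary points the gradient of the penalty points strictly outwards, so that the Neumann
condition is never the one that holds there. -/
lemma bdry_pos {Ω : Set (EN N)} {nv : EN N → EN N} {q : ℕ} {ψ : EN N → ℝ} {C : ℝ}
    (hB : Barrier Ω nv q ψ C) {x y : EN N} (hx : x ∈ frontier Ω) (hy : y ∈ closure Ω)
    (hxy : y ≠ x) {S H0 H1 : ℝ} (hS : 2 ≤ S) (hS4 : S ≤ 4) (hH1 : 0 < H1)
    (hH0 : ‖x - y‖ * H1 / q ≤ H0) :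
    0 < ⟪(H1 * S) • (‖x - y‖⁻¹ • (x - y)) + H0 • gradient ψ x, nv x⟫ := by
  have hr : 0 < ‖x - y‖ := norm_pos_iff.2 (sub_ne_zero.2 hxy.symm)
  have h1 := hB.bdry x hx y hy hxy S hS hS4
  have h2 := mul_le_mul_of_nonneg_right hH0 (hB.nrm x hx)
  rw [inner_add_left, real_inner_smul_left, real_inner_smul_left, real_inner_smul_left]
  have h3 : 0 < H1 / ‖x - y‖ * (S * ⟪x - y, nv x⟫ + ‖x - y‖ ^ 2 / q * ⟪gradient ψ x, nv x⟫) := by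
    positivity
  have h4 : H1 / ‖x - y‖ * (S * ⟪x - y, nv x⟫ + ‖x - y‖ ^ 2 / q * ⟪gradient ψ x, nv x⟫)
      = H1 * S * (‖x - y‖⁻¹ * ⟪x - y, nv x⟫)
        + ‖x - y‖ * H1 / q * ⟪gradient ψ x, nv x⟫ := by
    field_simp
  linarith

/-- Jets of `u` and `w` near a maximum point `(x, y)`, `x ≠ y`, of the doubled function. The
barrier `ψ` makes both gradients point outwards at boundary points. -/
lemma dbl_jets {Ω : Set (EN N)} {nv : EN N → EN N} (hΩ : IsC2Domain Ω nv) {q : ℕ} {ψ : EN N → ℝ}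
    {C : ℝ} (hB : Barrier Ω nv q ψ C) {u w : EN N → ℝ}
    (hu : UpperSemicontinuousOn u (closure Ω)) (hw : UpperSemicontinuousOn w (closure Ω))
    {x y : EN N} (hx : x ∈ closure Ω) (hy : y ∈ closure Ω) (hxy : x ≠ y)
    {Hf : EN N → ℝ} {H0 H1 τ σ δ : ℝ} (hH1 : 0 < H1) (hH0 : ‖x - y‖ * H1 / q ≤ H0) (hδ : 0 < δ)
    (hHf : ∀ᶠ d in 𝓝 (0 : EN N), Hf (x - y + d) ≤
      H0 + H1 * ⟪‖x - y‖⁻¹ • (x - y), d⟫ + 1 / 2 * (τ * (‖d‖ ^ 2 - ⟪‖x - y‖⁻¹ • (x - y), d⟫ ^ 2)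
        + σ * ⟪‖x - y‖⁻¹ • (x - y), d⟫ ^ 2))
    (hmax : ∀ᶠ z in 𝓝 (x, y), z.1 ∈ closure Ω → z.2 ∈ closure Ω →
      u z.1 + w z.2 - Hf (z.1 - z.2) * (ψ z.1 + ψ z.2) ≤ u x + w y - H0 * (ψ x + ψ y))
    {ε : ℝ} (hε : 0 < ε) :
    ∃ (x' y' p₁ p₂ : EN N) (X Z : Mat N), x' ∈ closure Ω ∧ y' ∈ closure Ω ∧ ‖x' - x‖ ≤ ε ∧
      ‖y' - y‖ ≤ ε ∧
      ‖p₁ - ((H1 * (ψ x + ψ y)) • (‖x - y‖⁻¹ • (x - y)) + H0 • gradient ψ x)‖ ≤ ε ∧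
      ‖p₂ - (-((H1 * (ψ x + ψ y)) • (‖x - y‖⁻¹ • (x - y))) + H0 • gradient ψ y)‖ ≤ ε ∧
      |u x' - u x| ≤ ε ∧ |w y' - w y| ≤ ε ∧ X.IsSymm ∧ Z.IsSymm ∧
      MJet (closure Ω) u x' p₁ X ∧ MJet (closure Ω) w y' p₂ Z ∧
      (x' ∈ frontier Ω → 0 < ⟪p₁, nv x'⟫) ∧ (y' ∈ frontier Ω → 0 < ⟪p₂, nv y'⟫) ∧
      ∀ k₁ k₂, qf X k₁ + qf Z k₂ ≤
        Qd (ψ x + ψ y) H1 τ σ (H0 * C + δ) (‖x - y‖⁻¹ • (x - y)) (gradient ψ x) (gradient ψ y) k₁ k₂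
          + ε * (‖k₁‖ ^ 2 + ‖k₂‖ ^ 2) := by
  have hr : 0 < ‖x - y‖ := norm_pos_iff.2 (sub_ne_zero.2 hxy)
  have hH0' : 0 ≤ H0 := le_trans (by positivity) hH0
  have hS1 : 2 ≤ ψ x + ψ y := by linarith [hB.one_le x hx, hB.one_le y hy]
  have hS2 : ψ x + ψ y ≤ 4 := by linarith [hB.le_two x hx, hB.le_two y hy]
  have hP1 := fun h : x ∈ frontier Ω => bdry_pos hB h hy hxy.symm hS1 hS2 hH1 hH0
  have hP2 : y ∈ frontier Ω → 0 < ⟪-((H1 * (ψ x + ψ y)) • (‖x - y‖⁻¹ • (x - y)))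
      + H0 • gradient ψ y, nv y⟫ := by
    intro h
    have := bdry_pos (H0 := H0) hB h hx hxy hS1 hS2 hH1 (by rwa [norm_sub_rev])
    rwa [norm_sub_rev, ← neg_sub x y, smul_neg, smul_neg] at this
  have hen : ‖‖x - y‖⁻¹ • (x - y)‖ ≤ 1 := by
    rw [norm_smul, norm_inv, norm_norm, inv_mul_cancel₀ hr.ne']
  set e := ‖x - y‖⁻¹ • (x - y) with he
  obtain ⟨r1, hr1, hexp⟩ := prod_exp hB hx hy hen hH0' hδ hHf
  obtain ⟨r2, hr2, hmax⟩ := Metric.eventually_nhds_iff.1 hmax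
  obtain ⟨ε1, hε1, hst1⟩ := normal_stable hΩ hP1
  obtain ⟨ε2, hε2, hst2⟩ := normal_stable hΩ hP2
  obtain ⟨B, hBq⟩ := Qd_quad (ψ x + ψ y) H1 τ σ (H0 * C + δ) e (gradient ψ x) (gradient ψ y)
  obtain ⟨x', y', p₁, p₂, B₁, B₂, h1, h2, h3, h4, h5, h6, h7, h8, h9, h10, h11⟩ :=
    wst (dom_compact hΩ) hu hw hx hy ((H1 * (ψ x + ψ y)) • e + H0 • gradient ψ x)
      (-((H1 * (ψ x + ψ y)) • e) + H0 • gradient ψ y) B (lt_min hr1 (half_pos hr2))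
      (fun k₁ k₂ hk1 hk2 hx1 hy1 => by
        have m1 := hexp k₁ k₂ (hk1.trans (min_le_left _ _)) (hk2.trans (min_le_left _ _)) hx1 hy1
        have m2 := @hmax (x + k₁, y + k₂) (by
          rw [Prod.dist_eq]
          apply max_lt
          · simp only [dist_self_add_left]; linarith [hk1.trans (min_le_right _ _)]
          · simp only [dist_self_add_left]; linarith [hk2.trans (min_le_right _ _)]) hx1 hy1
        rw [← hBq, Qd, inner_add_left, inner_add_left, inner_neg_left, real_inner_smul_left e k₁,
          real_inner_smul_left e k₂, real_inner_smul_left (gradient ψ x),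
          real_inner_smul_left (gradient ψ y)]
        simp only [] at m2
        have e1 : H1 * (ψ x + ψ y) * ⟪e, k₁ - k₂⟫ = H1 * (ψ x + ψ y) * ⟪e, k₁⟫
          - H1 * (ψ x + ψ y) * ⟪e, k₂⟫ := by rw [inner_sub_right]; ring
        rw [e1] at m1
        linarith) (lt_min hε (lt_min hε1 hε2))
  have l1 : min ε (min ε1 ε2) ≤ ε := min_le_left _ _
  have l2 : min ε (min ε1 ε2) ≤ ε1 := (min_le_right _ _).trans (min_le_left _ _)
  have l3 : min ε (min ε1 ε2) ≤ ε2 := (min_le_right _ _).trans (min_le_right _ _)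
  obtain ⟨X, hX, hXq⟩ := exists_symm_mat B₁
  obtain ⟨Z, hZ, hZq⟩ := exists_symm_mat B₂
  refine ⟨x', y', p₁, p₂, X, Z, h1, h2, h3.trans l1, h4.trans l1, h5.trans l1, h6.trans l1,
    h7.trans l1, h8.trans l1, hX, hZ, .of_UJet h9 hXq, .of_UJet h10 hZq,
    hst1 x' p₁ (h3.trans l2) (h5.trans l2), hst2 y' p₂ (h4.trans l3) (h6.trans l3),
    fun k₁ k₂ => ?_⟩
  rw [hXq, hZq, hBq]
  refine (h11 k₁ k₂).trans ?_
  gcongr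

/-- The pair of jet inequalities combined with the structure conditions. -/
lemma jets_ineq {Ω : Set (EN N)} {nv : EN N → EN N} {α a A C₁ θ C₂ ν : ℝ}
    {F : EN N → EN N → Mat N → ℝ} {b : EN N → EN N} {c g : EN N → ℝ}
    (hS : Std Ω nv α a A C₁ θ C₂ ν F b c g) {κ : ℝ} (hκ : 1 ≤ κ) :
    ∃ r0 > 0, r0 ≤ 1 ∧ ∃ C k : ℝ, 0 ≤ C ∧ 0 < k ∧ ∀ u w : EN N → ℝ,
      JetSub Ω nv α F b c g u → JetSub Ω nv α (dualF F) b c (fun x => -g x) w →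
      ∀ x ∈ closure Ω, ∀ y ∈ closure Ω, ∀ (r s G : ℝ) (p₁ p₂ : EN N) (X Z : Mat N),
      0 < r → r ≤ r0 → ‖x - y‖ ≤ 2 * r → 0 < s → s ≤ ‖p₁‖ → ‖p₁‖ ≤ 6 * s →
      ‖p₁ + p₂‖ ≤ κ * r * s → X.IsSymm → Z.IsSymm →
      MJet (closure Ω) u x p₁ X → MJet (closure Ω) w y p₂ Z →
      (x ∈ frontier Ω → 0 < ⟪p₁, nv x⟫) → (y ∈ frontier Ω → 0 < ⟪p₂, nv y⟫) →
      (∀ k₁ k₂, qf X k₁ + qf Z k₂ ≤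
        κ * (s / r) * ‖k₁ - k₂‖ ^ 2 + κ * r * s * (‖k₁‖ ^ 2 + ‖k₂‖ ^ 2)) →
      0 ≤ G → (G = 0 ∨ ∃ e : EN N, ‖e‖ = 1 ∧ qf X e + qf Z e ≤ -G) →
      g x - g y ≤ c x * (|u x| ^ α * u x) + c y * (|w y| ^ α * w y)
        + C * s ^ (α + 1) * (r ^ (2 * min θ ν - 1) + ‖b x - b y‖) - k * s ^ α * G := by
  obtain ⟨r1, hr1, hr1', Cf, hCf, hcore⟩ := fd_core hS.f2 hS.f3 hS.f4 hκ
  obtain ⟨Cd, hCd, hdrift⟩ := drift_diff (N := N) α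
  obtain ⟨k, K, hk, hK, hpinch⟩ := rpow_pinch α
  obtain ⟨Mb, hMb⟩ := (dom_compact hS.dom).exists_bound_of_continuousOn hS.bc
  have ha := hS.f2.1
  have hη : 2 * min θ ν - 1 ≤ 1 := by
    have := (min_le_left θ ν).trans hS.f3.2.1.2; linarith
  refine ⟨min r1 (1 / (2 * κ)), by positivity, (min_le_left _ _).trans hr1',
    K * (Cf + Cd * |Mb| * κ + 6), k * (a / 2), by positivity, by positivity, ?_⟩
  intro u w hu hw x hx y hy r s G p₁ p₂ X Z hr hr0 hxy hs hsp hps hpp hX hZ hJ1 hJ2 hb1 hb2 hq hG hG'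
  have hp1 : p₁ ≠ 0 := norm_pos_iff.1 (hs.trans_le hsp)
  have hrκ : κ * r ≤ 1 / 2 := by
    have := hr0.trans (min_le_right _ _)
    rw [le_div_iff₀ (by positivity)] at this
    linarith
  have hhalf : ‖p₁ + p₂‖ ≤ ‖p₁‖ / 2 := by
    have : κ * r * s ≤ 1 / 2 * s := by gcongr
    linarith
  have hp2 : p₂ ≠ 0 := by
    rintro rfl
    rw [add_zero] at hhalf
    linarith
  have i1 := hu x hx p₁ hp1 X hX hJ1 hb1
  have i2 := hw y hy p₂ hp2 Z hZ hJ2 hb2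
  have hZ' : (-Z).IsSymm := by rw [Matrix.IsSymm, Matrix.transpose_neg, hZ.eq]
  have i3 := hcore x hx y hy r s G p₁ (-p₂) X (-Z) hr (hr0.trans (min_le_left _ _)) hxy hs hsp
    (by rwa [sub_neg_eq_add]) hX hZ' (fun k₁ k₂ => by
      rw [qf_neg, sub_neg_eq_add]; exact hq k₁ k₂) hG (by
      rcases hG' with h | ⟨e, he, h⟩
      · exact Or.inl h
      · refine Or.inr ⟨e, he, ?_⟩
        rw [qf_neg]; linarith)
  have i4 := hdrift (b x) (b y) p₁ (-p₂) hp1 (by rwa [sub_neg_eq_add])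
  rw [sub_neg_eq_add, inner_neg_right, norm_neg] at i4
  rw [dualF] at i2
  obtain ⟨hk1, hk2⟩ := hpinch s ‖p₁‖ hs hsp hps
  have hrη : r ≤ r ^ (2 * min θ ν - 1) := by
    calc r = r ^ (1 : ℝ) := (Real.rpow_one r).symm
      _ ≤ _ := Real.rpow_le_rpow_of_exponent_ge hr
        (hr0.trans ((min_le_left _ _).trans hr1')) hη
  set R := r ^ (2 * min θ ν - 1) with hR
  have hR0 : 0 ≤ R := hr.le.trans hrη
  set β := ‖b x - b y‖ with hβ
  have hβ0 : 0 ≤ β := norm_nonneg _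
  have j1 : Cd * ‖b y‖ * ‖p₁ + p₂‖ ≤ Cd * |Mb| * (κ * R * s) := by
    have m1 : ‖b y‖ ≤ |Mb| := (hMb y hy).trans (le_abs_self _)
    have m2 : ‖p₁ + p₂‖ ≤ κ * R * s := hpp.trans (by gcongr)
    gcongr
  have j2 : β * ‖p₁‖ ≤ β * (6 * s) := mul_le_mul_of_nonneg_left hps hβ0
  have hP0 : 0 ≤ ‖p₁‖ ^ α := Real.rpow_nonneg (norm_nonneg _) _
  have j3 : Cf * s * R + (β * ‖p₁‖ + Cd * ‖b y‖ * ‖p₁ + p₂‖)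
      ≤ (Cf + Cd * |Mb| * κ + 6) * s * (R + β) := by
    have m1 : 0 ≤ (Cf + Cd * |Mb| * κ) * (s * β) := by positivity
    have m2 : 0 ≤ s * R := by positivity
    linarith
  have j4 : ‖p₁‖ ^ α * (Cf * s * R + (β * ‖p₁‖ + Cd * ‖b y‖ * ‖p₁ + p₂‖))
      ≤ K * s ^ α * ((Cf + Cd * |Mb| * κ + 6) * s * (R + β)) :=
    mul_le_mul hk2 j3 (by positivity) (by positivity)
  have j5 : k * s ^ α * (a / 2 * G) ≤ ‖p₁‖ ^ α * (a / 2 * G) :=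
    mul_le_mul_of_nonneg_right hk1 (by positivity)
  have hsα : s ^ (α + 1) = s ^ α * s := by rw [Real.rpow_add hs, Real.rpow_one]
  rw [hsα]
  linarith

end

section
variable {N : ℕ}

lemma unit_dir {x y : EN N} (hxy : x ≠ y) : ‖‖x - y‖⁻¹ • (x - y)‖ = 1 := by
  have hr : 0 < ‖x - y‖ := norm_pos_iff.2 (sub_ne_zero.2 hxy)
  rw [norm_smul, norm_inv, norm_norm, inv_mul_cancel₀ hr.ne']

/-- The doubling inequality at points close to the maximum point. -/
lemma doubling_eps {Ω : Set (EN N)} {nv : EN N → EN N} {α a A C₁ θ C₂ ν : ℝ}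
    {F : EN N → EN N → Mat N → ℝ} {b : EN N → EN N} {c g : EN N → ℝ}
    (hS : Std Ω nv α a A C₁ θ C₂ ν F b c g) {q : ℕ} {ψ : EN N → ℝ} {Cψ : ℝ}
    (hB : Barrier Ω nv q ψ Cψ) {κ : ℝ} (hκ : 1 ≤ κ) :
    ∃ r0 > 0, r0 ≤ 1 ∧ ∃ C k κ2 : ℝ, 0 ≤ C ∧ 0 < k ∧ 0 ≤ κ2 ∧ ∀ u w : EN N → ℝ,
      UpperSemicontinuousOn u (closure Ω) → UpperSemicontinuousOn w (closure Ω) →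
      JetSub Ω nv α F b c g u → JetSub Ω nv α (dualF F) b c (fun x => -g x) w →
      ∀ x ∈ closure Ω, ∀ y ∈ closure Ω, x ≠ y → ‖x - y‖ ≤ r0 →
      ∀ (Hf : EN N → ℝ) (H0 H1 σ G : ℝ), 0 < H1 → ‖x - y‖ * H1 / q ≤ H0 →
      H0 ≤ κ * ‖x - y‖ * H1 → σ ≤ κ * H1 / ‖x - y‖ →
      (∀ᶠ d in 𝓝 (0 : EN N), Hf (x - y + d) ≤ H0 + H1 * ⟪‖x - y‖⁻¹ • (x - y), d⟫
        + 1 / 2 * (κ * H1 / ‖x - y‖ * (‖d‖ ^ 2 - ⟪‖x - y‖⁻¹ • (x - y), d⟫ ^ 2)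
          + σ * ⟪‖x - y‖⁻¹ • (x - y), d⟫ ^ 2)) →
      (∀ᶠ z in 𝓝 (x, y), z.1 ∈ closure Ω → z.2 ∈ closure Ω →
        u z.1 + w z.2 - Hf (z.1 - z.2) * (ψ z.1 + ψ z.2) ≤ u x + w y - H0 * (ψ x + ψ y)) →
      0 ≤ G → (G = 0 ∨ G + κ2 * H1 ≤ -8 * σ) →
      ∀ ε, 0 < ε → ε ≤ ‖x - y‖ / 2 → ε ≤ ‖x - y‖ * H1 / 2 →
      ∃ x' ∈ closure Ω, ∃ y' ∈ closure Ω, ‖x' - x‖ ≤ ε ∧ ‖y' - y‖ ≤ ε ∧ |u x' - u x| ≤ ε ∧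
        |w y' - w y| ≤ ε ∧
        g x' - g y' ≤ c x' * (|u x'| ^ α * u x') + c y' * (|w y'| ^ α * w y')
        + C * H1 ^ (α + 1) * (‖x - y‖ ^ (2 * min θ ν - 1) + ‖b x' - b y'‖) - k * H1 ^ α * G := by
  have hC := hB.const_nonneg
  set κ1 := 4 * κ + 2 * Cψ ^ 2 + 2 * κ * Cψ + 4 with hκ1
  have hκ1' : 1 ≤ κ1 := by
    have : 0 ≤ 2 * Cψ ^ 2 + 2 * κ * Cψ := by positivity
    rw [hκ1]; linarith
  obtain ⟨r1, hr1, hr1', C, k, hC0, hk, hineq⟩ := jets_ineq hS hκ1'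
  refine ⟨min r1 (1 / (2 * (κ * Cψ + 1))), by positivity, (min_le_left _ _).trans hr1', C, k,
    8 * Cψ + 4 * κ * Cψ + 6, hC0, hk, by positivity, ?_⟩
  intro u w hu hw hju hjw x hx y hy hxy hr0 Hf H0 H1 σ G hH1 hH0 hH0' hσ hHf hmax hG hG' ε hε hεr hεH
  have hen := unit_dir hxy
  have hr : 0 < ‖x - y‖ := norm_pos_iff.2 (sub_ne_zero.2 hxy)
  obtain ⟨x', y', p₁, p₂, X, Z, h1, h2, h3, h4, h5, h6, h7, h8, hX, hZ, hJX, hJZ, hb1, hb2, hqf⟩ :=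
    dbl_jets hS.dom hB hu hw hx hy hxy hH1 hH0 (mul_pos hr hH1) hHf hmax hε
  have hr01 := hr0.trans (min_le_left _ _)
  have hr02 := hr0.trans (min_le_right _ _)
  have hxyn : ‖x' - y'‖ ≤ ‖x - y‖ + 2 * ε := by
    have : x' - y' = (x - y) + (x' - x) - (y' - y) := by abel
    rw [this]
    linarith [norm_sub_le ((x - y) + (x' - x)) (y' - y), norm_add_le (x - y) (x' - x)]
  refine ⟨x', h1, y', h2, h3, h4, h7, h8, ?_⟩
  set e := ‖x - y‖⁻¹ • (x - y) with he
  set r := ‖x - y‖ with hrdef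
  have hr1 : r ≤ 1 := hr01.trans hr1'
  have hS1 : 2 ≤ ψ x + ψ y := by linarith [hB.one_le x hx, hB.one_le y hy]
  have hS2 : ψ x + ψ y ≤ 4 := by linarith [hB.le_two x hx, hB.le_two y hy]
  have hH0p : 0 ≤ H0 := le_trans (by positivity) hH0
  have hκC : κ * Cψ * r ≤ 1 / 2 := by
    rw [le_div_iff₀ (by positivity)] at hr02
    linarith
  have hH0C : H0 * Cψ ≤ κ * r * H1 * Cψ := by gcongr
  have hH0C' : H0 * Cψ ≤ 1 / 2 * H1 := by
    have := mul_le_mul_of_nonneg_right hκC hH1.le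
    linarith
  have hrH : r * H1 ≤ H1 := mul_le_of_le_one_left hH1.le hr1
  have hg1 : ‖H0 • gradient ψ x‖ ≤ H0 * Cψ := by
    rw [norm_smul, Real.norm_of_nonneg hH0p]
    exact mul_le_mul_of_nonneg_left (hB.grad x hx) hH0p
  have hg2 : ‖H0 • gradient ψ y‖ ≤ H0 * Cψ := by
    rw [norm_smul, Real.norm_of_nonneg hH0p]
    exact mul_le_mul_of_nonneg_left (hB.grad y hy) hH0p
  have hE : ‖(H1 * (ψ x + ψ y)) • e‖ = H1 * (ψ x + ψ y) := by
    rw [norm_smul, hen, mul_one, Real.norm_of_nonneg (by positivity)]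
  have hE1 : H1 * 2 ≤ H1 * (ψ x + ψ y) := by gcongr
  have hE2 : H1 * (ψ x + ψ y) ≤ H1 * 4 := by gcongr
  have hp1 : H1 ≤ ‖p₁‖ ∧ ‖p₁‖ ≤ 6 * H1 := by
    have a1 : ‖p₁ - (H1 * (ψ x + ψ y)) • e‖ ≤ ε + H0 * Cψ := by
      have : p₁ - (H1 * (ψ x + ψ y)) • e
        = (p₁ - ((H1 * (ψ x + ψ y)) • e + H0 • gradient ψ x)) + H0 • gradient ψ x := by abel
      rw [this]
      exact (norm_add_le _ _).trans (add_le_add h5 hg1)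
    have a2 := abs_le.1 ((abs_norm_sub_norm_le p₁ ((H1 * (ψ x + ψ y)) • e)).trans a1)
    rw [hE] at a2
    constructor <;> linarith [a2.1, a2.2]
  have hpp : ‖p₁ + p₂‖ ≤ κ1 * r * H1 := by
    have e1 : p₁ + p₂ = ((p₁ - ((H1 * (ψ x + ψ y)) • e + H0 • gradient ψ x))
        + (p₂ - (-((H1 * (ψ x + ψ y)) • e) + H0 • gradient ψ y)))
        + (H0 • gradient ψ x + H0 • gradient ψ y) := by abel
    have a1 : ‖p₁ + p₂‖ ≤ (ε + ε) + (H0 * Cψ + H0 * Cψ) := by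
      rw [e1]
      refine (norm_add_le _ _).trans (add_le_add ((norm_add_le _ _).trans (add_le_add h5 h6)) ?_)
      exact (norm_add_le _ _).trans (add_le_add hg1 hg2)
    have a2 : 0 ≤ (4 * κ + 2 * Cψ ^ 2 + 3) * (r * H1) := by positivity
    rw [hκ1]
    linarith
  refine hineq u w hju hjw x' h1 y' h2 r H1 G p₁ p₂ X Z hr hr01 (by linarith) hH1 hp1.1 hp1.2 hpp
    hX hZ hJX hJZ hb1 hb2 (fun k₁ k₂ => ?_) hG ?_
  · refine (hqf k₁ k₂).trans ?_
    have a1 := Qd_le (by linarith : 0 ≤ ψ x + ψ y) hS2 hκ hr hH1 hC hH0' hσ hen.le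
      (hB.grad x hx) (hB.grad y hy) k₁ k₂
    set n2 := ‖k₁‖ ^ 2 + ‖k₂‖ ^ 2 with hn2
    have hn0 : 0 ≤ n2 := by positivity
    have a2 : ε * n2 ≤ r * H1 / 2 * n2 := mul_le_mul_of_nonneg_right hεH hn0
    have a3 : (4 * κ + 1) * (H1 / r) * ‖k₁ - k₂‖ ^ 2 ≤ κ1 * (H1 / r) * ‖k₁ - k₂‖ ^ 2 := by
      have : 4 * κ + 1 ≤ κ1 := by
        have : 0 ≤ 2 * Cψ ^ 2 + 2 * κ * Cψ := by positivity
        rw [hκ1]; linarith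
      gcongr
    have a4 : (2 * Cψ ^ 2 + 2 * κ * Cψ + 2 + 1 / 2) * (r * H1 * n2) ≤ κ1 * (r * H1 * n2) := by
      gcongr
      rw [hκ1]; linarith
    linarith
  · rcases hG' with h | h
    · exact Or.inl h
    · refine Or.inr ⟨e, hen, ?_⟩
      have hκ20 : 0 ≤ (8 * Cψ + 4 * κ * Cψ + 6) * H1 := by positivity
      have a1 := Qd_dir (r := r) hS1 hr1 hH1 hC hκ hH0' (by linarith : σ ≤ 0) hen (hB.grad x hx)
        (hB.grad y hy)
      have a2 := hqf e (-e)
      have a3 : qf Z (-e) = qf Z e := by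
        have := qf_smul_arg Z (-1) e
        rwa [neg_one_smul, neg_one_sq, one_mul] at this
      rw [a3, norm_neg, hen] at a2
      linarith

lemma tendsto_within {K : Set (EN N)} {f : EN N → ℝ} (hf : ContinuousOn f K) {x : EN N}
    (hx : x ∈ K) {s : ℕ → EN N} (hs : ∀ n, s n ∈ K) (h : Tendsto s atTop (𝓝 x)) :
    Tendsto (fun n => f (s n)) atTop (𝓝 (f x)) :=
  (hf x hx).tendsto.comp (tendsto_nhdsWithin_iff.2 ⟨h, Eventually.of_forall hs⟩)

lemma tendsto_of_le {E : Type*} [SeminormedAddCommGroup E] {s : ℕ → E} {x : E} {ε : ℕ → ℝ}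
    (h : ∀ n, ‖s n - x‖ ≤ ε n) (hε : Tendsto ε atTop (𝓝 0)) : Tendsto s atTop (𝓝 x) :=
  tendsto_iff_norm_sub_tendsto_zero.2 (squeeze_zero (fun _ => norm_nonneg _) h hε)

/-- The doubling inequality: at a maximum point `(x, y)`, `x ≠ y`, of
`u x + w y - Hf (x - y) * (ψ x + ψ y)` the equations for `u` and `w` may be added. The number `G`
is a gain coming from concavity of `Hf` in the direction `x - y`. -/
lemma doubling {Ω : Set (EN N)} {nv : EN N → EN N} {α a A C₁ θ C₂ ν : ℝ}
    {F : EN N → EN N → Mat N → ℝ} {b : EN N → EN N} {c g : EN N → ℝ}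
    (hS : Std Ω nv α a A C₁ θ C₂ ν F b c g) {q : ℕ} {ψ : EN N → ℝ} {Cψ : ℝ}
    (hB : Barrier Ω nv q ψ Cψ) {κ : ℝ} (hκ : 1 ≤ κ) :
    ∃ r0 > 0, r0 ≤ 1 ∧ ∃ C k κ2 : ℝ, 0 ≤ C ∧ 0 < k ∧ 0 ≤ κ2 ∧ ∀ u w : EN N → ℝ,
      UpperSemicontinuousOn u (closure Ω) → UpperSemicontinuousOn w (closure Ω) →
      JetSub Ω nv α F b c g u → JetSub Ω nv α (dualF F) b c (fun x => -g x) w →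
      ∀ x ∈ closure Ω, ∀ y ∈ closure Ω, x ≠ y → ‖x - y‖ ≤ r0 →
      ∀ (Hf : EN N → ℝ) (H0 H1 σ G : ℝ), 0 < H1 → ‖x - y‖ * H1 / q ≤ H0 →
      H0 ≤ κ * ‖x - y‖ * H1 → σ ≤ κ * H1 / ‖x - y‖ →
      (∀ᶠ d in 𝓝 (0 : EN N), Hf (x - y + d) ≤ H0 + H1 * ⟪‖x - y‖⁻¹ • (x - y), d⟫
        + 1 / 2 * (κ * H1 / ‖x - y‖ * (‖d‖ ^ 2 - ⟪‖x - y‖⁻¹ • (x - y), d⟫ ^ 2)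
          + σ * ⟪‖x - y‖⁻¹ • (x - y), d⟫ ^ 2)) →
      (∀ᶠ z in 𝓝 (x, y), z.1 ∈ closure Ω → z.2 ∈ closure Ω →
        u z.1 + w z.2 - Hf (z.1 - z.2) * (ψ z.1 + ψ z.2) ≤ u x + w y - H0 * (ψ x + ψ y)) →
      0 ≤ G → (G = 0 ∨ G + κ2 * H1 ≤ -8 * σ) →
      g x - g y ≤ c x * (|u x| ^ α * u x) + c y * (|w y| ^ α * w y)
        + C * H1 ^ (α + 1) * (‖x - y‖ ^ (2 * min θ ν - 1) + ‖b x - b y‖) - k * H1 ^ α * G := by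
  obtain ⟨r0, hr0, hr0', C, k, κ2, hC0, hk, hκ2, hmain⟩ := doubling_eps hS hB hκ
  refine ⟨r0, hr0, hr0', C, k, κ2, hC0, hk, hκ2, ?_⟩
  intro u w hu hw hju hjw x hx y hy hxy hxr Hf H0 H1 σ G hH1 hH0 hH0' hσ hHf hmax hG hG'
  have hr : 0 < ‖x - y‖ := norm_pos_iff.2 (sub_ne_zero.2 hxy)
  set ε0 := min (‖x - y‖ / 2) (‖x - y‖ * H1 / 2) with hε0
  have hε0p : 0 < ε0 := by positivity
  have hε : Tendsto (fun n : ℕ => ε0 * (1 / ((n : ℝ) + 1))) atTop (𝓝 0) := by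
    simpa using tendsto_one_div_add_atTop_nhds_zero_nat.const_mul ε0
  have hεle : ∀ n : ℕ, ε0 * (1 / ((n : ℝ) + 1)) ≤ ε0 := fun n => by
    apply mul_le_of_le_one_right hε0p.le
    rw [div_le_one (by positivity)]
    linarith [(Nat.cast_nonneg n : (0 : ℝ) ≤ n)]
  choose s hs t ht h1 h2 h3 h4 h5 using fun n : ℕ => hmain u w hu hw hju hjw x hx y hy hxy hxr Hf
    H0 H1 σ G hH1 hH0 hH0' hσ hHf hmax hG hG' (ε0 * (1 / ((n : ℝ) + 1))) (by positivity)
    ((hεle n).trans (min_le_left _ _)) ((hεle n).trans (min_le_right _ _))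
  have hs' := tendsto_of_le h1 hε
  have ht' := tendsto_of_le h2 hε
  have hus : Tendsto (fun n => u (s n)) atTop (𝓝 (u x)) := tendsto_of_le h3 hε
  have hwt : Tendsto (fun n => w (t n)) atTop (𝓝 (w y)) := tendsto_of_le h4 hε
  have hbs : Tendsto (fun n => b (s n)) atTop (𝓝 (b x)) :=
    (hS.bc x hx).tendsto.comp (tendsto_nhdsWithin_iff.2 ⟨hs', Eventually.of_forall hs⟩)
  have hbt : Tendsto (fun n => b (t n)) atTop (𝓝 (b y)) :=
    (hS.bc y hy).tendsto.comp (tendsto_nhdsWithin_iff.2 ⟨ht', Eventually.of_forall ht⟩)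
  have hph := continuous_ph hS.hα
  refine le_of_tendsto_of_tendsto' ((tendsto_within hS.gc hx hs hs').sub
    (tendsto_within hS.gc hy ht ht')) (((((tendsto_within hS.cc hx hs hs').mul
      ((hph.tendsto (u x)).comp hus)).add ((tendsto_within hS.cc hy ht ht').mul
      ((hph.tendsto (w y)).comp hwt))).add ((tendsto_const_nhds (x := ‖x - y‖ ^ (2 * min θ ν - 1))).add
      (hbs.sub hbt).norm |>.const_mul (C * H1 ^ (α + 1)))).sub
      (tendsto_const_nhds (x := k * H1 ^ α * G))) h5

end

/-! ### Touching by high powers of the distance -/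

section
variable {N : ℕ}

lemma pow_pen_exp {w : EN N} (hw : w ≠ 0) {m : ℕ} (hm : 1 ≤ m) {j : ℝ} (hj : 0 ≤ j) :
    ∀ᶠ d in 𝓝 (0 : EN N), j * ‖w + d‖ ^ (2 * m) ≤
      j * ‖w‖ ^ (2 * m) + 2 * m * (j * ‖w‖ ^ (2 * m)) / ‖w‖ * ⟪‖w‖⁻¹ • w, d⟫
      + 1 / 2 * ((1 + 9 * m) * (2 * m * (j * ‖w‖ ^ (2 * m)) / ‖w‖) / ‖w‖
          * (‖d‖ ^ 2 - ⟪‖w‖⁻¹ • w, d⟫ ^ 2)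
        + (1 + 9 * m) * (2 * m * (j * ‖w‖ ^ (2 * m)) / ‖w‖) / ‖w‖ * ⟪‖w‖⁻¹ • w, d⟫ ^ 2) := by
  have hr : 0 < ‖w‖ := norm_pos_iff.2 hw
  filter_upwards [pow_exp hw hm] with d hd
  refine (mul_le_mul_of_nonneg_left hd hj).trans (le_of_eq ?_)
  field_simp
  ring

/-- A subsolution touched from above at `x` by `C' ‖· - y‖ ^ (2 m)`, corrected by the barrier,
satisfies the equation without derivatives at `x` up to a power of `‖x - y‖`. -/
lemma touch_pow {Ω : Set (EN N)} {nv : EN N → EN N} {α a A C₁ θ C₂ ν : ℝ}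
    {F : EN N → EN N → Mat N → ℝ} {b : EN N → EN N} {c g : EN N → ℝ}
    (hS : Std Ω nv α a A C₁ θ C₂ ν F b c g) {m : ℕ} (hm : 1 ≤ m) {ψ : EN N → ℝ} {Cψ : ℝ}
    (hB : Barrier Ω nv (2 * m) ψ Cψ) {C' : ℝ} (hC' : 0 < C') :
    ∃ r0 > 0, ∃ C : ℝ, 0 ≤ C ∧ ∀ u : EN N → ℝ, JetSub Ω nv α F b c g u →
      ∀ x ∈ closure Ω, ∀ y ∈ closure Ω, x ≠ y → ‖x - y‖ ≤ r0 →
      (∀ᶠ x' in 𝓝[closure Ω] x, u x' - C' * ‖x' - y‖ ^ (2 * m) * (ψ x' + ψ y)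
        ≤ u x - C' * ‖x - y‖ ^ (2 * m) * (ψ x + ψ y)) →
      g x ≤ c x * (|u x| ^ α * u x) + C * ‖x - y‖ ^ ((2 * m - 1) * (α + 1) - 1) := by
  have hC := hB.const_nonneg
  obtain ⟨k, K, hk, hK, hpinch⟩ := rpow_pinch α
  obtain ⟨Mb, hMb⟩ := (dom_compact hS.dom).exists_bound_of_continuousOn hS.bc
  obtain ⟨ha, haA, hF2⟩ := id hS.f2
  have hA : 0 < A := ha.trans_le haA
  have hm1 : (1 : ℝ) ≤ m := by exact_mod_cast hm
  set κ : ℝ := 1 + 9 * m with hκ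
  have hκ1 : 1 ≤ κ := by rw [hκ]; linarith
  set Λ := (4 * κ + 1) + (2 * Cψ ^ 2 + 2 * κ * Cψ + 2) with hΛ
  have hΛ0 : 0 ≤ Λ := by positivity
  refine ⟨min 1 (1 / (2 * (κ * Cψ + 1))), by positivity,
    (A * K * Λ * N + 6 * K * |Mb|) * (2 * m * C') ^ (α + 1), by positivity, ?_⟩
  intro u hu x hx y hy hxy hr0 hmax
  have hr : 0 < ‖x - y‖ := norm_pos_iff.2 (sub_ne_zero.2 hxy)
  have hen := unit_dir hxy
  have hexp := pow_pen_exp (sub_ne_zero.2 hxy) hm hC'.le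
  have hr1 : ‖x - y‖ ≤ 1 := hr0.trans (min_le_left _ _)
  have hr02 := hr0.trans (min_le_right _ _)
  set r := ‖x - y‖ with hrdef
  set H0 := C' * r ^ (2 * m) with hH0
  have hH0p : 0 < H0 := by positivity
  set H1 := 2 * m * H0 / r with hH1
  have hH1p : 0 < H1 := by positivity
  have hH01 : H0 ≤ κ * r * H1 := by
    have : κ * r * H1 = (κ * (2 * m)) * H0 := by rw [hH1]; field_simp
    rw [this]
    have : 1 ≤ κ * (2 * m) := one_le_mul_of_one_le_of_one_le hκ1 (by linarith)
    exact le_mul_of_one_le_left hH0p.le this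
  have hH0q : r * H1 / ((2 * m : ℕ) : ℝ) ≤ H0 := by
    rw [hH1]; push_cast
    apply le_of_eq; field_simp
  have hS1 : 2 ≤ ψ x + ψ y := by linarith [hB.one_le x hx, hB.one_le y hy]
  have hS2 : ψ x + ψ y ≤ 4 := by linarith [hB.le_two x hx, hB.le_two y hy]
  have hbp := fun h : x ∈ frontier Ω => bdry_pos hB h hy hxy.symm hS1 hS2 hH1p hH0q
  obtain ⟨ρ, hρ, hprod⟩ := prod_exp (Hf := fun w => C' * ‖w‖ ^ (2 * m)) hB hx hy hen.le hH0p.le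
    (mul_pos hr hH1p) hexp
  rw [← hrdef] at hbp
  set e := r⁻¹ • (x - y) with he
  set P := (H1 * (ψ x + ψ y)) • e + H0 • gradient ψ x with hP
  have hκC : κ * Cψ * r ≤ 1 / 2 := by
    rw [le_div_iff₀ (by positivity)] at hr02
    linarith
  have hg1 : ‖H0 • gradient ψ x‖ ≤ 1 / 2 * H1 := by
    rw [norm_smul, Real.norm_of_nonneg hH0p.le]
    calc H0 * ‖gradient ψ x‖ ≤ (κ * r * H1) * Cψ := by
          gcongr; exact hB.grad x hx
      _ = (κ * Cψ * r) * H1 := by ring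
      _ ≤ _ := by gcongr
  have hE : ‖(H1 * (ψ x + ψ y)) • e‖ = H1 * (ψ x + ψ y) := by
    rw [norm_smul, hen, mul_one, Real.norm_of_nonneg (by positivity)]
  have hE1 : H1 * 2 ≤ H1 * (ψ x + ψ y) := by gcongr
  have hE2 : H1 * (ψ x + ψ y) ≤ H1 * 4 := by gcongr
  have hP1 : H1 ≤ ‖P‖ ∧ ‖P‖ ≤ 6 * H1 := by
    have a2 := abs_le.1 (abs_norm_sub_norm_le P ((H1 * (ψ x + ψ y)) • e))
    rw [show P - (H1 * (ψ x + ψ y)) • e = H0 • gradient ψ x by rw [hP]; abel, hE] at a2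
    constructor <;> linarith [a2.1, a2.2]
  have hP0 : P ≠ 0 := norm_pos_iff.1 (hH1p.trans_le hP1.1)
  have hjet : MJet (closure Ω) u x P ((Λ * (H1 / r)) • (1 : Mat N)) := by
    have hball : ∀ᶠ x' in 𝓝[closure Ω] x, x' ∈ closedBall x ρ :=
      mem_nhdsWithin_of_mem_nhds (closedBall_mem_nhds x hρ)
    filter_upwards [hmax, hball, self_mem_nhdsWithin] with x' h1 h2 h3
    have m1 := hprod (x' - x) 0 (by rwa [mem_closedBall, dist_eq_norm] at h2)
      (by rw [norm_zero]; exact hρ.le) (by rwa [add_sub_cancel]) (by rwa [add_zero])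
    have m2 := Qd_le (by linarith : 0 ≤ ψ x + ψ y) hS2 hκ1 hr hH1p hC hH01 (le_refl _) hen.le
      (hB.grad x hx) (hB.grad y hy) (x' - x) 0
    rw [Qd] at m2
    simp only [add_sub_cancel, add_zero, sub_zero, inner_zero_right, norm_zero] at m1 m2
    rw [qf_smul, qf_one, hP, inner_add_left, real_inner_smul_left e,
      real_inner_smul_left (gradient ψ x)]
    have m3 : (2 * Cψ ^ 2 + 2 * κ * Cψ + 2) * r * H1 * (‖x' - x‖ ^ 2 + 0 ^ 2)
        ≤ (2 * Cψ ^ 2 + 2 * κ * Cψ + 2) * (H1 / r) * ‖x' - x‖ ^ 2 := by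
      have : r * H1 ≤ H1 / r := by
        rw [le_div_iff₀ hr]
        calc r * H1 * r = H1 * (r * r) := by ring
          _ ≤ H1 * 1 := by gcongr; exact mul_le_one₀ hr1 hr.le hr1
          _ = H1 := mul_one _
      have := mul_le_mul_of_nonneg_left this
        (by positivity : 0 ≤ (2 * Cψ ^ 2 + 2 * κ * Cψ + 2) * ‖x' - x‖ ^ 2)
      linarith
    rw [hΛ]
    rw [hκ] at m2 m3 ⊢
    linarith
  have hmain := hu x hx P hP0 _ (smul_one_isSymm _) hjet hbp
  have hF0 : F x P 0 = 0 := by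
    have := hS.f1 x hx 1 one_ne_zero 0 le_rfl P hP0 0 (Matrix.isSymm_zero)
    rwa [one_smul, zero_smul, mul_zero, zero_mul] at this
  have hX0 : 0 ≤ Λ * (H1 / r) := by positivity
  have hFX := (hF2 x hx P hP0 0 _ Matrix.isSymm_zero (smul_one_posSemidef hX0)).2
  rw [zero_add, hF0, sub_zero, trace_smul_one] at hFX
  have hpK := (hpinch H1 ‖P‖ hH1p hP1.1 hP1.2).2
  have hPα : 0 ≤ ‖P‖ ^ α := Real.rpow_nonneg (norm_nonneg _) _
  have hH1α : 0 ≤ H1 ^ α := Real.rpow_nonneg hH1p.le _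
  have i1 : A * ‖P‖ ^ α * (Λ * (H1 / r) * N) ≤ A * (K * H1 ^ α) * (Λ * (H1 / r) * N) := by gcongr
  have i2 : ⟪b x, P⟫ * ‖P‖ ^ α ≤ (|Mb| * (6 * H1)) * (K * H1 ^ α) := by
    refine mul_le_mul ((real_inner_le_norm _ _).trans ?_) hpK hPα (by positivity)
    exact mul_le_mul ((hMb x hx).trans (le_abs_self _)) hP1.2 (norm_nonneg _) (abs_nonneg _)
  have i3 : (|Mb| * (6 * H1)) * (K * H1 ^ α) ≤ (6 * K * |Mb|) * (H1 ^ α * (H1 / r)) := by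
    have : H1 ≤ H1 / r := by rw [le_div_iff₀ hr]; exact mul_le_of_le_one_right hH1p.le hr1
    have := mul_le_mul_of_nonneg_left this (by positivity : 0 ≤ 6 * K * |Mb| * H1 ^ α)
    linarith
  have hH1r : H1 ^ α * (H1 / r)
      = (2 * m * C') ^ (α + 1) * r ^ ((2 * m - 1) * (α + 1) - 1) := by
    have e1 : H1 = (2 * m * C') * r ^ ((2 * m - 1 : ℝ)) := by
      rw [Real.rpow_sub hr, Real.rpow_one, hH1, hH0]
      have : r ^ (2 * (m : ℝ)) = r ^ (2 * m) := by
        rw [← Real.rpow_natCast]; push_cast; rfl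
      rw [this]
      ring
    have e2 : H1 ^ α * (H1 / r) = H1 ^ (α + 1) / r := by
      rw [Real.rpow_add hH1p, Real.rpow_one]; ring
    rw [e2, e1, Real.mul_rpow (by positivity) (by positivity), ← Real.rpow_mul hr.le,
      Real.rpow_sub hr, Real.rpow_one, mul_div_assoc]
  have i4 : A * (K * H1 ^ α) * (Λ * (H1 / r) * N) = (A * K * Λ * N) * (H1 ^ α * (H1 / r)) := by
    ring
  rw [mul_assoc (c x)] at hmain
  rw [mul_assoc (A * K * Λ * N + 6 * K * |Mb|)]
  have : (A * K * Λ * N + 6 * K * |Mb|) * ((2 * m * C') ^ (α + 1)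
      * r ^ ((2 * m - 1) * (α + 1) - 1)) = (A * K * Λ * N) * (H1 ^ α * (H1 / r))
        + (6 * K * |Mb|) * (H1 ^ α * (H1 / r)) := by
    rw [hH1r]; ring
  linarith

end

/-! ### The condition at vanishing gradients -/

section
variable {N : ℕ}

lemma Barrier.cont {Ω : Set (EN N)} {nv : EN N → EN N} {q : ℕ} {ψ : EN N → ℝ} {C : ℝ}
    (hB : Barrier Ω nv q ψ C) : ContinuousOn ψ (closure Ω) := by
  intro x hx
  have hd : Tendsto (fun x' : EN N => ‖x' - x‖) (𝓝[closure Ω] x) (𝓝 0) := by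
    have : Tendsto (fun x' : EN N => ‖x' - x‖) (𝓝 x) (𝓝 ‖x - x‖) :=
      ((continuous_id.sub continuous_const).norm).tendsto x
    rw [sub_self, norm_zero] at this
    exact this.mono_left nhdsWithin_le_nhds
  have hd2 : Tendsto (fun x' : EN N => C * ‖x' - x‖ ^ 2 + C * ‖x' - x‖) (𝓝[closure Ω] x) (𝓝 0) := by
    simpa using ((hd.pow 2).const_mul C).add (hd.const_mul C)
  rw [ContinuousWithinAt, tendsto_iff_norm_sub_tendsto_zero]
  refine squeeze_zero' (Eventually.of_forall fun _ => norm_nonneg _) ?_ hd2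
  filter_upwards [self_mem_nhdsWithin] with x' hx'
  have h1 := hB.taylor x hx x' hx'
  have h2 := (abs_real_inner_le_norm (gradient ψ x) (x' - x)).trans
    (mul_le_mul_of_nonneg_right (hB.grad x hx) (norm_nonneg _))
  rw [Real.norm_eq_abs]
  have h3 := abs_add_le (ψ x' - ψ x - ⟪gradient ψ x, x' - x⟫) ⟪gradient ψ x, x' - x⟫
  rw [sub_add_cancel] at h3
  linarith

lemma pen_usc {K : Set (EN N)} {u Φ : EN N → ℝ} (hu : UpperSemicontinuousOn u K)
    (hΦ : ContinuousOn Φ K) : UpperSemicontinuousOn (fun x => u x - Φ x) K := by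
  have h := hu.add hΦ.neg.upperSemicontinuousOn
  simp only [sub_eq_add_neg]
  exact h

/-- A strict failure of the equation without derivatives persists, with a margin `η`, at nearby
points and values. -/
lemma strict_near {Ω : Set (EN N)} {α : ℝ} (hα : -1 < α) {c g : EN N → ℝ}
    (hc : ContinuousOn c (closure Ω)) (hg : ContinuousOn g (closure Ω)) {x₀ : EN N}
    (hx₀ : x₀ ∈ closure Ω) {s₀ : ℝ} (h : c x₀ * (|s₀| ^ α * s₀) < g x₀) :
    ∃ η > 0, ∀ x ∈ closure Ω, ‖x - x₀‖ < η → ∀ s, |s - s₀| < η →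
      c x * (|s| ^ α * s) + η < g x := by
  have hcont : ContinuousOn (fun z : EN N × ℝ => g z.1 - c z.1 * (|z.2| ^ α * z.2))
      (closure Ω ×ˢ univ) := by
    have m1 : MapsTo Prod.fst (closure Ω ×ˢ (univ : Set ℝ)) (closure Ω) := fun z hz => hz.1
    refine (hg.comp continuousOn_fst m1).sub ((hc.comp continuousOn_fst m1).mul ?_)
    exact ((continuous_ph hα).comp continuous_snd).continuousOn
  set d := g x₀ - c x₀ * (|s₀| ^ α * s₀) with hd
  have hd0 : 0 < d := by rw [hd]; linarith
  have hev := (hcont (x₀, s₀) ⟨hx₀, mem_univ _⟩).tendsto.eventually (lt_mem_nhds (half_lt_self hd0))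
  obtain ⟨ε, hε, hball⟩ := Metric.mem_nhdsWithin_iff.1 hev
  refine ⟨min ε (d / 2), by positivity, fun x hx hxx s hs => ?_⟩
  have := @hball (x, s) ⟨by
    rw [mem_ball, Prod.dist_eq]
    refine max_lt ?_ ?_
    · rw [dist_eq_norm]; exact hxx.trans_le (min_le_left _ _)
    · rw [Real.dist_eq]; exact hs.trans_le (min_le_left _ _), hx, mem_univ _⟩
  simp only [mem_ofPred_eq] at this
  linarith [min_le_right ε (d / 2)]

/-- Arithmetic of sliding: when the vertex of the power moves by `δ`, the distance `R` of the new
contact point to the new vertex is at most `4 δ`. -/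
lemma zer_arith {q : ℕ} (hq : 2 ≤ q) {C C' R δ : ℝ} (hC : 0 ≤ C) (hC' : C' = 2 ^ q * (C + 1))
    (hδ : 0 ≤ δ) (hR : 0 ≤ R) (h : 2 * C' * R ^ q - 4 * C' * δ ^ q ≤ C * (R + δ) ^ q) :
    R ≤ 4 * δ := by
  by_contra hlt
  push Not at hlt
  have hRp : 0 < R := by linarith
  have h1 : (R + δ) ^ q ≤ 2 ^ q * R ^ q := by
    rw [← mul_pow]; exact pow_le_pow_left₀ (by positivity) (by linarith) q
  have h2 : 16 * δ ^ q ≤ R ^ q := by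
    calc 16 * δ ^ q = 4 ^ 2 * δ ^ q := by norm_num
      _ ≤ 4 ^ q * δ ^ q := by
        have : (4 : ℝ) ^ 2 ≤ 4 ^ q := pow_le_pow_right₀ (by norm_num) hq
        gcongr
      _ = (4 * δ) ^ q := (mul_pow _ _ _).symm
      _ ≤ _ := pow_le_pow_left₀ (by positivity) hlt.le q
  have hC'p : 0 < C' := by rw [hC']; positivity
  have hP : 0 < R ^ q := by positivity
  have h3 : C * (R + δ) ^ q ≤ C * (2 ^ q * R ^ q) := by gcongr
  have h4 : C * (2 ^ q * R ^ q) ≤ C' * R ^ q := by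
    rw [hC']
    have : 0 ≤ 2 ^ q * R ^ q := by positivity
    linarith
  have h5 : C' * (16 * δ ^ q) ≤ C' * R ^ q := by gcongr
  have h6 : 0 < C' * R ^ q := by positivity
  linarith

/-- Hölder continuity with an exponent larger than one forces constancy. -/
lemma locconst {u : EN N → ℝ} {y : EN N} {ρ K : ℝ} {q : ℕ} (hq : 2 ≤ q)
    (h : ∀ z ∈ ball y ρ, ∀ z' ∈ ball y ρ, u z ≤ u z' + K * ‖z - z'‖ ^ q) :
    ∀ z ∈ ball y ρ, u z = u y := by
  intro z hz
  have hder : ∀ w ∈ ball y ρ, HasFDerivAt u (0 : EN N →L[ℝ] ℝ) w := by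
    intro w hw
    have hO : (fun w' => u w' - u w) =O[𝓝 w] fun w' => ‖w' - w‖ ^ q := by
      refine Asymptotics.IsBigO.of_bound K ?_
      filter_upwards [isOpen_ball.mem_nhds hw] with w' hw'
      have h1 := h w' hw' w hw
      have h2 := h w hw w' hw'
      rw [norm_sub_rev] at h2
      rw [Real.norm_eq_abs, Real.norm_of_nonneg (by positivity), abs_le]
      constructor <;> linarith
    have h1 : HasFDerivAt (fun w' => u w' - u w) (0 : EN N →L[ℝ] ℝ) w :=
      hO.hasFDerivAt (by omega)
    simpa using h1.add_const (u w)
  have hy : y ∈ ball y ρ := mem_ball_self (pos_of_mem_ball hz)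
  exact (convex_ball y ρ).is_const_of_fderivWithin_eq_zero (𝕜 := ℝ)
    (fun w hw => (hder w hw).differentiableAt.differentiableWithinAt)
    (fun w hw => by
      rw [fderivWithin_of_isOpen isOpen_ball hw, (hder w hw).fderiv]) hz hy

/-- The subsolution property in terms of jets, complemented at vanishing gradients: where `u` is
touched from above by a constant plus a high power of the distance, the equation without
derivatives holds. -/
structure SubJ (Ω : Set (EN N)) (nv : EN N → EN N) (α : ℝ) (F : EN N → EN N → Mat N → ℝ)
    (b : EN N → EN N) (c g : EN N → ℝ) (q : ℕ) (u : EN N → ℝ) : Prop where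
  jet : JetSub Ω nv α F b c g u
  zer : ∀ x ∈ closure Ω, ∀ C : ℝ, (∀ᶠ x' in 𝓝[closure Ω] x, u x' ≤ u x + C * ‖x' - x‖ ^ q) →
    g x ≤ c x * (|u x| ^ α * u x)

lemma small_pow (K : ℝ) {q : ℕ} (hq : q ≠ 0) (t : ℝ) {η : ℝ} (hη : 0 < η) :
    ∀ᶠ ρ in 𝓝[>] (0 : ℝ), K * (t * ρ) ^ q < η := by
  have h : Tendsto (fun ρ : ℝ => K * (t * ρ) ^ q) (𝓝 0) (𝓝 0) := by
    have : Continuous fun ρ : ℝ => K * (t * ρ) ^ q := by fun_prop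
    refine this.tendsto' 0 0 ?_
    rw [mul_zero, zero_pow hq, mul_zero]
  exact (h.eventually_lt_const hη).filter_mono nhdsWithin_le_nhds

lemma small_rpow (K : ℝ) {β : ℝ} (hβ : 0 < β) (t : ℝ) {η : ℝ} (hη : 0 < η) :
    ∀ᶠ ρ in 𝓝[>] (0 : ℝ), K * (t * ρ) ^ β < η := by
  have h : Tendsto (fun ρ : ℝ => K * (t * ρ) ^ β) (𝓝 0) (𝓝 0) := by
    have : Continuous fun ρ : ℝ => K * (t * ρ) ^ β :=
      continuous_const.mul ((Real.continuous_rpow_const hβ.le).comp (by fun_prop))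
    refine this.tendsto' 0 0 ?_
    rw [mul_zero, Real.zero_rpow hβ.ne', mul_zero]
  exact (h.eventually_lt_const hη).filter_mono nhdsWithin_le_nhds

/-- The condition at vanishing gradients follows from the one for locally constant functions. If
it failed at `x₀`, then sliding the vertex `y` of the power near `x₀` forces every touching point
to be the vertex itself, so that `u` would be locally constant near interior points close
to `x₀`. -/
lemma zer_of_const {Ω : Set (EN N)} {nv : EN N → EN N} {α a A C₁ θ C₂ ν : ℝ}
    {F : EN N → EN N → Mat N → ℝ} {b : EN N → EN N} {c g : EN N → ℝ}
    (hS : Std Ω nv α a A C₁ θ C₂ ν F b c g) {m : ℕ} (hm : 1 ≤ m)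
    (hmβ : 1 < (2 * m - 1) * (α + 1)) {ψ : EN N → ℝ} {Cψ : ℝ}
    (hB : Barrier Ω nv (2 * m) ψ Cψ) {u : EN N → ℝ} (hu : UpperSemicontinuousOn u (closure Ω))
    (hjet : JetSub Ω nv α F b c g u)
    (hconst : ∀ x ∈ Ω, ∀ k, (∀ᶠ x' in 𝓝[closure Ω] x, u x' = k) → g x ≤ c x * (|k| ^ α * k))
    {x₀ : EN N} (hx₀ : x₀ ∈ closure Ω) {C : ℝ}
    (hev : ∀ᶠ x' in 𝓝[closure Ω] x₀, u x' ≤ u x₀ + C * ‖x' - x₀‖ ^ (2 * m)) :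
    g x₀ ≤ c x₀ * (|u x₀| ^ α * u x₀) := by
  by_contra hcon
  push Not at hcon
  obtain ⟨η, hη, hnear⟩ := strict_near hS.hα hS.cc hS.gc hx₀ hcon
  obtain ⟨ρ0, hρ0, hρ0u⟩ := Metric.mem_nhdsWithin_iff.1 hev
  have hup : ∀ x ∈ closure Ω, ‖x - x₀‖ < ρ0 → u x ≤ u x₀ + |C| * ‖x - x₀‖ ^ (2 * m) := by
    intro x hx hxx
    have : u x ≤ u x₀ + C * ‖x - x₀‖ ^ (2 * m) :=
      hρ0u ⟨by rwa [mem_ball, dist_eq_norm], hx⟩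
    refine this.trans ?_
    have := le_abs_self C
    gcongr
  set q := 2 * m with hq
  have hq2 : 2 ≤ q := by omega
  set C' := 2 ^ q * (|C| + 1) with hC'
  have hC'p : 0 < C' := by positivity
  obtain ⟨r1, hr1, C2, hC2, htouch⟩ := touch_pow hS hm hB hC'p
  set β := (2 * (m : ℝ) - 1) * (α + 1) - 1 with hβ
  have hβp : 0 < β := by rw [hβ]; linarith
  obtain ⟨ρ, ⟨⟨⟨⟨⟨⟨k1, k2⟩, k3⟩, k4⟩, k5⟩, k6⟩, (hρ : 0 < ρ)⟩⟩ :=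
    (((((((small_pow 1 one_ne_zero 5 (half_pos hρ0)).and (small_pow 1 one_ne_zero 5 hη)).and
    (small_pow 1 one_ne_zero 4 hr1)).and (small_rpow C2 hβp 4 hη)).and
    (small_pow (4 * C') (by omega : q ≠ 0) 1 hη)).and
    (small_pow |C| (by omega : q ≠ 0) 5 hη)).and self_mem_nhdsWithin).exists
  rw [one_mul, pow_one] at k1 k2 k3
  rw [one_mul] at k5
  have hSle : ∀ x ∈ closure Ω, ∀ y ∈ closure Ω, 2 ≤ ψ x + ψ y ∧ ψ x + ψ y ≤ 4 := by
    intro x hx y hy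
    constructor
    · linarith [hB.one_le x hx, hB.one_le y hy]
    · linarith [hB.le_two x hx, hB.le_two y hy]
  -- no touching point other than the vertex
  have claim : ∀ y ∈ closure Ω, ‖y - x₀‖ < ρ → ∀ x ∈ closure Ω, ‖x - x₀‖ ≤ ρ0 / 2 →
      u x - C' * ‖x - y‖ ^ q * (ψ x + ψ y) ≤ u y := by
    intro y hy hyρ
    have hK : IsCompact (closure Ω ∩ closedBall x₀ (ρ0 / 2)) :=
      (dom_compact hS.dom).inter_right isClosed_closedBall
    have hx₀K : x₀ ∈ closure Ω ∩ closedBall x₀ (ρ0 / 2) :=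
      ⟨hx₀, mem_closedBall_self (by positivity)⟩
    have husc : UpperSemicontinuousOn (fun x => u x - C' * ‖x - y‖ ^ q * (ψ x + ψ y))
        (closure Ω ∩ closedBall x₀ (ρ0 / 2)) := by
      refine (pen_usc hu ?_).mono inter_subset_left
      refine ContinuousOn.mul (Continuous.continuousOn (by fun_prop)) (hB.cont.add continuousOn_const)
    obtain ⟨xm, ⟨hxm, hxmb⟩, hmax⟩ := UpperSemicontinuousOn.exists_isMaxOn ⟨x₀, hx₀K⟩ hK husc
    have hmax' : ∀ x ∈ closure Ω, ‖x - x₀‖ ≤ ρ0 / 2 → u x - C' * ‖x - y‖ ^ q * (ψ x + ψ y)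
        ≤ u xm - C' * ‖xm - y‖ ^ q * (ψ xm + ψ y) := fun x hx hxx =>
      hmax ⟨hx, by rwa [mem_closedBall, dist_eq_norm]⟩
    by_cases hxy : xm = y
    · intro x hx hxx
      have := hmax' x hx hxx
      rwa [hxy, sub_self, norm_zero, zero_pow (by omega), mul_zero, zero_mul, sub_zero] at this
    exfalso
    rw [mem_closedBall, dist_eq_norm] at hxmb
    have h1 := hmax' x₀ hx₀ (by rw [sub_self, norm_zero]; positivity)
    have h2 := hup xm hxm (by linarith)
    obtain ⟨s1, s2⟩ := hSle xm hxm y hy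
    obtain ⟨s3, s4⟩ := hSle x₀ hx₀ y hy
    rw [norm_sub_rev x₀ y] at h1
    have h3 : C' * ‖y - x₀‖ ^ q * (ψ x₀ + ψ y) ≤ C' * ‖y - x₀‖ ^ q * 4 := by gcongr
    have h4 : C' * ‖xm - y‖ ^ q * 2 ≤ C' * ‖xm - y‖ ^ q * (ψ xm + ψ y) := by gcongr
    have h5 : ‖xm - x₀‖ ≤ ‖xm - y‖ + ‖y - x₀‖ := norm_sub_le_norm_sub_add_norm_sub _ _ _
    have h6 : |C| * ‖xm - x₀‖ ^ q ≤ |C| * (‖xm - y‖ + ‖y - x₀‖) ^ q := by gcongr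
    have hR := zer_arith hq2 (abs_nonneg C) hC' (norm_nonneg (y - x₀)) (norm_nonneg (xm - y))
      (by linarith)
    have h7 : ‖xm - x₀‖ < 5 * ρ := by linarith
    have hloc : ∀ᶠ x' in 𝓝[closure Ω] xm, u x' - C' * ‖x' - y‖ ^ q * (ψ x' + ψ y)
        ≤ u xm - C' * ‖xm - y‖ ^ q * (ψ xm + ψ y) := by
      have hb : ∀ᶠ x' in 𝓝[closure Ω] xm, x' ∈ ball x₀ (ρ0 / 2) :=
        mem_nhdsWithin_of_mem_nhds (isOpen_ball.mem_nhds (by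
          rw [mem_ball, dist_eq_norm]; linarith))
      filter_upwards [hb, self_mem_nhdsWithin] with x' hx1 hx2
      rw [mem_ball, dist_eq_norm] at hx1
      exact hmax' x' hx2 hx1.le
    have h8 := htouch u hjet xm hxm y hy hxy (by linarith) hloc
    have h9 : C2 * ‖xm - y‖ ^ β ≤ C2 * (4 * ρ) ^ β := by
      have : ‖xm - y‖ ≤ 4 * ρ := by linarith
      have := Real.rpow_le_rpow (norm_nonneg _) this hβp.le
      gcongr
    have h10 : |C| * ‖xm - x₀‖ ^ q ≤ |C| * (5 * ρ) ^ q := by gcongr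
    have h11 : 4 * C' * ‖y - x₀‖ ^ q ≤ 4 * C' * ρ ^ q := by gcongr
    have h12 : 0 ≤ C' * ‖xm - y‖ ^ q * 2 := by positivity
    have := hnear xm hxm (by linarith) (u xm) (by rw [abs_lt]; constructor <;> linarith)
    linarith
  -- `u` is constant near an interior point
  obtain ⟨y₁, hy₁, hy₁x⟩ := Metric.mem_closure_iff.1 hx₀ ρ hρ
  obtain ⟨ρ2, hρ2, hball⟩ := Metric.mem_nhds_iff.1
    ((hS.dom.1.inter isOpen_ball).mem_nhds ⟨hy₁, by rw [mem_ball, dist_comm]; exact hy₁x⟩ :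
      Ω ∩ ball x₀ ρ ∈ 𝓝 y₁)
  have hy₁c := subset_closure hy₁
  have hlc : ∀ z ∈ ball y₁ ρ2, u z = u y₁ := by
    refine locconst (K := 4 * C') hq2 fun z hz z' hz' => ?_
    obtain ⟨hz1, hz2⟩ := hball hz
    obtain ⟨hz1', hz2'⟩ := hball hz'
    rw [mem_ball, dist_eq_norm] at hz2 hz2'
    have h1 := claim z' (subset_closure hz1') hz2' z (subset_closure hz1) (by linarith)
    have h2 := (hSle z (subset_closure hz1) z' (subset_closure hz1')).2
    have h3 : C' * ‖z - z'‖ ^ q * (ψ z + ψ z') ≤ C' * ‖z - z'‖ ^ q * 4 := by gcongr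
    linarith
  have h1 := hconst y₁ hy₁ (u y₁) (by
    filter_upwards [mem_nhdsWithin_of_mem_nhds (ball_mem_nhds y₁ hρ2)] with z hz
    exact hlc z hz)
  rw [dist_comm, dist_eq_norm] at hy₁x
  have h2 := claim y₁ hy₁c hy₁x x₀ hx₀ (by rw [sub_self, norm_zero]; positivity)
  have h3 := hup y₁ hy₁c (by linarith)
  rw [norm_sub_rev] at h2
  have h4 : C' * ‖y₁ - x₀‖ ^ q * (ψ x₀ + ψ y₁) ≤ C' * ρ ^ q * 4 := by
    have := (hSle x₀ hx₀ y₁ hy₁c)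
    gcongr
    · linarith [this.1]
    · exact this.2
  have h5 : |C| * ‖y₁ - x₀‖ ^ q ≤ |C| * (5 * ρ) ^ q := by
    have : ‖y₁ - x₀‖ ≤ 5 * ρ := by linarith
    gcongr
  have := hnear y₁ hy₁c (by linarith) (u y₁) (by rw [abs_lt]; constructor <;> linarith)
  linarith

end

/-! ### Subsolutions through jets, and duality -/

section
variable {N : ℕ}

/-- The quadratic polynomial of a superjet is itself an admissible test function. -/
lemma IsSubSol.jetSub {Ω : Set (EN N)} {nv : EN N → EN N} {α : ℝ}
    {F : EN N → EN N → Mat N → ℝ} {b : EN N → EN N} {c g u : EN N → ℝ}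
    (h : IsSubSol Ω F b α (fun x r => c x * |r| ^ α * r) g (BNeu nv) u) :
    JetSub Ω nv α F b c g u := by
  intro x hx p hp X hX hjet hn
  have hmax : IsLocalMaxOn (fun x' => u x' - qtest x p X x') (closure Ω) x := by
    filter_upwards [hjet] with x' hx'
    have h0 : qtest x p X x = 0 := by
      simp only [qtest, sub_self, inner_zero_right]
      have := qf_smul_arg X 0 0
      rw [zero_smul] at this
      rw [this]; norm_num
    rw [h0]
    simp only [qtest]
    linarith
  have hgr := qtest_gradient x p hX
  have hhe := qtest_hess x p hX
  rcases mem_closure_cases hx with hx' | hx'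
  · have := h.1 x hx' _ (qtest_contDiff x p X) hmax (by rwa [hgr])
    rwa [hgr, hhe] at this
  · have := h.2.2.1 x hx' _ (qtest_contDiff x p X) hmax (by rwa [hgr])
    rw [hgr, hhe] at this
    rcases min_le_iff.1 this with h1 | h1
    · linarith
    · exact absurd h1 (not_le.2 (hn hx'))

lemma IsSubSol.subJ {Ω : Set (EN N)} {nv : EN N → EN N} {α a A C₁ θ C₂ ν : ℝ}
    {F : EN N → EN N → Mat N → ℝ} {b : EN N → EN N} {c g : EN N → ℝ}
    (hS : Std Ω nv α a A C₁ θ C₂ ν F b c g) {m : ℕ} (hm : 1 ≤ m)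
    (hmβ : 1 < (2 * m - 1) * (α + 1)) {ψ : EN N → ℝ} {Cψ : ℝ}
    (hB : Barrier Ω nv (2 * m) ψ Cψ) {u : EN N → ℝ} (hu : UpperSemicontinuousOn u (closure Ω))
    (h : IsSubSol Ω F b α (fun x r => c x * |r| ^ α * r) g (BNeu nv) u) :
    SubJ Ω nv α F b c g (2 * m) u := by
  refine ⟨h.jetSub, fun x hx C hC => zer_of_const hS hm hmβ hB hu h.jetSub (fun x hx k hk => ?_)
    hx hC⟩
  have := h.2.1 x hx k hk
  rwa [← mul_assoc]

/-- A function touched from above by a smooth function satisfies the jet inequality with the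
derivatives of that function; an arbitrarily small multiple of the identity has to be added to
the Hessian and is removed by ellipticity. -/
lemma JetSub.test {Ω : Set (EN N)} {nv : EN N → EN N} {α a A C₁ θ C₂ ν : ℝ}
    {F : EN N → EN N → Mat N → ℝ} {b : EN N → EN N} {c g : EN N → ℝ}
    (hS : Std Ω nv α a A C₁ θ C₂ ν F b c g) {u : EN N → ℝ} (h : JetSub Ω nv α F b c g u)
    {x : EN N} (hx : x ∈ closure Ω) {φ : EN N → ℝ} (hφ : ContDiff ℝ 2 φ)
    (hmax : IsLocalMaxOn (fun x => u x - φ x) (closure Ω) x) (hp : gradient φ x ≠ 0)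
    (hn : x ∈ frontier Ω → 0 < ⟪gradient φ x, nv x⟫) :
    g x ≤ F x (gradient φ x) (hess φ x) + ⟪b x, gradient φ x⟫ * ‖gradient φ x‖ ^ α
      + c x * |u x| ^ α * u x := by
  obtain ⟨-, -, hF2⟩ := id hS.f2
  set p := gradient φ x with hpdef
  set X := hess φ x with hXdef
  have hX : X.IsSymm := hess_symm hφ x
  have key : ∀ ε : ℝ, 0 < ε → g x ≤ F x p X + ⟪b x, p⟫ * ‖p‖ ^ α + c x * |u x| ^ α * u x
      + A * ‖p‖ ^ α * (2 * N) * ε := by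
    intro ε hε
    have hjet : MJet (closure Ω) u x p (X + (2 * ε) • (1 : Mat N)) := by
      filter_upwards [hmax, (taylor_two hφ x hε).filter_mono nhdsWithin_le_nhds] with x' h1 h2
      have h3 := (abs_le.1 h2).2
      rw [qf_add, qf_smul, qf_one]
      linarith
    have h1 := h x hx p hp _ (hX.add (smul_one_isSymm _)) hjet hn
    have h2 := (hF2 x hx p hp X _ hX (smul_one_posSemidef (by positivity : 0 ≤ 2 * ε))).2
    rw [trace_smul_one] at h2
    linarith
  have hlim : Tendsto (fun ε : ℝ => F x p X + ⟪b x, p⟫ * ‖p‖ ^ α + c x * |u x| ^ α * u x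
      + A * ‖p‖ ^ α * (2 * N) * ε) (𝓝[>] 0)
      (𝓝 (F x p X + ⟪b x, p⟫ * ‖p‖ ^ α + c x * |u x| ^ α * u x)) := by
    have hc : Continuous fun ε : ℝ => F x p X + ⟪b x, p⟫ * ‖p‖ ^ α + c x * |u x| ^ α * u x
      + A * ‖p‖ ^ α * (2 * N) * ε := by fun_prop
    refine (hc.tendsto' 0 _ ?_).mono_left nhdsWithin_le_nhds
    rw [mul_zero, add_zero]
  refine ge_of_tendsto hlim ?_
  filter_upwards [self_mem_nhdsWithin] with ε hε
  exact key ε hε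

lemma SubJ.isSubSol {Ω : Set (EN N)} {nv : EN N → EN N} {α a A C₁ θ C₂ ν : ℝ}
    {F : EN N → EN N → Mat N → ℝ} {b : EN N → EN N} {c g : EN N → ℝ}
    (hS : Std Ω nv α a A C₁ θ C₂ ν F b c g) {q : ℕ} {u : EN N → ℝ}
    (h : SubJ Ω nv α F b c g q u) :
    IsSubSol Ω F b α (fun x r => c x * |r| ^ α * r) g (BNeu nv) u := by
  refine ⟨fun x hx φ hφ hmax hp => ?_, fun x hx k hk => ?_, fun x hx φ hφ hmax hp => ?_,
    fun x hx k hk => ?_⟩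
  · refine h.jet.test hS (subset_closure hx) hφ hmax hp fun hf => ?_
    rw [hS.dom.1.frontier_eq] at hf
    exact absurd hx hf.2
  · have hxc := subset_closure hx
    have hk0 : u x = k := hk.self_of_nhdsWithin hxc
    have := h.zer x hxc 0 (by
      filter_upwards [hk] with x' hx'
      rw [hx', hk0, zero_mul, add_zero])
    rw [hk0] at this
    beta_reduce
    rwa [mul_assoc]
  · rw [min_le_iff]
    by_cases hn : ⟪gradient φ x, nv x⟫ ≤ 0
    · exact Or.inr hn
    · left
      have := h.jet.test hS (frontier_subset_closure hx) hφ hmax hp fun _ => not_le.1 hn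
      linarith
  · rw [min_le_iff]
    right
    rw [BNeu, inner_zero_left]

lemma gradient_neg_fun (φ : EN N → ℝ) (x : EN N) :
    gradient (fun y => -φ y) x = -gradient φ x := by
  simp only [gradient, fderiv_fun_neg, map_neg]

lemma hess_neg_fun (φ : EN N → ℝ) (x : EN N) : hess (fun y => -φ y) x = -hess φ x := by
  ext i j
  have := iteratedFDeriv_neg_apply (𝕜 := ℝ) (i := 2) (f := φ) (x := x)
  simp only [hess, Matrix.of_apply, Matrix.neg_apply]
  rw [show (fun y => -φ y) = -φ from rfl, this]
  rfl

lemma dualF_dualF (F : EN N → EN N → Mat N → ℝ) : dualF (dualF F) = F := by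
  funext x p X
  simp only [dualF, neg_neg]

lemma IsSuperSol.dual {Ω : Set (EN N)} {nv : EN N → EN N} {α : ℝ}
    {F : EN N → EN N → Mat N → ℝ} {b : EN N → EN N} {c g v : EN N → ℝ}
    (h : IsSuperSol Ω F b α (fun x r => c x * |r| ^ α * r) g (BNeu nv) v) :
    IsSubSol Ω (dualF F) b α (fun x r => c x * |r| ^ α * r) (fun x => -g x) (BNeu nv)
      (fun x => -v x) := by
  have hloc : ∀ (φ : EN N → ℝ) x, IsLocalMaxOn (fun x => -v x - φ x) (closure Ω) x →
      IsLocalMinOn (fun x => v x - -φ x) (closure Ω) x := by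
    intro φ x hx
    filter_upwards [hx] with x' hx'
    linarith
  refine ⟨fun x hx φ hφ hmax hp => ?_, fun x hx k hk => ?_, fun x hx φ hφ hmax hp => ?_,
    fun x hx k hk => ?_⟩
  · have := h.1 x hx (fun y => -φ y) hφ.neg (hloc φ x hmax)
      (by rw [gradient_neg_fun]; exact neg_ne_zero.2 hp)
    rw [gradient_neg_fun, hess_neg_fun, norm_neg, inner_neg_right] at this
    simp only [dualF, abs_neg]
    linarith
  · have := h.2.1 x hx (-k) (by filter_upwards [hk] with x' hx'; linarith)
    simp only [abs_neg] at this
    linarith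
  · have := h.2.2.1 x hx (fun y => -φ y) hφ.neg (hloc φ x hmax)
      (by rw [gradient_neg_fun]; exact neg_ne_zero.2 hp)
    rw [gradient_neg_fun, hess_neg_fun, norm_neg, inner_neg_right] at this
    simp only [dualF, abs_neg, BNeu, inner_neg_left] at this ⊢
    rcases le_max_iff.1 this with h1 | h1
    · exact min_le_iff.2 (Or.inl (by linarith))
    · exact min_le_iff.2 (Or.inr (by linarith))
  · rw [min_le_iff]
    right
    rw [BNeu, inner_zero_left]

lemma IsSubSol.dual {Ω : Set (EN N)} {nv : EN N → EN N} {α : ℝ}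
    {F : EN N → EN N → Mat N → ℝ} {b : EN N → EN N} {c g v : EN N → ℝ}
    (h : IsSubSol Ω (dualF F) b α (fun x r => c x * |r| ^ α * r) (fun x => -g x) (BNeu nv)
      (fun x => -v x)) :
    IsSuperSol Ω F b α (fun x r => c x * |r| ^ α * r) g (BNeu nv) v := by
  have hloc : ∀ (φ : EN N → ℝ) x, IsLocalMinOn (fun x => v x - φ x) (closure Ω) x →
      IsLocalMaxOn (fun x => -v x - -φ x) (closure Ω) x := by
    intro φ x hx
    filter_upwards [hx] with x' hx'
    linarith
  refine ⟨fun x hx φ hφ hmax hp => ?_, fun x hx k hk => ?_, fun x hx φ hφ hmax hp => ?_,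
    fun x hx k hk => ?_⟩
  · have := h.1 x hx (fun y => -φ y) hφ.neg (hloc φ x hmax)
      (by rw [gradient_neg_fun]; exact neg_ne_zero.2 hp)
    rw [gradient_neg_fun, hess_neg_fun, norm_neg, inner_neg_right] at this
    simp only [dualF, abs_neg, neg_neg] at this
    linarith
  · have := h.2.1 x hx (-k) (by filter_upwards [hk] with x' hx'; linarith)
    simp only [abs_neg] at this
    linarith
  · have := h.2.2.1 x hx (fun y => -φ y) hφ.neg (hloc φ x hmax)
      (by rw [gradient_neg_fun]; exact neg_ne_zero.2 hp)
    rw [gradient_neg_fun, hess_neg_fun, norm_neg, inner_neg_right] at this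
    simp only [dualF, abs_neg, BNeu, inner_neg_left, neg_neg] at this ⊢
    rcases min_le_iff.1 this with h1 | h1
    · exact le_max_iff.2 (Or.inl (by linarith))
    · exact le_max_iff.2 (Or.inr (by linarith))
  · rw [le_max_iff]
    right
    rw [BNeu, inner_zero_left]

lemma Std.dual {Ω : Set (EN N)} {nv : EN N → EN N} {α a A C₁ θ C₂ ν : ℝ}
    {F : EN N → EN N → Mat N → ℝ} {b : EN N → EN N} {c g : EN N → ℝ}
    (hS : Std Ω nv α a A C₁ θ C₂ ν F b c g) :
    Std Ω nv α a A C₁ θ C₂ ν (dualF F) b c (fun x => -g x) := by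
  have hsym : ∀ {X : Mat N}, X.IsSymm → (-X).IsSymm := fun {X} h => by
    rw [Matrix.IsSymm, Matrix.transpose_neg, h.eq]
  refine ⟨hS.dom, hS.hα, ?_, ?_, ?_, ?_, hS.bc, hS.cc, hS.gc.neg, hS.neg⟩
  · intro x hx t ht μ hμ p hp X hX
    have := hS.f1 x hx t ht μ hμ (-p) (neg_ne_zero.2 hp) (-X) (hsym hX)
    rw [smul_neg, smul_neg] at this
    simp only [dualF, this]
    ring
  · refine ⟨hS.f2.1, hS.f2.2.1, fun x hx p hp M P hM hP => ?_⟩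
    have hPs : P.IsSymm := by
      have := hP.isHermitian
      rwa [Matrix.IsHermitian, Matrix.conjTranspose_eq_transpose_of_trivial] at this
    have := hS.f2.2.2 x hx (-p) (neg_ne_zero.2 hp) (-(M + P)) P (hsym (hM.add hPs)) hP
    rw [norm_neg, neg_add, neg_add_cancel_right] at this
    simp only [dualF, neg_add]
    constructor <;> linarith [this.1, this.2]
  · refine ⟨hS.f3.1, hS.f3.2.1, fun x hx y hy p hp X hX => ?_⟩
    have := hS.f3.2.2 x hx y hy (-p) (neg_ne_zero.2 hp) (-X) (hsym hX)
    rw [norm_neg, matNorm_neg, abs_sub_comm] at this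
    simp only [dualF]
    rwa [neg_sub_neg]
  · refine ⟨hS.f4.1, hS.f4.2.1, fun x hx p hp q hq X hX => ?_⟩
    have := hS.f4.2.2 x hx (-p) (neg_ne_zero.2 hp) (-q) (by rwa [norm_neg, norm_neg]) (-X) (hsym hX)
    rw [norm_neg, norm_neg, matNorm_neg, abs_sub_comm, ← neg_add] at this
    simp only [dualF]
    rwa [neg_sub_neg]

end

/-! ### The comparison principle -/

section
variable {N : ℕ}

/-- Expansion of the concave penalty `K (‖w‖ - L ‖w‖ ^ 2)`. -/
lemma concave_pen_exp {w : EN N} (hw : w ≠ 0) {K L : ℝ} (hK : 0 < K) (hL : 0 < L)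
    (hwL : ‖w‖ * L ≤ 1 / 4) :
    ∀ᶠ d in 𝓝 (0 : EN N), K * (‖w + d‖ - L * ‖w + d‖ ^ 2) ≤
      K * (‖w‖ - L * ‖w‖ ^ 2) + K * (1 - 2 * L * ‖w‖) * ⟪‖w‖⁻¹ • w, d⟫
      + 1 / 2 * (2 * (K * (1 - 2 * L * ‖w‖)) / ‖w‖ * (‖d‖ ^ 2 - ⟪‖w‖⁻¹ • w, d⟫ ^ 2)
        + (-(K * L)) * ⟪‖w‖⁻¹ • w, d⟫ ^ 2) := by
  have hr : 0 < ‖w‖ := norm_pos_iff.2 hw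
  filter_upwards [norm_exp hw (half_pos hL)] with d hd
  have h1 : ‖w + d‖ ^ 2 = ‖w‖ ^ 2 + 2 * ‖w‖ * ⟪‖w‖⁻¹ • w, d⟫ + ‖d‖ ^ 2 := by
    rw [norm_add_sq_real, real_inner_smul_left]
    field_simp
  have h2 : ⟪‖w‖⁻¹ • w, d⟫ ^ 2 ≤ ‖d‖ ^ 2 := dir_sq_le hw d
  set s := ⟪‖w‖⁻¹ • w, d⟫
  set r := ‖w‖
  set D := ‖d‖ ^ 2
  rw [h1]
  have h3 : (D - s ^ 2) / (2 * r) ≤ (1 - 2 * L * r) / r * (D - s ^ 2) := by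
    rw [div_mul_eq_mul_div, div_le_div_iff₀ (by positivity) hr]
    have : 0 ≤ (D - s ^ 2) * r * (1 - 4 * L * r) :=
      mul_nonneg (mul_nonneg (by linarith) hr.le) (by linarith)
    linarith
  have h4 : ‖w + d‖ - L * (r ^ 2 + 2 * r * s + D) ≤
      (r - L * r ^ 2) + (1 - 2 * L * r) * s + (1 - 2 * L * r) / r * (D - s ^ 2) - L / 2 * s ^ 2 := by
    have := mul_le_mul_of_nonneg_left h2 hL.le
    linarith
  refine (mul_le_mul_of_nonneg_left h4 hK.le).trans (le_of_eq ?_)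
  field_simp
  ring

lemma bound_on {Ω : Set (EN N)} {nv : EN N → EN N} (h : IsC2Domain Ω nv) {E : Type*}
    [SeminormedAddCommGroup E] {f : EN N → E} (hf : ContinuousOn f (closure Ω)) :
    ∃ B, 0 ≤ B ∧ ∀ x ∈ closure Ω, ‖f x‖ ≤ B := by
  obtain ⟨B, hB⟩ := (dom_compact h).exists_bound_of_continuousOn hf
  exact ⟨max B 0, le_max_right _ _, fun x hx => (hB x hx).trans (le_max_left _ _)⟩

lemma usc_bound {K : Set (EN N)} (hK : IsCompact K) {u : EN N → ℝ}
    (hu : UpperSemicontinuousOn u K) : ∃ B, 0 ≤ B ∧ ∀ x ∈ K, u x ≤ B := by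
  obtain ⟨B, hB⟩ := hu.bddAbove_of_isCompact hK
  exact ⟨max B 0, le_max_right _ _, fun x hx => (hB ⟨x, hx, rfl⟩).trans (le_max_left _ _)⟩

lemma usc_pair {K : Set (EN N)} {u w : EN N → ℝ} (hu : UpperSemicontinuousOn u K)
    (hw : UpperSemicontinuousOn w K) {Φ : EN N × EN N → ℝ} (hΦ : ContinuousOn Φ (K ×ˢ K)) :
    UpperSemicontinuousOn (fun z : EN N × EN N => u z.1 + w z.2 - Φ z) (K ×ˢ K) := by
  have h1 : UpperSemicontinuousOn (fun z : EN N × EN N => u z.1) (K ×ˢ K) :=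
    fun z hz t ht => (continuous_fst.continuousWithinAt.tendsto_nhdsWithin
      (fun z hz => hz.1)).eventually (hu z.1 hz.1 t ht)
  have h2 : UpperSemicontinuousOn (fun z : EN N × EN N => w z.2) (K ×ˢ K) :=
    fun z hz t ht => (continuous_snd.continuousWithinAt.tendsto_nhdsWithin
      (fun z hz => hz.2)).eventually (hw z.2 hz.2 t ht)
  have h := (h1.add h2).add hΦ.neg.upperSemicontinuousOn
  simp only [sub_eq_add_neg]
  exact h

lemma ph_bound {α : ℝ} (hα : -1 < α) {T s : ℝ} (hs : |s| ≤ T) : |(|s| ^ α * s)| ≤ T ^ (α + 1) := by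
  rw [abs_rpow_mul_self hα]
  exact Real.rpow_le_rpow (abs_nonneg _) hs (by linarith)

/-- For `L` large, half of the gain `4 K L` from the concavity of the penalty survives the error
terms. -/
lemma gain_arith {α H1 K L k C X B0 S gd : ℝ} (hα : -1 < α) (hK : 0 < K) (h1 : K / 2 ≤ H1)
    (h2 : H1 ≤ K) (hk : 0 < k) (hL : 0 < L) (hC : 0 ≤ C) (hX : X ≤ B0) (hCL : C * B0 ≤ 2 * k * L)
    (hB0 : 0 ≤ B0) (h : gd ≤ S + C * H1 ^ (α + 1) * X - k * H1 ^ α * (4 * K * L)) :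
    2 * k * L * (K / 2) ^ (α + 1) ≤ S - gd := by
  have hH : 0 < H1 := by linarith
  set P := H1 ^ α with hP
  have hP0 : 0 < P := by positivity
  have e1 : H1 ^ (α + 1) = P * H1 := by rw [Real.rpow_add hH, Real.rpow_one]
  have e2 : (K / 2) ^ (α + 1) ≤ P * H1 := by
    rw [← e1]; exact Real.rpow_le_rpow (by positivity) h1 (by linarith)
  rw [e1] at h
  have hPH : 0 ≤ P * H1 := by positivity
  have h3 : C * (P * H1) * X ≤ 2 * k * L * (P * H1) := by
    calc C * (P * H1) * X ≤ C * (P * H1) * B0 := by gcongr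
      _ = C * B0 * (P * H1) := by ring
      _ ≤ _ := by gcongr
  have h4 : k * P * (4 * H1 * L) ≤ k * P * (4 * K * L) := by gcongr
  have h5 : 2 * k * L * (K / 2) ^ (α + 1) ≤ 2 * k * L * (P * H1) := by gcongr
  linarith

/-- The one-sided Lipschitz estimate behind the comparison principle: off the diagonal, `u x + w y`
exceeds a nonnegative bound for `u + w` at most linearly. The concave penalty
`K (‖x - y‖ - L ‖x - y‖ ^ 2)` produces a negative second order term which absorbs all errors once
`L` and then `K` are large. -/
lemma lip_est {Ω : Set (EN N)} {nv : EN N → EN N} {α a A C₁ θ C₂ ν : ℝ}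
    {F : EN N → EN N → Mat N → ℝ} {b : EN N → EN N} {c g : EN N → ℝ}
    (hS : Std Ω nv α a A C₁ θ C₂ ν F b c g) {q : ℕ} (hq : 1 ≤ q) {ψ : EN N → ℝ} {Cψ : ℝ}
    (hB : Barrier Ω nv q ψ Cψ) {u w : EN N → ℝ} (hu : UpperSemicontinuousOn u (closure Ω))
    (hw : UpperSemicontinuousOn w (closure Ω)) (hju : JetSub Ω nv α F b c g u)
    (hjw : JetSub Ω nv α (dualF F) b c (fun x => -g x) w) {M : ℝ} (hM : 0 ≤ M)
    (hd : ∀ x ∈ closure Ω, u x + w x ≤ M) :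
    ∃ Λ > 0, ∀ x ∈ closure Ω, ∀ y ∈ closure Ω, u x + w y ≤ M + Λ * ‖x - y‖ := by
  obtain ⟨r0, hr0, hr01, C, k, κ2, hC0, hk, hκ2, hdbl⟩ := doubling hS hB (κ := 2) (by norm_num)
  have hcpt := dom_compact hS.dom
  obtain ⟨Bu, hBu0, hBu⟩ := usc_bound hcpt hu
  obtain ⟨Bw, hBw0, hBw⟩ := usc_bound hcpt hw
  obtain ⟨Bb, hBb0, hBb⟩ := bound_on hS.dom hS.bc
  obtain ⟨Bc, hBc0, hBc⟩ := bound_on hS.dom hS.cc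
  obtain ⟨Bg, hBg0, hBg⟩ := bound_on hS.dom hS.gc
  set B0 := 1 + 2 * Bb with hB0
  set L := 1 + κ2 + C * B0 / (2 * k) with hLdef
  have hL : 0 < L := by positivity
  have hCL : C * B0 ≤ 2 * k * L := by
    have : 2 * k * L = 2 * k * (1 + κ2) + C * B0 := by rw [hLdef]; field_simp
    rw [this]
    have : 0 ≤ 2 * k * (1 + κ2) := by positivity
    linarith
  have hLκ : κ2 ≤ L := by
    have : 0 ≤ C * B0 / (2 * k) := by positivity
    rw [hLdef]; linarith
  set r1 := min r0 (1 / (4 * L)) with hr1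
  have hr1p : 0 < r1 := by positivity
  set T := Bu + Bw with hT
  set S0 := 2 * (Bc * T ^ (α + 1)) with hS0
  obtain ⟨K, hKp, hKT, hKbig⟩ : ∃ K : ℝ, 0 < K ∧ T ≤ K * r1 ∧
      S0 + 2 * Bg < 2 * k * L * (K / 2) ^ (α + 1) := by
    have ht : Tendsto (fun K : ℝ => 2 * k * L * (K / 2) ^ (α + 1)) atTop atTop :=
      ((tendsto_rpow_atTop (by linarith [hS.hα] : 0 < α + 1)).comp
        (tendsto_id.atTop_div_const (by norm_num : (0 : ℝ) < 2))).const_mul_atTop (by positivity)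
    obtain ⟨K, h1, h2, h3⟩ := ((eventually_gt_atTop (0 : ℝ)).and ((eventually_ge_atTop (T / r1)).and
      (ht.eventually_gt_atTop (S0 + 2 * Bg)))).exists
    exact ⟨K, h1, (div_le_iff₀ hr1p).1 h2, h3⟩
  set Hf : EN N → ℝ := fun z => K * (‖z‖ - L * ‖z‖ ^ 2) with hHf
  -- the penalty is linearly bounded from below on `‖z‖ ≤ r1`
  have hHlow : ∀ z : EN N, ‖z‖ ≤ r1 → K * ‖z‖ / 2 ≤ Hf z := by
    intro z hz
    have h1 : ‖z‖ * L ≤ 1 / 4 := by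
      have := mul_le_mul_of_nonneg_right (hz.trans (min_le_right _ _)) hL.le
      rwa [div_mul_eq_mul_div, mul_comm 4 L, ← div_div, one_mul, div_self hL.ne'] at this
    have h2 : 0 ≤ K * ‖z‖ * (1 / 2 - ‖z‖ * L) := by
      apply mul_nonneg (by positivity); linarith
    simp only [hHf]
    linarith
  have hHup : ∀ z : EN N, Hf z ≤ K * ‖z‖ := fun z => by
    have : 0 ≤ K * (L * ‖z‖ ^ 2) := by positivity
    simp only [hHf]; linarith
  have hψ2 : ∀ x ∈ closure Ω, ∀ y ∈ closure Ω, 2 ≤ ψ x + ψ y ∧ ψ x + ψ y ≤ 4 := fun x hx y hy =>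
    ⟨by linarith [hB.one_le x hx, hB.one_le y hy], by linarith [hB.le_two x hx, hB.le_two y hy]⟩
  have hclaim : ∀ x ∈ closure Ω, ∀ y ∈ closure Ω, ‖x - y‖ ≤ r1 →
      u x + w y - Hf (x - y) * (ψ x + ψ y) ≤ M := by
    intro x₁ hx₁ y₁ hy₁ hxy₁
    set P : Set (EN N × EN N) := (closure Ω ×ˢ closure Ω) ∩ {z | ‖z.1 - z.2‖ ≤ r1} with hP
    have hPc : IsCompact P := (hcpt.prod hcpt).inter_right
      (isClosed_le (by fun_prop) continuous_const)
    have hΦ : ContinuousOn (fun z : EN N × EN N => Hf (z.1 - z.2) * (ψ z.1 + ψ z.2))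
        (closure Ω ×ˢ closure Ω) := by
      refine ContinuousOn.mul ?_ ((hB.cont.comp continuousOn_fst fun z hz => hz.1).add
        (hB.cont.comp continuousOn_snd fun z hz => hz.2))
      simp only [hHf]
      fun_prop
    obtain ⟨z, hz, hmax⟩ := ((usc_pair hu hw hΦ).mono inter_subset_left).exists_isMaxOn
      (s := P) ⟨(x₁, y₁), ⟨hx₁, hy₁⟩, hxy₁⟩ hPc
    obtain ⟨x, y⟩ := z
    have h0 : u x₁ + w y₁ - Hf (x₁ - y₁) * (ψ x₁ + ψ y₁) ≤ u x + w y - Hf (x - y) * (ψ x + ψ y) :=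
      hmax (show (x₁, y₁) ∈ P from ⟨⟨hx₁, hy₁⟩, hxy₁⟩)
    by_contra hcon
    push Not at hcon
    have hMlt := hcon.trans_le h0
    have hx : x ∈ closure Ω := hz.1.1
    have hy : y ∈ closure Ω := hz.1.2
    have hxyr : ‖x - y‖ ≤ r1 := hz.2
    obtain ⟨hs2, hs4⟩ := hψ2 x hx y hy
    have hHl := hHlow _ hxyr
    have hKr : 0 ≤ K * ‖x - y‖ := by positivity
    have hpen : K * ‖x - y‖ ≤ Hf (x - y) * (ψ x + ψ y) := by
      have := mul_le_mul hHl hs2 (by norm_num) (by linarith)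
      linarith
    have hxy : x ≠ y := by
      rintro rfl
      rw [sub_self] at hMlt hpen
      rw [norm_zero, mul_zero] at hpen
      linarith [hd x hx]
    have hlt : ‖x - y‖ < r1 := by
      refine lt_of_le_of_ne hxyr fun he => ?_
      rw [he] at hpen
      linarith [hBu x hx, hBw y hy]
    have hr : 0 < ‖x - y‖ := norm_pos_iff.2 (sub_ne_zero.2 hxy)
    have hrL : ‖x - y‖ * L ≤ 1 / 4 := by
      have := mul_le_mul_of_nonneg_right (hxyr.trans (min_le_right _ _)) hL.le
      rwa [div_mul_eq_mul_div, mul_comm 4 L, ← div_div, one_mul, div_self hL.ne'] at this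
    set H1 := K * (1 - 2 * L * ‖x - y‖) with hH1
    have hH1l : K / 2 ≤ H1 := by
      have : 0 ≤ K * (1 / 4 - ‖x - y‖ * L) := mul_nonneg hKp.le (by linarith)
      rw [hH1]; linarith
    have hH1u : H1 ≤ K := by
      have : 0 ≤ K * (2 * L * ‖x - y‖) := by positivity
      rw [hH1]; linarith
    have hexp := concave_pen_exp (sub_ne_zero.2 hxy) hKp hL hrL
    have hKL : 0 < K * L := by positivity
    have hev : ∀ᶠ z in 𝓝 (x, y), z.1 ∈ closure Ω → z.2 ∈ closure Ω →
        u z.1 + w z.2 - Hf (z.1 - z.2) * (ψ z.1 + ψ z.2)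
          ≤ u x + w y - Hf (x - y) * (ψ x + ψ y) := by
      have hc : Tendsto (fun z : EN N × EN N => ‖z.1 - z.2‖) (𝓝 (x, y)) (𝓝 ‖x - y‖) :=
        (continuous_fst.sub continuous_snd).norm.tendsto (x, y)
      filter_upwards [hc.eventually (gt_mem_nhds hlt)] with z hz h1 h2
      exact hmax (show z ∈ P from ⟨⟨h1, h2⟩, hz.le⟩)
    have hq1 : (1 : ℝ) ≤ q := by exact_mod_cast hq
    have hrH : 0 ≤ K * ‖x - y‖ * (1 / 4 - ‖x - y‖ * L) := mul_nonneg hKr (by linarith)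
    have hKLr : 0 ≤ K * (‖x - y‖ * (L * ‖x - y‖)) := by positivity
    have hfin := hdbl u w hu hw hju hjw x hx y hy hxy (hxyr.trans (min_le_left _ _)) Hf
      (Hf (x - y)) H1 (-(K * L)) (4 * K * L) (by linarith)
      (by
        refine (div_le_self (mul_nonneg hr.le (by linarith)) hq1).trans ?_
        simp only [hHf, hH1]; linarith)
      (by simp only [hHf, hH1]; linarith)
      (by
        have : 0 ≤ 2 * H1 / ‖x - y‖ := by
          have : 0 ≤ H1 := by linarith
          positivity
        linarith)
      hexp hev (by positivity)
      (Or.inr (by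
        have h1 : κ2 * H1 ≤ L * K := mul_le_mul hLκ hH1u (by linarith) hL.le
        linarith))
    have hX : ‖x - y‖ ^ (2 * min θ ν - 1) + ‖b x - b y‖ ≤ B0 := by
      have h1 : ‖x - y‖ ^ (2 * min θ ν - 1) ≤ 1 := by
        apply Real.rpow_le_one hr.le ((hxyr.trans (min_le_left _ _)).trans hr01)
        have : 1 / 2 < min θ ν := lt_min hS.f3.2.1.1 hS.f4.2.1.1
        linarith
      have h2 := (norm_sub_le (b x) (b y)).trans (add_le_add (hBb x hx) (hBb y hy))
      rw [hB0]; linarith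
    have hga := gain_arith hS.hα hKp hH1l hH1u hk hL hC0 hX hCL (by positivity) hfin
    have hux : |u x| ≤ T := abs_le.2 ⟨by linarith [hBw y hy], by linarith [hBu x hx]⟩
    have hwy : |w y| ≤ T := abs_le.2 ⟨by linarith [hBu x hx], by linarith [hBw y hy]⟩
    have hcb : ∀ x ∈ closure Ω, ∀ s, |s| ≤ T → c x * (|s| ^ α * s) ≤ Bc * T ^ (α + 1) := by
      intro x hx s hs
      refine (le_abs_self _).trans ?_
      rw [abs_mul]
      exact mul_le_mul (hBc x hx) (ph_bound hS.hα hs) (abs_nonneg _) hBc0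
    have h1 := hcb x hx _ hux
    have h2 := hcb y hy _ hwy
    have h3 := (abs_le.1 (hBg x hx)).1
    have h4 := (abs_le.1 (hBg y hy)).2
    linarith
  refine ⟨4 * K, by positivity, fun x hx y hy => ?_⟩
  rcases le_total ‖x - y‖ r1 with h | h
  · have h1 := hclaim x hx y hy h
    obtain ⟨hs2, hs4⟩ := hψ2 x hx y hy
    have h2 : Hf (x - y) * (ψ x + ψ y) ≤ K * ‖x - y‖ * 4 :=
      mul_le_mul (hHup _) hs4 (by linarith) (by positivity)
    linarith
  · have h1 := hKT.trans (mul_le_mul_of_nonneg_left h hKp.le)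
    have h2 : 0 ≤ K * ‖x - y‖ := by positivity
    linarith [hBu x hx, hBw y hy]

end

section
variable {N : ℕ}

/-- What holds at a maximum point of the doubled functional with penalty `j ‖x - y‖ ^ (2 m)`. -/
lemma dbl_step {Ω : Set (EN N)} {nv : EN N → EN N} {α a A C₁ θ C₂ ν : ℝ}
    {F : EN N → EN N → Mat N → ℝ} {b : EN N → EN N} {c g : EN N → ℝ}
    (hS : Std Ω nv α a A C₁ θ C₂ ν F b c g) {m : ℕ} (hm : 1 ≤ m) {ψ : EN N → ℝ} {Cψ : ℝ}
    (hB : Barrier Ω nv (2 * m) ψ Cψ) {u w : EN N → ℝ} (hu : UpperSemicontinuousOn u (closure Ω))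
    (hw : UpperSemicontinuousOn w (closure Ω)) (hju : SubJ Ω nv α F b c g (2 * m) u)
    (hjw : SubJ Ω nv α (dualF F) b c (fun x => -g x) (2 * m) w) (Λ : ℝ) (hΛ : 0 < Λ) :
    ∃ r0 > 0, ∃ C, 0 ≤ C ∧ ∀ j : ℝ, 0 < j → ∀ x ∈ closure Ω, ∀ y ∈ closure Ω,
      ‖x - y‖ ≤ r0 → 2 * (j * ‖x - y‖ ^ (2 * m)) ≤ Λ * ‖x - y‖ →
      (∀ x' ∈ closure Ω, ∀ y' ∈ closure Ω, u x' + w y' - j * ‖x' - y'‖ ^ (2 * m) * (ψ x' + ψ y')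
        ≤ u x + w y - j * ‖x - y‖ ^ (2 * m) * (ψ x + ψ y)) →
      g x - g y ≤ c x * (|u x| ^ α * u x) + c y * (|w y| ^ α * w y)
        + C * (‖x - y‖ ^ (2 * min θ ν - 1) + ‖b x - b y‖) := by
  have hm1 : (1 : ℝ) ≤ m := by exact_mod_cast hm
  have hκ1 : (1 : ℝ) ≤ 1 + 9 * m := by linarith
  obtain ⟨r0, hr0, hr01, C, k, κ2, hC0, hk, hκ2, hdbl⟩ := doubling hS hB hκ1
  refine ⟨r0, hr0, C * (m * Λ) ^ (α + 1), by positivity, ?_⟩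
  intro j hj x hx y hy hxr hpen hmax
  by_cases hxy : x = y
  · subst hxy
    rw [sub_self, norm_zero, zero_pow (by omega), mul_zero, zero_mul, sub_zero] at hmax
    have hψ : ∀ x' ∈ closure Ω, j * ‖x' - x‖ ^ (2 * m) * (ψ x' + ψ x) ≤ 4 * j * ‖x' - x‖ ^ (2 * m) :=
      fun x' hx' => by
        have h0 : 0 ≤ j * ‖x' - x‖ ^ (2 * m) := by positivity
        have := mul_le_mul_of_nonneg_left (add_le_add (hB.le_two x' hx') (hB.le_two x hx)) h0
        linarith
    have h1 := hju.zer x hx (4 * j) (by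
      filter_upwards [self_mem_nhdsWithin] with x' hx'
      linarith [hmax x' hx' x hx, hψ x' hx'])
    have h2 := hjw.zer x hx (4 * j) (by
      filter_upwards [self_mem_nhdsWithin] with x' hx'
      have h3 := hmax x hx x' hx'
      rw [norm_sub_rev, add_comm (ψ x)] at h3
      linarith [hψ x' hx'])
    have h4 : 0 ≤ C * (m * Λ) ^ (α + 1) * (‖x - x‖ ^ (2 * min θ ν - 1) + ‖b x - b x‖) := by
      positivity
    linarith
  · have hr : 0 < ‖x - y‖ := norm_pos_iff.2 (sub_ne_zero.2 hxy)
    have hexp := pow_pen_exp (sub_ne_zero.2 hxy) hm hj.le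
    set H0 := j * ‖x - y‖ ^ (2 * m) with hH0
    have hH0p : 0 < H0 := by positivity
    set H1 := 2 * m * H0 / ‖x - y‖ with hH1
    have hH1p : 0 < H1 := by positivity
    have hH1u : H1 ≤ m * Λ := by
      rw [hH1, div_le_iff₀ hr]
      have := mul_le_mul_of_nonneg_left hpen (by linarith : (0 : ℝ) ≤ m)
      linarith
    have hfin := hdbl u w hu hw hju.jet hjw.jet x hx y hy hxy hxr (fun z => j * ‖z‖ ^ (2 * m))
      H0 H1 ((1 + 9 * m) * H1 / ‖x - y‖) 0 hH1p
      (by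
        rw [hH1]; push_cast
        apply le_of_eq; field_simp)
      (by
        have h1 : (1 + 9 * m) * ‖x - y‖ * H1 = ((1 + 9 * m) * (2 * m)) * H0 := by
          rw [hH1]; field_simp
        rw [h1]
        exact le_mul_of_one_le_left hH0p.le
          (one_le_mul_of_one_le_of_one_le hκ1 (by linarith)))
      le_rfl hexp
      (Eventually.of_forall fun z h1 h2 => hmax z.1 h1 z.2 h2) le_rfl (Or.inl rfl)
    rw [mul_zero, sub_zero] at hfin
    have hX : 0 ≤ ‖x - y‖ ^ (2 * min θ ν - 1) + ‖b x - b y‖ := by positivity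
    have h1 : H1 ^ (α + 1) ≤ (m * Λ) ^ (α + 1) :=
      Real.rpow_le_rpow hH1p.le hH1u (by linarith [hS.hα])
    have h2 := mul_le_mul_of_nonneg_right (mul_le_mul_of_nonneg_left h1 hC0) hX
    linarith

/-- The comparison principle, for `w = -v`. -/
lemma comparison {Ω : Set (EN N)} {nv : EN N → EN N} {α a A C₁ θ C₂ ν : ℝ}
    {F : EN N → EN N → Mat N → ℝ} {b : EN N → EN N} {c g : EN N → ℝ}
    (hS : Std Ω nv α a A C₁ θ C₂ ν F b c g) {m : ℕ} (hm : 1 ≤ m) {ψ : EN N → ℝ} {Cψ : ℝ}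
    (hB : Barrier Ω nv (2 * m) ψ Cψ) {u w : EN N → ℝ} (hu : UpperSemicontinuousOn u (closure Ω))
    (hw : UpperSemicontinuousOn w (closure Ω)) (hju : SubJ Ω nv α F b c g (2 * m) u)
    (hjw : SubJ Ω nv α (dualF F) b c (fun x => -g x) (2 * m) w) :
    ∀ x ∈ closure Ω, u x + w x ≤ 0 := by
  by_contra hcon
  push Not at hcon
  obtain ⟨x₀, hx₀, hpos⟩ := hcon
  have hcpt := dom_compact hS.dom
  obtain ⟨xb, hxb, hxbmax⟩ := (hu.add hw).exists_isMaxOn ⟨x₀, hx₀⟩ hcpt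
  set M := u xb + w xb with hM
  have hMp : 0 < M := hpos.trans_le (hxbmax hx₀)
  obtain ⟨Λ, hΛ, hlip⟩ := lip_est hS (by omega) hB hu hw hju.jet hjw.jet hMp.le
    (fun x hx => hxbmax hx)
  obtain ⟨r0, hr0, C, hC0, hstep⟩ := dbl_step hS hm hB hu hw hju hjw Λ hΛ
  obtain ⟨Bu, hBu0, hBu⟩ := usc_bound hcpt hu
  obtain ⟨Bw, hBw0, hBw⟩ := usc_bound hcpt hw
  have hex : ∀ n : ℕ, ∃ z : EN N × EN N, z.1 ∈ closure Ω ∧ z.2 ∈ closure Ω ∧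
      ∀ x' ∈ closure Ω, ∀ y' ∈ closure Ω,
        u x' + w y' - ((n : ℝ) + 1) * ‖x' - y'‖ ^ (2 * m) * (ψ x' + ψ y')
        ≤ u z.1 + w z.2 - ((n : ℝ) + 1) * ‖z.1 - z.2‖ ^ (2 * m) * (ψ z.1 + ψ z.2) := by
    intro n
    have hΦ : ContinuousOn (fun z : EN N × EN N => ((n : ℝ) + 1) * ‖z.1 - z.2‖ ^ (2 * m)
        * (ψ z.1 + ψ z.2)) (closure Ω ×ˢ closure Ω) := by
      refine ContinuousOn.mul (by fun_prop) ((hB.cont.comp continuousOn_fst fun z hz => hz.1).add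
        (hB.cont.comp continuousOn_snd fun z hz => hz.2))
    obtain ⟨z, hz, hmax⟩ := (usc_pair hu hw hΦ).exists_isMaxOn
      (s := closure Ω ×ˢ closure Ω) ⟨(x₀, x₀), hx₀, hx₀⟩ (hcpt.prod hcpt)
    exact ⟨z, hz.1, hz.2, fun x' hx' y' hy' => hmax (show (x', y') ∈ closure Ω ×ˢ closure Ω from ⟨hx', hy'⟩)⟩
  choose z hz1 hz2 hzmax using hex
  have hval : ∀ n : ℕ, M + 2 * (((n : ℝ) + 1) * ‖(z n).1 - (z n).2‖ ^ (2 * m))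
      ≤ u (z n).1 + w (z n).2 := by
    intro n
    have h1 := hzmax n xb hxb xb hxb
    rw [sub_self, norm_zero, zero_pow (by omega), mul_zero, zero_mul, sub_zero] at h1
    have h0 : 0 ≤ ((n : ℝ) + 1) * ‖(z n).1 - (z n).2‖ ^ (2 * m) := by positivity
    have := mul_le_mul_of_nonneg_left (add_le_add (hB.one_le _ (hz1 n)) (hB.one_le _ (hz2 n))) h0
    linarith
  have hval' : ∀ n, M ≤ u (z n).1 + w (z n).2 := fun n => by
    have h0 : 0 ≤ ((n : ℝ) + 1) * ‖(z n).1 - (z n).2‖ ^ (2 * m) := by positivity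
    linarith [hval n]
  -- limits of the points and of the values along a subsequence
  have hcpt4 : IsCompact ((closure Ω ×ˢ closure Ω) ×ˢ (Icc (-Bw) Bu ×ˢ Icc (-Bu) Bw)) :=
    (hcpt.prod hcpt).prod (isCompact_Icc.prod isCompact_Icc)
  obtain ⟨⟨⟨xs, ys⟩, U, W⟩, hmem, s, hs, hlim⟩ := hcpt4.tendsto_subseq
    (x := fun n => (z n, (u (z n).1, w (z n).2))) (fun n => ⟨⟨hz1 n, hz2 n⟩,
      ⟨by linarith [hval' n, hBw _ (hz2 n)], hBu _ (hz1 n)⟩,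
      ⟨by linarith [hval' n, hBu _ (hz1 n)], hBw _ (hz2 n)⟩⟩)
  have hxs : xs ∈ closure Ω := hmem.1.1
  have hys : ys ∈ closure Ω := hmem.1.2
  have l1 : Tendsto (fun n => (z (s n)).1) atTop (𝓝 xs) :=
    (continuous_fst.fst.tendsto _).comp hlim
  have l2 : Tendsto (fun n => (z (s n)).2) atTop (𝓝 ys) :=
    (continuous_fst.snd.tendsto _).comp hlim
  have l3 : Tendsto (fun n => u (z (s n)).1) atTop (𝓝 U) :=
    (continuous_snd.fst.tendsto _).comp hlim
  have l4 : Tendsto (fun n => w (z (s n)).2) atTop (𝓝 W) :=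
    (continuous_snd.snd.tendsto _).comp hlim
  have lr := (l1.sub l2).norm
  have hxy : xs = ys := by
    have h1 : Tendsto (fun n : ℕ => (Bu + Bw) * (1 / ((n : ℝ) + 1))) atTop (𝓝 0) := by
      simpa using tendsto_one_div_add_atTop_nhds_zero_nat.const_mul (Bu + Bw)
    have h2 : ∀ n, ‖(z n).1 - (z n).2‖ ^ (2 * m) ≤ (Bu + Bw) * (1 / ((n : ℝ) + 1)) := by
      intro n
      rw [mul_one_div, le_div_iff₀ (by positivity)]
      have h0 : 0 ≤ ((n : ℝ) + 1) * ‖(z n).1 - (z n).2‖ ^ (2 * m) := by positivity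
      linarith [hval n, hBu _ (hz1 n), hBw _ (hz2 n)]
    have h3 := le_of_tendsto_of_tendsto' (lr.pow (2 * m)) (h1.comp hs.tendsto_atTop)
      (fun n => h2 (s n))
    have h4 := pow_eq_zero_iff (by omega : 2 * m ≠ 0) |>.1
      (le_antisymm h3 (by positivity))
    exact sub_eq_zero.1 (norm_eq_zero.1 h4)
  subst hxy
  rw [sub_self, norm_zero] at lr
  have hη : 0 < 2 * min θ ν - 1 := by
    have : 1 / 2 < min θ ν := lt_min hS.f3.2.1.1 hS.f4.2.1.1
    linarith
  have hbs : Tendsto (fun n => b (z (s n)).1) atTop (𝓝 (b xs)) :=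
    (hS.bc xs hxs).tendsto.comp (tendsto_nhdsWithin_iff.2
      ⟨l1, Eventually.of_forall fun n => hz1 (s n)⟩)
  have hbt : Tendsto (fun n => b (z (s n)).2) atTop (𝓝 (b xs)) :=
    (hS.bc xs hxs).tendsto.comp (tendsto_nhdsWithin_iff.2
      ⟨l2, Eventually.of_forall fun n => hz2 (s n)⟩)
  have lb := (hbs.sub hbt).norm
  rw [sub_self, norm_zero] at lb
  have lrp : Tendsto (fun n => ‖(z (s n)).1 - (z (s n)).2‖ ^ (2 * min θ ν - 1)) atTop (𝓝 0) := by
    have := ((Real.continuous_rpow_const hη.le).tendsto 0).comp lr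
    rwa [Real.zero_rpow hη.ne'] at this
  have hph := continuous_ph hS.hα
  have hlimit := le_of_tendsto_of_tendsto
    ((tendsto_within hS.gc hxs (fun n => hz1 (s n)) l1).sub
      (tendsto_within hS.gc hxs (fun n => hz2 (s n)) l2))
    ((((tendsto_within hS.cc hxs (fun n => hz1 (s n)) l1).mul ((hph.tendsto U).comp l3)).add
      ((tendsto_within hS.cc hxs (fun n => hz2 (s n)) l2).mul ((hph.tendsto W).comp l4))).add
      ((lrp.add lb).const_mul C)) (by
        filter_upwards [lr.eventually (gt_mem_nhds hr0)] with n hn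
        refine hstep (((s n : ℕ) : ℝ) + 1) (by positivity) _ (hz1 _) _ (hz2 _) hn.le ?_ (hzmax (s n))
        linarith [hval (s n), hlip _ (hz1 (s n)) _ (hz2 (s n))])
  have hUW : M ≤ U + W := ge_of_tendsto' (l3.add l4) fun n => hval' (s n)
  have hneg := hS.neg xs hxs
  have hmono : |(-W)| ^ α * (-W) < |U| ^ α * U := strictMono_ph hS.hα (by linarith)
  rw [abs_neg] at hmono
  have h5 := mul_lt_mul_of_neg_left hmono hneg
  rw [sub_self, add_zero, mul_zero, add_zero] at hlimit
  linarith

end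

/-! ### Semicontinuous envelopes, comparison of jets, continuity of the operator -/

section
variable {N : ℕ}

/-- The upper semicontinuous envelope of `f` relative to `K`. -/
def uenv (K : Set (EN N)) (f : EN N → ℝ) (x : EN N) : ℝ :=
  sInf {s : ℝ | ∀ᶠ y in 𝓝[K] x, f y ≤ s}

lemma uenv_bdd {K : Set (EN N)} {f : EN N → ℝ} {x : EN N} (hx : x ∈ K) :
    BddBelow {s : ℝ | ∀ᶠ y in 𝓝[K] x, f y ≤ s} :=
  ⟨f x, fun s (hs : ∀ᶠ y in 𝓝[K] x, f y ≤ s) => hs.self_of_nhdsWithin hx⟩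

lemma uenv_nonempty {K : Set (EN N)} {f : EN N → ℝ} {B : ℝ} (hB : ∀ x ∈ K, f x ≤ B) (x : EN N) :
    {s : ℝ | ∀ᶠ y in 𝓝[K] x, f y ≤ s}.Nonempty :=
  ⟨B, by filter_upwards [self_mem_nhdsWithin] with y hy using hB y hy⟩

lemma le_uenv {K : Set (EN N)} {f : EN N → ℝ} {B : ℝ} (hB : ∀ x ∈ K, f x ≤ B) {x : EN N}
    (hx : x ∈ K) : f x ≤ uenv K f x :=
  le_csInf (uenv_nonempty hB x) fun s (hs : ∀ᶠ y in 𝓝[K] x, f y ≤ s) => hs.self_of_nhdsWithin hx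

lemma uenv_le {K : Set (EN N)} {f : EN N → ℝ} {x : EN N} (hx : x ∈ K) {t : ℝ}
    (h : ∀ᶠ y in 𝓝[K] x, f y ≤ t) : uenv K f x ≤ t :=
  csInf_le (uenv_bdd hx) h

lemma uenv_usc {K : Set (EN N)} {f : EN N → ℝ} {B : ℝ} (hB : ∀ x ∈ K, f x ≤ B) :
    UpperSemicontinuousOn (uenv K f) K := by
  intro x hx t ht
  obtain ⟨s, hs, hst⟩ := exists_lt_of_csInf_lt (uenv_nonempty hB x) ht
  filter_upwards [eventually_eventually_nhdsWithin.2 hs, self_mem_nhdsWithin] with y h1 hy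
  exact (uenv_le hy h1).trans_lt hst

lemma uenv_approx {K : Set (EN N)} {f : EN N → ℝ} {x : EN N} (hx : x ∈ K) {t : ℝ}
    (ht : t < uenv K f x) {P : EN N → Prop} (hP : ∀ᶠ y in 𝓝[K] x, P y) :
    ∃ y ∈ K, P y ∧ t < f y := by
  by_contra hcon
  push Not at hcon
  refine absurd (uenv_le hx ?_) (not_le.2 ht)
  filter_upwards [hP, self_mem_nhdsWithin] with y h1 hy using hcon y hy h1

lemma quad_sign {s r : ℝ} (h : ∀ᶠ t in 𝓝[>] (0 : ℝ), 0 ≤ t * s + 1 / 2 * (t ^ 2 * r)) :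
    0 ≤ s ∧ (s = 0 → 0 ≤ r) := by
  constructor
  · have hc : Tendsto (fun t : ℝ => s + 1 / 2 * (t * r)) (𝓝[>] 0) (𝓝 s) := by
      have : Continuous fun t : ℝ => s + 1 / 2 * (t * r) := by fun_prop
      refine (this.tendsto' 0 s (by ring)).mono_left nhdsWithin_le_nhds
    refine ge_of_tendsto hc ?_
    filter_upwards [h, self_mem_nhdsWithin] with t h1 (ht : 0 < t)
    rw [show t * s + 1 / 2 * (t ^ 2 * r) = t * (s + 1 / 2 * (t * r)) by ring] at h1
    exact nonneg_of_mul_nonneg_right h1 ht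
  · rintro rfl
    obtain ⟨t, h1, ht⟩ := (h.and self_mem_nhdsWithin).exists
    have ht : 0 < t := ht
    have : 0 < t ^ 2 := by positivity
    by_contra hr
    push Not at hr
    have := mul_neg_of_pos_of_neg this hr
    linarith

lemma tendsto_ray (x k : EN N) : Tendsto (fun t : ℝ => x + t • k) (𝓝[>] 0) (𝓝 x) := by
  have : Continuous fun t : ℝ => x + t • k := by fun_prop
  exact (this.tendsto' 0 x (by simp)).mono_left nhdsWithin_le_nhds

/-- Ordered second order expansions at an interior point have the same gradient and ordered
Hessians. -/
lemma jet_interior {Ω : Set (EN N)} (hΩ : IsOpen Ω) {x : EN N} (hx : x ∈ Ω) {p₁ p : EN N}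
    {X₁ X : Mat N} (h : ∀ᶠ x' in 𝓝[closure Ω] x, ⟪p₁, x' - x⟫ + 1 / 2 * qf X₁ (x' - x)
      ≤ ⟪p, x' - x⟫ + 1 / 2 * qf X (x' - x)) :
    p = p₁ ∧ ∀ k, qf X₁ k ≤ qf X k := by
  have hn : 𝓝[closure Ω] x = 𝓝 x :=
    nhdsWithin_eq_nhds.2 (mem_of_superset (hΩ.mem_nhds hx) subset_closure)
  rw [hn] at h
  have key : ∀ k : EN N, 0 ≤ ⟪p - p₁, k⟫ ∧ (⟪p - p₁, k⟫ = 0 → 0 ≤ qf X k - qf X₁ k) := by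
    intro k
    apply quad_sign
    filter_upwards [(tendsto_ray x k).eventually h] with t ht
    rw [add_sub_cancel_left, real_inner_smul_right, real_inner_smul_right, qf_smul_arg,
      qf_smul_arg] at ht
    rw [inner_sub_left]
    linarith
  have hp : p - p₁ = 0 := by
    have h1 := (key (-(p - p₁))).1
    rw [inner_neg_right, real_inner_self_eq_norm_sq] at h1
    have h2 : ‖p - p₁‖ ^ 2 = 0 := le_antisymm (by linarith) (by positivity)
    exact norm_eq_zero.1 (pow_eq_zero_iff (by norm_num) |>.1 h2)
  refine ⟨sub_eq_zero.1 hp, fun k => ?_⟩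
  have := (key k).2 (by rw [hp, inner_zero_left])
  linarith

/-- At boundary points only the normal components of the gradients are ordered: they are compared
along the inward ray. -/
lemma jet_boundary {Ω : Set (EN N)} {nv : EN N → EN N} (hΩ : IsC2Domain Ω nv) {x : EN N}
    (hx : x ∈ frontier Ω) {p₁ p : EN N} {X₁ X : Mat N}
    (h : ∀ᶠ x' in 𝓝[closure Ω] x, ⟪p₁, x' - x⟫ + 1 / 2 * qf X₁ (x' - x)
      ≤ ⟪p, x' - x⟫ + 1 / 2 * qf X (x' - x)) :
    ⟪p, nv x⟫ ≤ ⟪p₁, nv x⟫ := by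
  have hin := inward hΩ hx
  have ht : Tendsto (fun t : ℝ => x + t • (-nv x)) (𝓝[>] 0) (𝓝[closure Ω] x) := by
    refine tendsto_nhdsWithin_iff.2 ⟨tendsto_ray x _, ?_⟩
    filter_upwards [hin] with t ht
    rwa [smul_neg, ← sub_eq_add_neg]
  have h1 : 0 ≤ ⟪p - p₁, -nv x⟫ := by
    refine (quad_sign (r := qf X (-nv x) - qf X₁ (-nv x)) ?_).1
    filter_upwards [ht.eventually h] with t ht
    rw [add_sub_cancel_left, real_inner_smul_right, real_inner_smul_right, qf_smul_arg,
      qf_smul_arg] at ht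
    rw [inner_sub_left]
    linarith
  rw [inner_neg_right, inner_sub_left] at h1
  linarith

lemma F_mono {Ω : Set (EN N)} {α a A : ℝ} {F : EN N → EN N → Mat N → ℝ} (hF : CondF2 Ω α a A F)
    {x : EN N} (hx : x ∈ closure Ω) {p : EN N} (hp : p ≠ 0) {X Y : Mat N} (hX : X.IsSymm)
    (hY : Y.IsSymm) (h : ∀ k, qf X k ≤ qf Y k) : F x p X ≤ F x p Y := by
  have hP : (Y - X).PosSemidef := posSemidef_of_qf (hY.sub hX) fun k => by
    rw [qf_sub]; linarith [h k]
  have h1 := (hF.2.2 x hx p hp X _ hX hP).1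
  rw [add_sub_cancel] at h1
  have h2 : 0 ≤ a * ‖p‖ ^ α * (Y - X).trace :=
    mul_nonneg (mul_nonneg hF.1.le (by positivity)) hP.trace_nonneg
  linarith

/-- Away from `p = 0` the first and second order part of the operator is continuous in
`(x, p)`. -/
lemma op_cont {Ω : Set (EN N)} {nv : EN N → EN N} {α a A C₁ θ C₂ ν : ℝ}
    {F : EN N → EN N → Mat N → ℝ} {b : EN N → EN N} {c g : EN N → ℝ}
    (hS : Std Ω nv α a A C₁ θ C₂ ν F b c g) {X : Mat N} (hX : X.IsSymm) {x p : EN N}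
    (hx : x ∈ closure Ω) (hp : p ≠ 0) :
    ContinuousWithinAt (fun z : EN N × EN N => F z.1 z.2 X + ⟪b z.1, z.2⟫ * ‖z.2‖ ^ α)
      (closure Ω ×ˢ univ) (x, p) := by
  have hfst : Tendsto Prod.fst (𝓝[closure Ω ×ˢ univ] (x, p)) (𝓝[closure Ω] x) :=
    continuous_fst.continuousWithinAt.tendsto_nhdsWithin fun z hz => hz.1
  have hsnd : Tendsto (Prod.snd : EN N × EN N → EN N) (𝓝[closure Ω ×ˢ univ] (x, p)) (𝓝 p) :=
    continuous_snd.continuousWithinAt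
  refine ContinuousWithinAt.add ?_ ?_
  · rw [ContinuousWithinAt, tendsto_iff_norm_sub_tendsto_zero]
    have hθ : 0 < θ := by linarith [hS.f3.2.1.1]
    have hν : 0 < ν := by linarith [hS.f4.2.1.1]
    have l1 : Tendsto (fun z : EN N × EN N => ‖z.1 - x‖ ^ θ) (𝓝[closure Ω ×ˢ univ] (x, p))
        (𝓝 0) := by
      have : Continuous fun z : EN N × EN N => ‖z.1 - x‖ ^ θ :=
        (Real.continuous_rpow_const hθ.le).comp (by fun_prop)
      refine (this.tendsto' (x, p) 0 ?_).mono_left nhdsWithin_le_nhds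
      rw [sub_self, norm_zero, Real.zero_rpow hθ.ne']
    have l2 : Tendsto (fun z : EN N × EN N => ‖z.2 - p‖ ^ ν) (𝓝[closure Ω ×ˢ univ] (x, p))
        (𝓝 0) := by
      have : Continuous fun z : EN N × EN N => ‖z.2 - p‖ ^ ν :=
        (Real.continuous_rpow_const hν.le).comp (by fun_prop)
      refine (this.tendsto' (x, p) 0 ?_).mono_left nhdsWithin_le_nhds
      rw [sub_self, norm_zero, Real.zero_rpow hν.ne']
    have l3 : Tendsto (fun z : EN N × EN N => C₂ * ‖p‖ ^ (α - ν) * ‖z.2 - p‖ ^ ν * matNorm X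
        + C₁ * ‖z.1 - x‖ ^ θ * ‖p‖ ^ α * matNorm X) (𝓝[closure Ω ×ˢ univ] (x, p)) (𝓝 0) := by
      have := ((l2.const_mul (C₂ * ‖p‖ ^ (α - ν))).mul_const (matNorm X)).add
        (((l1.const_mul C₁).mul_const (‖p‖ ^ α)).mul_const (matNorm X))
      simpa using this
    refine squeeze_zero' (Eventually.of_forall fun _ => norm_nonneg _) ?_ l3
    have hnear : ∀ᶠ z : EN N × EN N in 𝓝[closure Ω ×ˢ univ] (x, p), z.2 ∈ ball p (‖p‖ / 2) :=
      hsnd.eventually (ball_mem_nhds p (half_pos (norm_pos_iff.2 hp)))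
    filter_upwards [hnear, self_mem_nhdsWithin] with z h1 h2
    rw [mem_ball, dist_eq_norm] at h1
    have e1 := hS.f4.2.2 z.1 h2.1 p hp (z.2 - p) h1.le X hX
    have e2 := hS.f3.2.2 z.1 h2.1 x hx p hp X hX
    rw [add_sub_cancel] at e1
    rw [Real.norm_eq_abs]
    have e3 := abs_sub_le (F z.1 z.2 X) (F z.1 p X) (F x p X)
    linarith
  · refine ContinuousWithinAt.mul ?_ ?_
    · exact ((hS.bc x hx).tendsto.comp hfst).inner hsnd
    · exact hsnd.norm.rpow_const (Or.inl (norm_ne_zero_iff.2 hp))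

end

/-! ### The supremum of a family of subsolutions -/

section
variable {N : ℕ}

/-- A strict contact point of `Φ` with the envelope of the supremum of a family is a limit of
contact points of `Φ` with members of the family. -/
lemma select {K : Set (EN N)} (hK : IsCompact K) {S : Set (EN N → ℝ)} {U : EN N → ℝ} {B : ℝ}
    (hUB : ∀ x ∈ K, U x ≤ B) (husc : ∀ w ∈ S, UpperSemicontinuousOn w K)
    (hle : ∀ w ∈ S, ∀ x ∈ K, w x ≤ U x) (hsup : ∀ x ∈ K, ∀ t < U x, ∃ w ∈ S, t < w x)
    {x₀ : EN N} (hx₀ : x₀ ∈ K) {Φ : EN N → ℝ} (hΦ : ContinuousOn Φ K) (hΦ0 : Φ x₀ = 0)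
    {ε : ℝ} (hε : 0 < ε) {s : ℕ} (hs : s ≠ 0)
    (htouch : ∀ᶠ x in 𝓝[K] x₀, uenv K U x ≤ uenv K U x₀ + Φ x - ε * ‖x - x₀‖ ^ s)
    {η : ℝ} (hη : 0 < η) :
    ∃ w ∈ S, ∃ x₁ ∈ K, ‖x₁ - x₀‖ < η ∧ |w x₁ - uenv K U x₀| < η ∧
      ∀ᶠ x in 𝓝[K] x₁, w x - Φ x ≤ w x₁ - Φ x₁ := by
  obtain ⟨ρ, hρ, hball⟩ := Metric.mem_nhdsWithin_iff.1 htouch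
  have hΦ' : ∀ δ > 0, ∀ᶠ x in 𝓝[K] x₀, |Φ x| < δ := fun δ hδ => by
    have := (hΦ x₀ hx₀).tendsto.eventually (ball_mem_nhds _ hδ)
    filter_upwards [this] with x hx
    rwa [hΦ0, Real.dist_eq, sub_zero] at hx
  obtain ⟨ρ₁, hρ₁, hball₁⟩ := Metric.mem_nhdsWithin_iff.1 (hΦ' (η / 2) (half_pos hη))
  set η' := min (min η ρ₁) (ρ / 2) with hη'
  have hη'p : 0 < η' := by positivity
  set δ := min (ε * η' ^ s / 2) (η / 4) with hδ
  have hδp : 0 < δ := by positivity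
  have hnear : ∀ᶠ y in 𝓝[K] x₀, |Φ y| < δ ∧ ‖y - x₀‖ < η' := by
    refine (hΦ' δ hδp).and ?_
    filter_upwards [mem_nhdsWithin_of_mem_nhds (ball_mem_nhds x₀ hη'p)] with y hy
    rwa [mem_ball, dist_eq_norm] at hy
  have hlt : uenv K U x₀ - δ / 2 < uenv K U x₀ := by linarith
  obtain ⟨y, hy, ⟨hy1, hy2⟩, hy3⟩ := uenv_approx hx₀ hlt hnear
  obtain ⟨w, hw, hwy⟩ := hsup y hy (U y - δ / 4) (by linarith)
  have hρη : η' ≤ ρ / 2 := min_le_right _ _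
  have hPc : IsCompact (K ∩ closedBall x₀ (ρ / 2)) := hK.inter_right isClosed_closedBall
  obtain ⟨x₁, hx₁, hmax⟩ := ((pen_usc (husc w hw) hΦ).mono inter_subset_left).exists_isMaxOn
    (s := K ∩ closedBall x₀ (ρ / 2))
    ⟨y, hy, by rw [mem_closedBall, dist_eq_norm]; linarith⟩ hPc
  have h1 : w y - Φ y ≤ w x₁ - Φ x₁ := hmax ⟨hy, by rw [mem_closedBall, dist_eq_norm]; linarith⟩
  have hx₁b := hx₁.2
  have h2 : uenv K U x₁ ≤ uenv K U x₀ + Φ x₁ - ε * ‖x₁ - x₀‖ ^ s := by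
    refine @hball x₁ ⟨?_, hx₁.1⟩
    exact closedBall_subset_ball (by linarith) hx₁b
  have h3 := (hle w hw x₁ hx₁.1).trans (le_uenv hUB hx₁.1)
  have hΦy := (abs_lt.1 hy1).2
  have hpos : 0 ≤ ε * ‖x₁ - x₀‖ ^ s := by positivity
  have hδ1 : δ ≤ ε * η' ^ s / 2 := min_le_left _ _
  have hδ2 : δ ≤ η / 4 := min_le_right _ _
  have h4 : ‖x₁ - x₀‖ < η' := by
    have : ε * ‖x₁ - x₀‖ ^ s < ε * η' ^ s := by linarith
    exact lt_of_pow_lt_pow_left₀ s hη'p.le (lt_of_mul_lt_mul_left this hε.le)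
  have hη'1 : η' ≤ η := (min_le_left _ _).trans (min_le_left _ _)
  have hη'2 : η' ≤ ρ₁ := (min_le_left _ _).trans (min_le_right _ _)
  have hΦ1 : |Φ x₁| < η / 2 := @hball₁ x₁ ⟨by
    rw [mem_ball, dist_eq_norm]; linarith, hx₁.1⟩
  refine ⟨w, hw, x₁, hx₁.1, h4.trans_le hη'1, ?_, ?_⟩
  · rw [abs_lt] at hΦ1 ⊢
    constructor <;> linarith [hΦ1.1, hΦ1.2]
  · have hb : ball x₀ (ρ / 2) ∈ 𝓝 x₁ := isOpen_ball.mem_nhds (by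
      rw [mem_ball, dist_eq_norm]; linarith)
    filter_upwards [mem_nhdsWithin_of_mem_nhds hb, self_mem_nhdsWithin] with x hx hxK
    exact hmax ⟨hxK, ball_subset_closedBall hx⟩

lemma qpoly_shift {X : Mat N} (hX : X.IsSymm) (p x₀ x₁ x : EN N) :
    ⟪p, x - x₀⟫ + 1 / 2 * qf X (x - x₀) = ⟪p, x₁ - x₀⟫ + 1 / 2 * qf X (x₁ - x₀)
      + ⟪p + Matrix.toEuclideanLin X (x₁ - x₀), x - x₁⟫ + 1 / 2 * qf X (x - x₁) := by
  have h : x - x₀ = (x₁ - x₀) + (x - x₁) := by abel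
  rw [h, qf_add_arg hX, inner_add_right, inner_add_left]
  ring

lemma qpoly_cont (X : Mat N) (p x₀ : EN N) :
    Continuous fun x => ⟪p, x - x₀⟫ + 1 / 2 * qf X (x - x₀) := by
  have h : Continuous (Matrix.toEuclideanLin X) := LinearMap.continuous_of_finiteDimensional _
  simp only [qf]
  have h2 : Continuous fun x => Matrix.toEuclideanLin X (x - x₀) :=
    h.comp (continuous_id.sub continuous_const)
  have h3 : Continuous fun x : EN N => x - x₀ := continuous_id.sub continuous_const
  exact (continuous_const.inner h3).add (continuous_const.mul (h2.inner h3))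

lemma qf_zero (X : Mat N) : qf X 0 = 0 := by
  rw [qf, inner_zero_right]

/-- The envelope of a supremum of subsolutions satisfies the jet inequality. -/
lemma sup_jet {Ω : Set (EN N)} {nv : EN N → EN N} {α a A C₁ θ C₂ ν : ℝ}
    {F : EN N → EN N → Mat N → ℝ} {b : EN N → EN N} {c g : EN N → ℝ}
    (hS : Std Ω nv α a A C₁ θ C₂ ν F b c g) {S : Set (EN N → ℝ)} {U : EN N → ℝ} {B : ℝ}
    (hUB : ∀ x ∈ closure Ω, U x ≤ B) (husc : ∀ w ∈ S, UpperSemicontinuousOn w (closure Ω))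
    (hle : ∀ w ∈ S, ∀ x ∈ closure Ω, w x ≤ U x)
    (hsup : ∀ x ∈ closure Ω, ∀ t < U x, ∃ w ∈ S, t < w x)
    (hjet : ∀ w ∈ S, JetSub Ω nv α F b c g w) : JetSub Ω nv α F b c g (uenv (closure Ω) U) := by
  intro x₀ hx₀ p hp X hX hMJ hn
  set V := uenv (closure Ω) U with hV
  have key : ∀ ε : ℝ, 0 < ε → g x₀ ≤ F x₀ p X + ⟪b x₀, p⟫ * ‖p‖ ^ α + c x₀ * (|V x₀| ^ α * V x₀)
      + A * ‖p‖ ^ α * (2 * N) * ε := by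
    intro ε hε
    set Y := X + (2 * ε) • (1 : Mat N) with hY
    have hYs : Y.IsSymm := hX.add (smul_one_isSymm _)
    set Φ : EN N → ℝ := fun x => ⟪p, x - x₀⟫ + 1 / 2 * qf Y (x - x₀) with hΦ
    have hΦ0 : Φ x₀ = 0 := by
      simp only [hΦ, sub_self, inner_zero_right, qf_zero, mul_zero, add_zero]
    have htouch : ∀ᶠ x in 𝓝[closure Ω] x₀, V x ≤ V x₀ + Φ x - ε * ‖x - x₀‖ ^ 2 := by
      filter_upwards [hMJ] with x hx
      simp only [hΦ]
      rw [hY, qf_add, qf_smul, qf_one]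
      linarith
    obtain ⟨ε₁, hε₁, hns⟩ := normal_stable hS.dom hn
    set P : EN N → EN N := fun x => p + Matrix.toEuclideanLin Y (x - x₀) with hPdef
    have hPc : Continuous P := continuous_const.add
      ((LinearMap.continuous_of_finiteDimensional (Matrix.toEuclideanLin Y)).comp
        (continuous_id.sub continuous_const))
    have hP0 : P x₀ = p := by simp only [hPdef, sub_self, map_zero, add_zero]
    have hgood : ∀ᶠ x in 𝓝 x₀, ‖x - x₀‖ ≤ ε₁ ∧ ‖P x - p‖ ≤ ε₁ ∧ P x ≠ 0 := by
      have e1 : ∀ᶠ x in 𝓝 x₀, ‖x - x₀‖ ≤ ε₁ := by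
        filter_upwards [closedBall_mem_nhds x₀ hε₁] with x hx
        rwa [mem_closedBall, dist_eq_norm] at hx
      have e2 : ∀ᶠ x in 𝓝 x₀, ‖P x - p‖ ≤ ε₁ := by
        have := hPc.tendsto x₀
        rw [hP0] at this
        filter_upwards [this.eventually (closedBall_mem_nhds p hε₁)] with x hx
        rwa [dist_eq_norm] at hx
      have e3 : ∀ᶠ x in 𝓝 x₀, P x ≠ 0 :=
        hPc.continuousAt.eventually_ne (by rwa [hP0])
      exact e1.and (e2.and e3)
    obtain ⟨ρ, hρ, hball⟩ := Metric.mem_nhds_iff.1 hgood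
    have hseq : ∀ n : ℕ, ∃ w ∈ S, ∃ x₁ ∈ closure Ω, ‖x₁ - x₀‖ < min ρ (1 / ((n : ℝ) + 1)) ∧
        |w x₁ - V x₀| < min ρ (1 / ((n : ℝ) + 1)) ∧
        ∀ᶠ x in 𝓝[closure Ω] x₁, w x - Φ x ≤ w x₁ - Φ x₁ := fun n =>
      select (dom_compact hS.dom) hUB husc hle hsup hx₀ (qpoly_cont Y p x₀).continuousOn hΦ0 hε
        two_ne_zero htouch (by positivity)
    choose w hwS x hxK hx1 hwx hwmax using hseq
    have hineq : ∀ n, g (x n) ≤ F (x n) (P (x n)) Y + ⟪b (x n), P (x n)⟫ * ‖P (x n)‖ ^ α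
        + c (x n) * (|w n (x n)| ^ α * w n (x n)) := by
      intro n
      obtain ⟨h1, h2, h3⟩ := @hball (x n) (by
        rw [mem_ball, dist_eq_norm]; exact (hx1 n).trans_le (min_le_left _ _))
      have := hjet (w n) (hwS n) (x n) (hxK n) (P (x n)) h3 Y hYs (by
        filter_upwards [hwmax n] with x' hx'
        have h4 := qpoly_shift hYs p x₀ (x n) x'
        simp only [hΦ, hPdef] at hx' h4 ⊢
        linarith) (hns _ _ h1 h2)
      linarith
    have l0 : Tendsto (fun n : ℕ => 1 / ((n : ℝ) + 1)) atTop (𝓝 0) :=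
      tendsto_one_div_add_atTop_nhds_zero_nat
    have lx : Tendsto x atTop (𝓝 x₀) :=
      tendsto_of_le (fun n => ((hx1 n).trans_le (min_le_right _ _)).le) l0
    have lw : Tendsto (fun n => w n (x n)) atTop (𝓝 (V x₀)) :=
      tendsto_of_le (fun n => ((hwx n).trans_le (min_le_right _ _)).le) l0
    have lP : Tendsto (fun n => P (x n)) atTop (𝓝 p) := by
      have := (hPc.tendsto x₀).comp lx
      rwa [hP0] at this
    have lop := (op_cont hS hYs hx₀ hp).tendsto.comp (tendsto_nhdsWithin_iff.2
      ⟨lx.prodMk_nhds lP, Eventually.of_forall fun n => ⟨hxK n, mem_univ _⟩⟩)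
    have hfin := le_of_tendsto_of_tendsto' (tendsto_within hS.gc hx₀ hxK lx)
      (lop.add ((tendsto_within hS.cc hx₀ hxK lx).mul
        (((continuous_ph hS.hα).tendsto (V x₀)).comp lw))) hineq
    have h2 := (hS.f2.2.2 x₀ hx₀ p hp X _ hX (smul_one_posSemidef (by positivity : 0 ≤ 2 * ε))).2
    rw [trace_smul_one] at h2
    beta_reduce at hfin
    linarith
  refine le_of_forall_pos_le_add fun δ hδ => ?_
  have hA : 0 < A := hS.f2.1.trans_le hS.f2.2.1
  have hk := key (δ / (A * ‖p‖ ^ α * (2 * N) + 1)) (by positivity)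
  have h3 : A * ‖p‖ ^ α * (2 * N) * (δ / (A * ‖p‖ ^ α * (2 * N) + 1)) ≤ δ := by
    rw [mul_div_assoc', div_le_iff₀ (by positivity)]
    linarith
  linarith

/-- The envelope of a supremum of subsolutions is a subsolution. -/
lemma sup_subJ {Ω : Set (EN N)} {nv : EN N → EN N} {α a A C₁ θ C₂ ν : ℝ}
    {F : EN N → EN N → Mat N → ℝ} {b : EN N → EN N} {c g : EN N → ℝ}
    (hS : Std Ω nv α a A C₁ θ C₂ ν F b c g) {m : ℕ} (hm : 1 ≤ m)
    (hmβ : 1 < (2 * m - 1) * (α + 1)) {ψ : EN N → ℝ} {Cψ : ℝ}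
    (hB : Barrier Ω nv (2 * m) ψ Cψ) {S : Set (EN N → ℝ)} {U : EN N → ℝ} {B : ℝ}
    (hUB : ∀ x ∈ closure Ω, U x ≤ B) (husc : ∀ w ∈ S, UpperSemicontinuousOn w (closure Ω))
    (hle : ∀ w ∈ S, ∀ x ∈ closure Ω, w x ≤ U x)
    (hsup : ∀ x ∈ closure Ω, ∀ t < U x, ∃ w ∈ S, t < w x)
    (hjet : ∀ w ∈ S, SubJ Ω nv α F b c g (2 * m) w) :
    SubJ Ω nv α F b c g (2 * m) (uenv (closure Ω) U) := by
  refine ⟨sup_jet hS hUB husc hle hsup fun w hw => (hjet w hw).jet, fun x₀ hx₀ C hC => ?_⟩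
  set V := uenv (closure Ω) U with hV
  by_contra hcon
  push Not at hcon
  obtain ⟨η, hη, hnear⟩ := strict_near hS.hα hS.cc hS.gc hx₀ hcon
  set C' := |C| + 1 with hC'
  have hC'p : 0 < C' := by positivity
  obtain ⟨r0, hr0, D, hD, htp⟩ := touch_pow hS hm hB hC'p
  set Φ : EN N → ℝ := fun x => C' * ‖x - x₀‖ ^ (2 * m) * (ψ x + ψ x₀) with hΦ
  have hΦc : ContinuousOn Φ (closure Ω) :=
    ContinuousOn.mul (by fun_prop) (hB.cont.add continuousOn_const)
  have hΦ0 : Φ x₀ = 0 := by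
    simp only [hΦ, sub_self, norm_zero]
    rw [zero_pow (by omega), mul_zero, zero_mul]
  have htouch : ∀ᶠ x in 𝓝[closure Ω] x₀, V x ≤ V x₀ + Φ x - 1 * ‖x - x₀‖ ^ (2 * m) := by
    filter_upwards [hC, self_mem_nhdsWithin] with x hx hxK
    have h0 : 0 ≤ ‖x - x₀‖ ^ (2 * m) := by positivity
    have h1 : C' * ‖x - x₀‖ ^ (2 * m) * 2 ≤ Φ x := by
      simp only [hΦ]
      have := hB.one_le x hxK
      have := hB.one_le x₀ hx₀
      gcongr
      linarith
    have h2 : (C + 1) * ‖x - x₀‖ ^ (2 * m) ≤ C' * 2 * ‖x - x₀‖ ^ (2 * m) := by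
      gcongr
      linarith [le_abs_self C, abs_nonneg C]
    linarith
  obtain ⟨ρ, hρ1, hρ2⟩ := ((small_rpow D (by linarith : 0 < (2 * m - 1) * (α + 1) - 1) 1 hη).and
    self_mem_nhdsWithin).exists
  have hρ2 : 0 < ρ := hρ2
  obtain ⟨w, hw, x₁, hx₁, hd, hv, hmax⟩ := select (dom_compact hS.dom) hUB husc hle hsup hx₀ hΦc hΦ0
    one_pos (by omega) htouch (η := min (min η ρ) r0) (by positivity)
  have hn := hnear x₁ hx₁ (hd.trans_le ((min_le_left _ _).trans (min_le_left _ _))) (w x₁)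
    (hv.trans_le ((min_le_left _ _).trans (min_le_left _ _)))
  by_cases hx : x₁ = x₀
  · subst hx
    have := (hjet w hw).zer x₁ hx₁ (C' * 4) (by
      filter_upwards [hmax, self_mem_nhdsWithin] with x h1 hxK
      rw [hΦ0] at h1
      have h2 : Φ x ≤ C' * ‖x - x₁‖ ^ (2 * m) * 4 := by
        simp only [hΦ]
        have := hB.le_two x hxK
        have := hB.le_two x₁ hx₁
        gcongr
        linarith
      linarith)
    linarith
  · have h1 := htp w (hjet w hw).jet x₁ hx₁ x₀ hx₀ hx (hd.trans_le (min_le_right _ _)).le hmax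
    have h2 : ‖x₁ - x₀‖ ^ ((2 * m - 1) * (α + 1) - 1) ≤ (1 * ρ) ^ ((2 * m - 1) * (α + 1) - 1) := by
      rw [one_mul]
      exact Real.rpow_le_rpow (norm_nonneg _)
        (hd.trans_le ((min_le_left _ _).trans (min_le_right _ _))).le (by linarith)
    have h3 := mul_le_mul_of_nonneg_left h2 hD
    linarith

end

/-! ### The bump construction -/

section
variable {N : ℕ}

/-- `W` has at `x₁` a second order expansion from below that satisfies the subsolution inequality
in a classical sense. -/
def LocSub (Ω : Set (EN N)) (nv : EN N → EN N) (α : ℝ) (F : EN N → EN N → Mat N → ℝ)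
    (b : EN N → EN N) (c g : EN N → ℝ) (W : EN N → ℝ) (x₁ : EN N) : Prop :=
  ∃ (p₁ : EN N) (X₁ : Mat N), X₁.IsSymm ∧
    (∀ᶠ x in 𝓝[closure Ω] x₁, W x₁ + ⟪p₁, x - x₁⟫ + 1 / 2 * qf X₁ (x - x₁) ≤ W x) ∧
    (x₁ ∈ Ω → p₁ ≠ 0 →
      g x₁ ≤ F x₁ p₁ X₁ + ⟪b x₁, p₁⟫ * ‖p₁‖ ^ α + c x₁ * (|W x₁| ^ α * W x₁)) ∧
    (x₁ ∈ Ω → p₁ = 0 → g x₁ ≤ c x₁ * (|W x₁| ^ α * W x₁)) ∧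
    (x₁ ∈ frontier Ω → ⟪p₁, nv x₁⟫ ≤ 0 ∧ (⟪p₁, nv x₁⟫ = 0 → g x₁ ≤ c x₁ * (|W x₁| ^ α * W x₁)))

section
variable {Ω : Set (EN N)} {nv : EN N → EN N} {α a A C₁ θ C₂ ν : ℝ}
    {F : EN N → EN N → Mat N → ℝ} {b : EN N → EN N} {c g : EN N → ℝ}

/-- A function touched from below at `x₁` by such a `W` satisfies the jet inequality there. -/
lemma LocSub.jet (hS : Std Ω nv α a A C₁ θ C₂ ν F b c g) {W Z : EN N → ℝ} {x₁ : EN N}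
    (h : LocSub Ω nv α F b c g W x₁) (hx₁ : x₁ ∈ closure Ω) (hZ : Z x₁ = W x₁)
    (hle : ∀ᶠ x in 𝓝[closure Ω] x₁, W x ≤ Z x) {p : EN N} (hp : p ≠ 0) {X : Mat N}
    (hX : X.IsSymm) (hMJ : MJet (closure Ω) Z x₁ p X)
    (hn : x₁ ∈ frontier Ω → 0 < ⟪p, nv x₁⟫) :
    g x₁ ≤ F x₁ p X + ⟪b x₁, p⟫ * ‖p‖ ^ α + c x₁ * |Z x₁| ^ α * Z x₁ := by
  obtain ⟨p₁, X₁, hX₁, hlow, hne, -, hfr⟩ := h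
  have hord : ∀ᶠ x' in 𝓝[closure Ω] x₁, ⟪p₁, x' - x₁⟫ + 1 / 2 * qf X₁ (x' - x₁)
      ≤ ⟪p, x' - x₁⟫ + 1 / 2 * qf X (x' - x₁) := by
    filter_upwards [hlow, hle, hMJ] with x h1 h2 h3
    rw [hZ] at h3
    linarith
  rcases mem_closure_cases hx₁ with hi | hb
  · obtain ⟨rfl, hq⟩ := jet_interior hS.dom.1 hi hord
    have h1 := hne hi hp
    have h2 := F_mono hS.f2 hx₁ hp hX₁ hX hq
    rw [hZ, mul_assoc]
    linarith
  · have h1 := jet_boundary hS.dom hb hord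
    linarith [hn hb, (hfr hb).1]

lemma LocSub.zer (hS : Std Ω nv α a A C₁ θ C₂ ν F b c g) {W Z : EN N → ℝ} {x₁ : EN N}
    (h : LocSub Ω nv α F b c g W x₁) (hx₁ : x₁ ∈ closure Ω) (hZ : Z x₁ = W x₁)
    (hle : ∀ᶠ x in 𝓝[closure Ω] x₁, W x ≤ Z x) {q : ℕ} (hq : 2 ≤ q) {C : ℝ}
    (hC : ∀ᶠ x in 𝓝[closure Ω] x₁, Z x ≤ Z x₁ + C * ‖x - x₁‖ ^ q) :
    g x₁ ≤ c x₁ * (|Z x₁| ^ α * Z x₁) := by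
  obtain ⟨p₁, X₁, hX₁, hlow, -, hz, hfr⟩ := h
  have hball : ∀ᶠ x in 𝓝[closure Ω] x₁, ‖x - x₁‖ < 1 := by
    filter_upwards [mem_nhdsWithin_of_mem_nhds (ball_mem_nhds x₁ one_pos)] with x hx
    rwa [← dist_eq_norm]
  have hord : ∀ᶠ x' in 𝓝[closure Ω] x₁, ⟪p₁, x' - x₁⟫ + 1 / 2 * qf X₁ (x' - x₁)
      ≤ ⟪(0 : EN N), x' - x₁⟫ + 1 / 2 * qf ((2 * |C|) • (1 : Mat N)) (x' - x₁) := by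
    filter_upwards [hlow, hle, hC, hball] with x h1 h2 h3 h4
    rw [hZ] at h3
    have h5 : ‖x - x₁‖ ^ q ≤ ‖x - x₁‖ ^ 2 := pow_le_pow_of_le_one (norm_nonneg _) h4.le hq
    have h6 : C * ‖x - x₁‖ ^ q ≤ |C| * ‖x - x₁‖ ^ 2 :=
      mul_le_mul (le_abs_self C) h5 (by positivity) (abs_nonneg C)
    rw [inner_zero_left, qf_smul, qf_one]
    linarith
  rw [hZ]
  rcases mem_closure_cases hx₁ with hi | hb
  · exact hz hi (jet_interior hS.dom.1 hi hord).1.symm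
  · have h1 := jet_boundary hS.dom hb hord
    rw [inner_zero_left] at h1
    exact (hfr hb).2 (le_antisymm (hfr hb).1 h1)

/-- Maximality of a subsolution `U` excludes a local subsolution `W` that lies below `U` near the
boundary of a ball and above the lower envelope of `U` at the centre. -/
lemma bump (hS : Std Ω nv α a A C₁ θ C₂ ν F b c g) {q : ℕ} (hq : 2 ≤ q) {U W : EN N → ℝ} {K : ℝ}
    (hU : UpperSemicontinuousOn U (closure Ω)) (hUJ : SubJ Ω nv α F b c g q U)
    (hUK : ∀ x ∈ closure Ω, -K ≤ U x)
    (hmax : ∀ w, UpperSemicontinuousOn w (closure Ω) → SubJ Ω nv α F b c g q w →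
      (∀ x ∈ closure Ω, -K ≤ w x) → ∀ x ∈ closure Ω, w x ≤ U x)
    (hW : Continuous W) {x₀ : EN N} (hx₀ : x₀ ∈ closure Ω) {r : ℝ} (hr : 0 < r)
    (hWx : -W x₀ < uenv (closure Ω) (fun x => -U x) x₀)
    (hann : ∀ x ∈ closure Ω, r / 2 ≤ ‖x - x₀‖ → ‖x - x₀‖ < r → W x ≤ U x)
    (hloc : ∀ x₁ ∈ closure Ω, ‖x₁ - x₀‖ < r → LocSub Ω nv α F b c g W x₁) : False := by
  classical
  set Z : EN N → ℝ := fun x => if ‖x - x₀‖ < r then max (U x) (W x) else U x with hZ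
  have hUZ : ∀ x, U x ≤ Z x := fun x => by
    simp only [hZ]; split_ifs
    · exact le_max_left _ _
    · exact le_rfl
  have hcn : Continuous fun x : EN N => ‖x - x₀‖ := by fun_prop
  have hZusc : UpperSemicontinuousOn Z (closure Ω) := by
    intro x hx t ht
    by_cases hxr : ‖x - x₀‖ < r
    · simp only [hZ, if_pos hxr] at ht
      obtain ⟨h1, h2⟩ := max_lt_iff.1 ht
      filter_upwards [hU x hx t h1,
        mem_nhdsWithin_of_mem_nhds (hW.continuousAt.eventually_lt_const h2)] with y h3 h4
      simp only [hZ]; split_ifs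
      · exact max_lt h3 h4
      · exact h3
    · simp only [hZ, if_neg hxr] at ht
      have hgt : r / 2 < ‖x - x₀‖ := by push Not at hxr; linarith
      filter_upwards [hU x hx t ht,
        mem_nhdsWithin_of_mem_nhds (hcn.continuousAt.eventually_const_lt hgt),
        self_mem_nhdsWithin] with y h3 h4 hy
      simp only [hZ]; split_ifs with h5
      · exact max_lt h3 ((hann y hy h4.le h5).trans_lt h3)
      · exact h3
  have hcase : ∀ x ∈ closure Ω, Z x = U x ∨ (LocSub Ω nv α F b c g W x ∧ Z x = W x ∧
      ∀ᶠ y in 𝓝[closure Ω] x, W y ≤ Z y) := by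
    intro x hx
    by_cases hxr : ‖x - x₀‖ < r
    · rcases le_total (W x) (U x) with h | h
      · left; simp only [hZ, if_pos hxr, max_eq_left h]
      · refine Or.inr ⟨hloc x hx hxr, by simp only [hZ, if_pos hxr, max_eq_right h], ?_⟩
        filter_upwards [mem_nhdsWithin_of_mem_nhds
          (hcn.continuousAt.eventually_lt_const hxr)] with y hy
        simp only [hZ]
        rw [if_pos hy]
        exact le_max_right _ _
    · left; simp only [hZ, if_neg hxr]
  have hZJ : SubJ Ω nv α F b c g q Z := by
    refine ⟨fun x hx p hp X hX hMJ hn => ?_, fun x hx C hC => ?_⟩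
    · rcases hcase x hx with h | ⟨h1, h2, h3⟩
      · rw [h]
        refine hUJ.jet x hx p hp X hX ?_ hn
        filter_upwards [hMJ] with y hy
        rw [h] at hy
        exact (hUZ y).trans hy
      · exact h1.jet hS hx h2 h3 hp hX hMJ hn
    · rcases hcase x hx with h | ⟨h1, h2, h3⟩
      · rw [h]
        refine hUJ.zer x hx C ?_
        filter_upwards [hC] with y hy
        rw [h] at hy
        exact (hUZ y).trans hy
      · exact h1.zer hS hx h2 h3 hq hC
  have hfin := hmax Z hZusc hZJ fun x hx => (hUK x hx).trans (hUZ x)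
  obtain ⟨s, hs1, hs2⟩ := exists_between hWx
  have hev : ∀ᶠ y in 𝓝[closure Ω] x₀, ‖y - x₀‖ < r ∧ -W y < s :=
    mem_nhdsWithin_of_mem_nhds ((hcn.continuousAt.eventually_lt_const (by simpa using hr)).and
      (hW.neg.continuousAt.eventually_lt_const hs1))
  obtain ⟨y, hy, ⟨h1, h2⟩, h3⟩ := uenv_approx hx₀ hs2 hev
  have h4 := hfin y hy
  simp only [hZ] at h4
  rw [if_pos h1] at h4
  linarith [le_max_right (U y) (W y)]

lemma const_subJ (hS : Std Ω nv α a A C₁ θ C₂ ν F b c g) {q : ℕ} (hq : 2 ≤ q) {k : ℝ}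
    (hk : ∀ x ∈ closure Ω, g x ≤ c x * (|k| ^ α * k)) :
    SubJ Ω nv α F b c g q (fun _ => k) := by
  have h : ∀ x ∈ closure Ω, LocSub Ω nv α F b c g (fun _ => k) x := fun x hx => by
    refine ⟨0, 0, Matrix.isSymm_zero, ?_, fun _ h => absurd rfl h, fun _ _ => hk x hx, fun _ =>
      ⟨by rw [inner_zero_left], fun _ => hk x hx⟩⟩
    filter_upwards with y
    rw [inner_zero_left, show qf (0 : Mat N) (y - x) = 0 by simp [qf]]
    simp
  exact ⟨fun x hx p hp X hX hMJ hn =>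
      (h x hx).jet hS hx rfl (Eventually.of_forall fun _ => le_rfl) hp hX hMJ hn,
    fun x hx C hC => (h x hx).zer hS hx rfl (Eventually.of_forall fun _ => le_rfl) hq hC⟩

end
end

/-! ### The lower envelope of a maximal subsolution is a supersolution -/

section
variable {N : ℕ} {Ω : Set (EN N)} {nv : EN N → EN N} {α a A C₁ θ C₂ ν : ℝ}
    {F : EN N → EN N → Mat N → ℝ} {b : EN N → EN N} {c g : EN N → ℝ}

lemma F_zero (hF : CondF1 Ω α F) {x : EN N} (hx : x ∈ closure Ω) {p : EN N} (hp : p ≠ 0) :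
    F x p 0 = 0 := by
  have h := hF x hx 1 one_ne_zero 0 le_rfl p hp 0 Matrix.isSymm_zero
  rw [one_smul, smul_zero, mul_zero, zero_mul] at h
  exact h

lemma F_sub_one (hF : CondF2 Ω α a A F) {x : EN N} (hx : x ∈ closure Ω) {p : EN N} (hp : p ≠ 0)
    {X : Mat N} (hX : X.IsSymm) {t : ℝ} (ht : 0 ≤ t) :
    F x p X - A * ‖p‖ ^ α * (t * N) ≤ F x p (X - t • (1 : Mat N)) := by
  have h := (hF.2.2 x hx p hp (X - t • (1 : Mat N)) _ (hX.sub (smul_one_isSymm t))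
    (smul_one_posSemidef ht)).2
  rw [sub_add_cancel, trace_smul_one] at h
  linarith

lemma ph_neg (α s : ℝ) : |-s| ^ α * (-s) = -(|s| ^ α * s) := by
  rw [abs_neg]; ring

/-- Otherwise a quadratic polynomial touching `U` from below could be raised a little and used as a
bump, contradicting maximality. -/
lemma super_jet (hS : Std Ω nv α a A C₁ θ C₂ ν F b c g) {q : ℕ} (hq : 2 ≤ q) {U : EN N → ℝ} {K : ℝ}
    (hU : UpperSemicontinuousOn U (closure Ω)) (hUJ : SubJ Ω nv α F b c g q U)
    (hUK : ∀ x ∈ closure Ω, -K ≤ U x)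
    (hmax : ∀ w, UpperSemicontinuousOn w (closure Ω) → SubJ Ω nv α F b c g q w →
      (∀ x ∈ closure Ω, -K ≤ w x) → ∀ x ∈ closure Ω, w x ≤ U x) :
    JetSub Ω nv α (dualF F) b c (fun x => -g x) (uenv (closure Ω) fun x => -U x) := by
  intro x₀ hx₀ p hp X hX hMJ hn
  by_contra hcon
  push Not at hcon
  set w := uenv (closure Ω) fun x => -U x with hw
  have hwU : ∀ x ∈ closure Ω, -U x ≤ w x := fun x hx =>
    le_uenv (f := fun x => -U x) (B := K) (fun y hy => by linarith [hUK y hy]) hx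
  obtain ⟨P, rfl⟩ : ∃ P, p = -P := ⟨-p, (neg_neg p).symm⟩
  obtain ⟨Y, rfl⟩ : ∃ Y, X = -Y := ⟨-X, (neg_neg X).symm⟩
  obtain ⟨V, hV⟩ : ∃ V, w x₀ = -V := ⟨-w x₀, (neg_neg _).symm⟩
  have hP : P ≠ 0 := neg_ne_zero.1 hp
  have hY : Y.IsSymm := by simpa using hX.neg
  have hgap : g x₀ < F x₀ P Y + ⟪b x₀, P⟫ * ‖P‖ ^ α + c x₀ * (|V| ^ α * V) := by
    rw [hV, mul_assoc, ph_neg, dualF, neg_neg, neg_neg, inner_neg_right, norm_neg] at hcon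
    linarith
  set d := F x₀ P Y + ⟪b x₀, P⟫ * ‖P‖ ^ α + c x₀ * (|V| ^ α * V) - g x₀ with hd
  have hd0 : 0 < d := by rw [hd]; linarith
  obtain ⟨ε, hε, hεd⟩ : ∃ ε > 0, A * ‖P‖ ^ α * (4 * ε * N) < d := by
    have hc : Continuous fun ε : ℝ => A * ‖P‖ ^ α * (4 * ε * N) := by fun_prop
    have := (hc.tendsto' 0 0 (by ring)).eventually_lt_const hd0
    obtain ⟨ε, h1, h2⟩ := ((this.filter_mono nhdsWithin_le_nhds).and
      (self_mem_nhdsWithin (s := Ioi (0 : ℝ)))).exists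
    exact ⟨ε, h2, h1⟩
  set Y' := Y - (4 * ε) • (1 : Mat N) with hY'
  have hYs : Y'.IsSymm := hY.sub (smul_one_isSymm _)
  set T := F x₀ P Y' + ⟪b x₀, P⟫ * ‖P‖ ^ α with hT
  have hT1 : -c x₀ * (|V| ^ α * V) < T - g x₀ := by
    have := F_sub_one hS.f2 hx₀ hP hY (t := 4 * ε) (by positivity)
    rw [← hY'] at this
    linarith
  obtain ⟨η, hη, hnear⟩ := strict_near (c := fun x => -c x) (g := fun x => T - g x) hS.hα
    hS.cc.neg (continuousOn_const.sub hS.gc) hx₀ hT1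
  set Φ : EN N → ℝ := fun x => ⟪P, x - x₀⟫ + 1 / 2 * qf Y' (x - x₀) with hΦ
  have hΦc : Continuous Φ := qpoly_cont Y' P x₀
  have hΦ0 : Φ x₀ = 0 := by
    simp only [hΦ, sub_self, inner_zero_right, qf_zero, mul_zero, add_zero]
  set Q : EN N → EN N := fun x => P + Matrix.toEuclideanLin Y' (x - x₀) with hQ
  have hQc : Continuous Q :=
    continuous_const.add ((LinearMap.continuous_of_finiteDimensional _).comp
      (continuous_id.sub continuous_const))
  have hQ0 : Q x₀ = P := by simp [hQ]
  obtain ⟨ε₁, hε₁, hst⟩ := normal_stable hS.dom hn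
  have hop : ∀ᶠ x in 𝓝[closure Ω] x₀, T - η < F x (Q x) Y' + ⟪b x, Q x⟫ * ‖Q x‖ ^ α := by
    have h1 := op_cont hS hYs hx₀ hP
    have h2 : Tendsto (fun x => (x, Q x)) (𝓝[closure Ω] x₀) (𝓝[closure Ω ×ˢ univ] (x₀, P)) := by
      refine tendsto_nhdsWithin_iff.2 ⟨?_, ?_⟩
      · have : Continuous fun x => (x, Q x) := continuous_id.prodMk hQc
        exact (this.tendsto' x₀ (x₀, P) (by rw [hQ0])).mono_left nhdsWithin_le_nhds
      · filter_upwards [self_mem_nhdsWithin] with x hx using ⟨hx, mem_univ _⟩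
    exact (h1.tendsto.comp h2).eventually_const_lt (by linarith)
  have hloc : ∀ᶠ x in 𝓝 x₀, ‖x - x₀‖ < min η ε₁ ∧ |Φ x| < η / 2 ∧ ‖Q x - P‖ < ε₁ ∧ Q x ≠ 0 := by
    refine Eventually.and ?_ (Eventually.and ?_ (Eventually.and ?_ ?_))
    · have : Continuous fun x : EN N => ‖x - x₀‖ := by fun_prop
      exact this.continuousAt.eventually_lt_const (by
        beta_reduce; rw [sub_self, norm_zero]; positivity)
    · exact hΦc.abs.continuousAt.eventually_lt_const (by
        beta_reduce; rw [hΦ0, abs_zero]; positivity)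
    · exact (hQc.sub continuous_const).norm.continuousAt.eventually_lt_const (by
        change ‖Q x₀ - P‖ < ε₁
        rw [hQ0, sub_self, norm_zero]; positivity)
    · exact hQc.continuousAt.eventually_ne (by rwa [hQ0])
  obtain ⟨r, hr, hball⟩ := Metric.mem_nhdsWithin_iff.1
    (hMJ.and (hop.and (hloc.filter_mono nhdsWithin_le_nhds)))
  have hin : ∀ x ∈ closure Ω, ‖x - x₀‖ < r → _ := fun x hx hxr =>
    hball ⟨by rwa [mem_ball, dist_eq_norm], hx⟩
  clear hball hop hloc
  set δ := min (ε * r ^ 2 / 2) (η / 2) with hδ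
  have hδ0 : 0 < δ := by positivity
  refine bump hS hq hU hUJ hUK hmax (W := fun x => V + δ + Φ x) (x₀ := x₀) (r := r)
    (continuous_const.add hΦc) hx₀ hr ?_ ?_ ?_
  · rw [hΦ0, ← hw, hV]; linarith
  · intro x hx h1 h2
    have h3 := (hin x hx h2).1
    have h4 := hwU x hx
    have h5 : δ ≤ ε * r ^ 2 / 2 := min_le_left _ _
    have h6 : (r / 2) ^ 2 ≤ ‖x - x₀‖ ^ 2 := by gcongr
    have h7 : ε * (r / 2) ^ 2 ≤ ε * ‖x - x₀‖ ^ 2 := by gcongr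
    rw [hV, inner_neg_left, qf_neg] at h3
    change V + δ + (⟪P, x - x₀⟫ + 1 / 2 * qf Y' (x - x₀)) ≤ U x
    rw [hY', qf_sub, qf_smul, qf_one]
    linarith
  · intro x₁ hx₁ hx₁r
    obtain ⟨-, h1, h2, h3, h4, h5⟩ := hin x₁ hx₁ hx₁r
    have h6 := hnear x₁ hx₁ (h2.trans_le (min_le_left _ _)) (V + δ + Φ x₁) (by
      have h7 : δ ≤ η / 2 := min_le_right _ _
      rw [abs_lt] at h3 ⊢
      constructor <;> linarith [h3.1, h3.2])
    refine ⟨Q x₁, Y', hYs, Eventually.of_forall fun x => ?_, fun _ _ => ?_, fun _ h => absurd h h5,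
      fun hf => ?_⟩
    · have := qpoly_shift hYs P x₀ x₁ x
      simp only [hΦ, hQ]
      linarith
    · beta_reduce at h6 ⊢
      linarith
    · have h7 := hst x₁ (-Q x₁) (h2.le.trans (min_le_right _ _))
        (by rw [← neg_sub', norm_neg]; exact h4.le) hf
      rw [inner_neg_left] at h7
      exact ⟨by linarith, fun h => by linarith⟩

/-- The condition at locally constant points: otherwise `U` could be raised by a cap of
`-‖· - x₀‖ ^ (2 m)`. -/
lemma super_const (hS : Std Ω nv α a A C₁ θ C₂ ν F b c g) {m : ℕ} (hm : 1 ≤ m)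
    (hmβ : 1 < (2 * m - 1) * (α + 1)) {U : EN N → ℝ} {K : ℝ}
    (hU : UpperSemicontinuousOn U (closure Ω)) (hUJ : SubJ Ω nv α F b c g (2 * m) U)
    (hUK : ∀ x ∈ closure Ω, -K ≤ U x)
    (hmax : ∀ w, UpperSemicontinuousOn w (closure Ω) → SubJ Ω nv α F b c g (2 * m) w →
      (∀ x ∈ closure Ω, -K ≤ w x) → ∀ x ∈ closure Ω, w x ≤ U x)
    {x₀ : EN N} (hx₀ : x₀ ∈ Ω) {k : ℝ}
    (hk : ∀ᶠ x in 𝓝[closure Ω] x₀, uenv (closure Ω) (fun x => -U x) x = k) :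
    -g x₀ ≤ c x₀ * (|k| ^ α * k) := by
  by_contra hcon
  push Not at hcon
  have hx₀' := subset_closure hx₀
  set w := uenv (closure Ω) fun x => -U x with hw
  have hwU : ∀ x ∈ closure Ω, -U x ≤ w x := fun x hx =>
    le_uenv (f := fun x => -U x) (B := K) (fun y hy => by linarith [hUK y hy]) hx
  obtain ⟨η, hη, hnear⟩ := strict_near (g := fun x => -g x) hS.hα hS.cc hS.gc.neg hx₀' hcon
  obtain ⟨Mb, hMb0, hMb⟩ := bound_on hS.dom hS.bc
  have hA : 0 < A := hS.f2.1.trans_le hS.f2.2.1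
  set β := (2 * m - 1) * (α + 1) - 1 with hβ
  have hβ0 : 0 < β := by rw [hβ]; linarith
  set L := (A * (1 + 9 * m) * N + Mb) * (2 * m : ℝ) ^ (α + 1) with hL
  have hm0 : (0 : ℝ) < 2 * m := by exact_mod_cast (by omega : 0 < 2 * m)
  have hL0 : 0 ≤ L := by rw [hL]; positivity
  obtain ⟨r₀, hr₀, hball⟩ := Metric.mem_nhdsWithin_iff.1 hk
  obtain ⟨r₁, hr₁, hball₁⟩ := Metric.isOpen_iff.1 hS.dom.1 x₀ hx₀
  obtain ⟨r, ⟨h1, h2⟩, h3, hr⟩ : ∃ r, ((L * (1 * r) ^ β < η) ∧ (1 * (1 * r) ^ (2 * m) < η / 2)) ∧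
      r < min (min r₀ r₁) (min η 1) ∧ 0 < r := by
    have e1 : ∀ᶠ r in 𝓝[>] (0 : ℝ), r < min (min r₀ r₁) (min η 1) :=
      (continuous_id.continuousAt.eventually_lt_const (by simp only [id]; positivity)).filter_mono
        nhdsWithin_le_nhds
    obtain ⟨r, h⟩ := (((small_rpow L hβ0 1 hη).and (small_pow 1 (q := 2 * m) (by omega) 1
      (half_pos hη))).and (e1.and (self_mem_nhdsWithin (s := Ioi (0 : ℝ))))).exists
    exact ⟨r, h⟩
  rw [one_mul] at h1
  rw [one_mul, one_mul] at h2
  simp only [lt_min_iff] at h3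
  obtain ⟨⟨hrr0, hrr1⟩, hrη, hr1⟩ := h3
  set δ := min ((r / 2) ^ (2 * m)) (η / 2) with hδ
  have hδ0 : 0 < δ := by positivity
  have hwk : w x₀ = k := hk.self_of_nhdsWithin hx₀'
  refine bump hS (q := 2 * m) (by omega) hU hUJ hUK hmax
    (W := fun x => -k + δ - ‖x - x₀‖ ^ (2 * m)) (x₀ := x₀) (r := r) (by fun_prop) hx₀' hr ?_ ?_ ?_
  · rw [← hw, hwk, sub_self, norm_zero, zero_pow (by omega)]; linarith
  · intro x hx h4 h5
    have h6 : w x = k := hball ⟨by rw [mem_ball, dist_eq_norm]; linarith, hx⟩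
    have h7 := hwU x hx
    have h8 : (r / 2) ^ (2 * m) ≤ ‖x - x₀‖ ^ (2 * m) := by gcongr
    have h9 : δ ≤ (r / 2) ^ (2 * m) := min_le_left _ _
    beta_reduce
    linarith
  · intro x₁ hx₁ hx₁r
    have hxΩ : x₁ ∈ Ω := hball₁ (by rw [mem_ball, dist_eq_norm]; linarith)
    have hnf : x₁ ∉ frontier Ω := fun h => by
      rw [hS.dom.1.frontier_eq] at h; exact h.2 hxΩ
    have hpow : ‖x₁ - x₀‖ ^ (2 * m) < η / 2 :=
      (pow_le_pow_left₀ (norm_nonneg _) hx₁r.le _).trans_lt h2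
    have hpow0 : 0 ≤ ‖x₁ - x₀‖ ^ (2 * m) := by positivity
    have hst := hnear x₁ hx₁ (by linarith) (-(-k + δ - ‖x₁ - x₀‖ ^ (2 * m))) (by
      have h7 : δ ≤ η / 2 := min_le_right _ _
      rw [abs_lt]
      constructor <;> linarith)
    rw [ph_neg] at hst
    by_cases hx01 : x₁ - x₀ = 0
    · refine ⟨0, -((2 : ℝ) • (1 : Mat N)), (smul_one_isSymm 2).neg, ?_, fun _ h => absurd rfl h,
        fun _ _ => ?_, fun h => absurd h hnf⟩
      · filter_upwards [mem_nhdsWithin_of_mem_nhds (ball_mem_nhds x₁ one_pos)] with x hx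
        rw [mem_ball, dist_eq_norm] at hx
        have he : x₁ = x₀ := sub_eq_zero.1 hx01
        have h5 : ‖x - x₁‖ ^ (2 * m) ≤ ‖x - x₁‖ ^ 2 :=
          pow_le_pow_of_le_one (norm_nonneg _) hx.le (by omega)
        rw [inner_zero_left, qf_neg, qf_smul, qf_one, hx01, norm_zero, zero_pow (by omega), ← he]
        linarith
      · beta_reduce at hst ⊢
        linarith
    · set ρ := ‖x₁ - x₀‖ with hρ
      have hρ0 : 0 < ρ := norm_pos_iff.2 hx01
      set H := 2 * m * (1 * ρ ^ (2 * m)) / ρ with hH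
      have hH0 : 0 < H := by positivity
      set e := ρ⁻¹ • (x₁ - x₀) with he
      have hen : ‖e‖ = 1 := by
        rw [he, norm_smul, norm_inv, norm_norm, ← hρ]
        exact inv_mul_cancel₀ hρ0.ne'
      set κ := (1 + 9 * (m : ℝ)) * H / ρ with hκ
      have hκ0 : 0 ≤ κ := by positivity
      have hpn : ‖-(H • e)‖ = H := by
        rw [norm_neg, norm_smul, hen, mul_one, Real.norm_of_nonneg hH0.le]
      have hp0 : -(H • e) ≠ 0 := by rw [← norm_pos_iff, hpn]; exact hH0
      refine ⟨-(H • e), 0 - κ • (1 : Mat N), Matrix.isSymm_zero.sub (smul_one_isSymm κ), ?_,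
        fun _ _ => ?_, fun _ h => absurd h hp0, fun h => absurd h hnf⟩
      · have hexp := pow_pen_exp hx01 hm (zero_le_one (α := ℝ))
        have ht : Tendsto (fun x => x - x₁) (𝓝[closure Ω] x₁) (𝓝 0) := by
          have : Continuous fun x : EN N => x - x₁ := by fun_prop
          exact (this.tendsto' x₁ 0 (sub_self _)).mono_left nhdsWithin_le_nhds
        filter_upwards [ht.eventually hexp] with x hx
        rw [← hρ, ← hH, ← he, ← hκ, show x₁ - x₀ + (x - x₁) = x - x₀ by abel] at hx
        rw [inner_neg_left, real_inner_smul_left e (x - x₁) H, zero_sub, qf_neg, qf_smul, qf_one]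
        linarith
      · have hF := F_sub_one hS.f2 hx₁ hp0 Matrix.isSymm_zero hκ0
        rw [F_zero hS.f1 hx₁ hp0, hpn] at hF
        rw [hpn]
        have hdr : -(Mb * H) ≤ ⟪b x₁, -(H • e)⟫ := by
          have h5 := abs_real_inner_le_norm (b x₁) (-(H • e))
          rw [hpn] at h5
          have h6 : ‖b x₁‖ * H ≤ Mb * H := by gcongr; exact hMb x₁ hx₁
          linarith [neg_abs_le ⟪b x₁, -(H • e)⟫]
        have hdr2 : -(Mb * H) * H ^ α ≤ ⟪b x₁, -(H • e)⟫ * H ^ α := by gcongr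
        have hH1 : H ^ α * H = H ^ (α + 1) := by rw [Real.rpow_add_one hH0.ne']
        have hHρ : H ^ (α + 1) = (2 * m : ℝ) ^ (α + 1) * ρ ^ β * ρ := by
          have e1 : H = 2 * m * ρ ^ (2 * m - 1 : ℝ) := by
            rw [hH, one_mul, Real.rpow_sub_one hρ0.ne', mul_div_assoc]
            congr 2
            rw [← Real.rpow_natCast]; push_cast; rfl
          rw [e1, Real.mul_rpow hm0.le (by positivity), ← Real.rpow_mul hρ0.le, mul_assoc,
            ← Real.rpow_add_one hρ0.ne']
          congr 2
          rw [hβ]; ring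
        have hρβ : ρ ^ β ≤ r ^ β := Real.rpow_le_rpow hρ0.le hx₁r.le hβ0.le
        have hfin : A * H ^ α * (κ * N) + Mb * H * H ^ α ≤ L * ρ ^ β := by
          have e1 : A * H ^ α * (κ * N) = A * (1 + 9 * m) * N * ((2 * m : ℝ) ^ (α + 1) * ρ ^ β) := by
            rw [hκ]
            rw [show A * H ^ α * ((1 + 9 * (m : ℝ)) * H / ρ * N)
              = A * (1 + 9 * m) * N * ((H ^ α * H) / ρ) by ring, hH1, hHρ, mul_div_assoc,
              div_self hρ0.ne', mul_one]
          have e2 : Mb * H * H ^ α ≤ Mb * ((2 * m : ℝ) ^ (α + 1) * ρ ^ β) := by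
            rw [mul_assoc, mul_comm H, hH1, hHρ]
            refine mul_le_mul_of_nonneg_left ?_ hMb0
            exact mul_le_of_le_one_right (by positivity) (by linarith)
          rw [hL]
          linarith
        have hfin2 : L * ρ ^ β ≤ L * r ^ β := mul_le_mul_of_nonneg_left hρβ hL0
        beta_reduce at hst ⊢
        linarith

lemma super_subJ (hS : Std Ω nv α a A C₁ θ C₂ ν F b c g) {m : ℕ} (hm : 1 ≤ m)
    (hmβ : 1 < (2 * m - 1) * (α + 1)) {ψ : EN N → ℝ} {Cψ : ℝ}
    (hB : Barrier Ω nv (2 * m) ψ Cψ) {U : EN N → ℝ} {K : ℝ}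
    (hU : UpperSemicontinuousOn U (closure Ω)) (hUJ : SubJ Ω nv α F b c g (2 * m) U)
    (hUK : ∀ x ∈ closure Ω, -K ≤ U x)
    (hmax : ∀ w, UpperSemicontinuousOn w (closure Ω) → SubJ Ω nv α F b c g (2 * m) w →
      (∀ x ∈ closure Ω, -K ≤ w x) → ∀ x ∈ closure Ω, w x ≤ U x) :
    UpperSemicontinuousOn (uenv (closure Ω) fun x => -U x) (closure Ω) ∧
    SubJ Ω nv α (dualF F) b c (fun x => -g x) (2 * m) (uenv (closure Ω) fun x => -U x) := by
  have husc : UpperSemicontinuousOn (uenv (closure Ω) fun x => -U x) (closure Ω) :=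
    uenv_usc (B := K) fun y hy => by linarith [hUK y hy]
  have hjet := super_jet hS (by omega) hU hUJ hUK hmax
  exact ⟨husc, hjet, fun x hx C hC => zer_of_const hS.dual hm hmβ hB husc hjet
    (fun y hy k hk => super_const hS hm hmβ hU hUJ hUK hmax hy hk) hx hC⟩

end

/-! ### Existence by Perron's method -/

section
variable {N : ℕ} {Ω : Set (EN N)} {nv : EN N → EN N} {α a A C₁ θ C₂ ν : ℝ}
    {F : EN N → EN N → Mat N → ℝ} {b : EN N → EN N} {c g : EN N → ℝ}

lemma SubJ.congr {q : ℕ} {u w : EN N → ℝ} (h : SubJ Ω nv α F b c g q u)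
    (he : EqOn u w (closure Ω)) : SubJ Ω nv α F b c g q w := by
  refine ⟨fun x hx p hp X hX hMJ hn => ?_, fun x hx C hC => ?_⟩
  · rw [← he hx]
    refine h.jet x hx p hp X hX ?_ hn
    filter_upwards [hMJ, self_mem_nhdsWithin] with y hy hyK
    rwa [he hyK, he hx]
  · rw [← he hx]
    refine h.zer x hx C ?_
    filter_upwards [hC, self_mem_nhdsWithin] with y hy hyK
    rwa [he hyK, he hx]

/-- A constant `K` at which the zero order term dominates `g`, so that `-K` is a subsolution and
`K` a supersolution. -/
lemma exists_barrier_const (hS : Std Ω nv α a A C₁ θ C₂ ν F b c g) :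
    ∃ K : ℝ, ∀ x ∈ closure Ω, |g x| ≤ c x * (|-K| ^ α * (-K)) := by
  obtain ⟨B, hB0, hB⟩ := bound_on hS.dom hS.gc
  obtain ⟨y, hy, hymax⟩ := (dom_compact hS.dom).exists_isMaxOn hS.dom.2.1.nonempty.closure hS.cc
  have hcy := hS.neg y hy
  set t := (B + 1) / (-c y) with ht
  have ht0 : 0 < t := div_pos (by linarith) (by linarith)
  have hα := hS.hα
  refine ⟨t ^ (1 / (α + 1)), fun x hx => ?_⟩
  have hK : 0 < t ^ (1 / (α + 1)) := by positivity
  rw [ph_neg, abs_of_pos hK, ← Real.rpow_add_one hK.ne', ← Real.rpow_mul ht0.le,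
    one_div_mul_cancel (by linarith), Real.rpow_one]
  have h1 : c x ≤ c y := hymax hx
  have h2 : -c y * t = B + 1 := mul_div_cancel₀ _ (by linarith)
  have h3 : c x * t ≤ c y * t := by gcongr
  have h4 := hB x hx
  rw [Real.norm_eq_abs] at h4
  linarith

/-- The supremum `U` of the subsolutions above `-K` is a subsolution, its lower envelope is a
supersolution, and comparison of the two gives continuity. -/
lemma perron (hS : Std Ω nv α a A C₁ θ C₂ ν F b c g) {m : ℕ} (hm : 1 ≤ m)
    (hmβ : 1 < (2 * m - 1) * (α + 1)) {ψ : EN N → ℝ} {Cψ : ℝ}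
    (hB : Barrier Ω nv (2 * m) ψ Cψ) :
    ∃ u : EN N → ℝ, ContinuousOn u (closure Ω) ∧ SubJ Ω nv α F b c g (2 * m) u ∧
      SubJ Ω nv α (dualF F) b c (fun x => -g x) (2 * m) (fun x => -u x) := by
  obtain ⟨K, hK⟩ := exists_barrier_const hS
  have hcK : UpperSemicontinuousOn (fun _ : EN N => -K) (closure Ω) :=
    continuousOn_const.upperSemicontinuousOn
  have hsubK : SubJ Ω nv α F b c g (2 * m) fun _ => -K :=
    const_subJ hS (by omega) fun x hx => (le_abs_self _).trans (hK x hx)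
  have hsupK : SubJ Ω nv α (dualF F) b c (fun x => -g x) (2 * m) fun _ => -K :=
    const_subJ hS.dual (by omega) fun x hx => (neg_le_abs _).trans (hK x hx)
  set S : Set (EN N → ℝ) := {w | UpperSemicontinuousOn w (closure Ω) ∧
    SubJ Ω nv α F b c g (2 * m) w ∧ ∀ x ∈ closure Ω, -K ≤ w x} with hSdef
  have hSK : (fun _ : EN N => -K) ∈ S := ⟨hcK, hsubK, fun _ _ => le_rfl⟩
  have hbd : ∀ w ∈ S, ∀ x ∈ closure Ω, w x ≤ K := fun w hw x hx => by
    have := comparison hS hm hB hw.1 hcK hw.2.1 hsupK x hx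
    linarith
  set U₀ : EN N → ℝ := fun x => sSup ((fun w : EN N → ℝ => w x) '' S) with hU₀
  have hne : ∀ x, ((fun w : EN N → ℝ => w x) '' S).Nonempty := fun x => ⟨_, _, hSK, rfl⟩
  have hle : ∀ w ∈ S, ∀ x ∈ closure Ω, w x ≤ U₀ x := fun w hw x hx =>
    le_csSup ⟨K, by rintro _ ⟨v, hv, rfl⟩; exact hbd v hv x hx⟩ ⟨w, hw, rfl⟩
  have hUB : ∀ x ∈ closure Ω, U₀ x ≤ K := fun x hx =>
    csSup_le (hne x) (by rintro _ ⟨v, hv, rfl⟩; exact hbd v hv x hx)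
  have hsup : ∀ x ∈ closure Ω, ∀ t < U₀ x, ∃ w ∈ S, t < w x := fun x hx t ht => by
    obtain ⟨_, ⟨w, hw, rfl⟩, h⟩ := exists_lt_of_lt_csSup (hne x) ht
    exact ⟨w, hw, h⟩
  set U := uenv (closure Ω) U₀ with hU
  have hUle : ∀ x ∈ closure Ω, U₀ x ≤ U x := fun x hx => le_uenv hUB hx
  have hUusc : UpperSemicontinuousOn U (closure Ω) := uenv_usc hUB
  have hUJ : SubJ Ω nv α F b c g (2 * m) U :=
    sup_subJ hS hm hmβ hB hUB (fun w hw => hw.1) hle hsup fun w hw => hw.2.1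
  have hUK : ∀ x ∈ closure Ω, -K ≤ U x := fun x hx => (hle _ hSK x hx).trans (hUle x hx)
  obtain ⟨hwusc, hwJ⟩ := super_subJ hS hm hmβ hB hUusc hUJ hUK
    fun w h1 h2 h3 x hx => (hle w ⟨h1, h2, h3⟩ x hx).trans (hUle x hx)
  have heq : EqOn (uenv (closure Ω) fun x => -U x) (fun x => -U x) (closure Ω) := fun x hx => by
    have h1 := comparison hS hm hB hUusc hwusc hUJ hwJ x hx
    have h2 : -U x ≤ uenv (closure Ω) (fun x => -U x) x :=
      le_uenv (f := fun x => -U x) (B := K) (fun y hy => by linarith [hUK y hy]) hx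
    exact le_antisymm (by linarith) h2
  refine ⟨U, continuousOn_iff_lower_upperSemicontinuousOn.2 ⟨fun x hx t ht => ?_, hUusc⟩, hUJ,
    hwJ.congr heq⟩
  have h1 := hwusc x hx (-t) (by
    beta_reduce; rw [heq hx]; exact neg_lt_neg ht)
  filter_upwards [h1, self_mem_nhdsWithin] with y hy hyK
  rw [heq hyK] at hy
  exact neg_lt_neg_iff.1 hy

lemma exists_exponent (hα : -1 < α) : ∃ m : ℕ, 1 ≤ m ∧ 1 < (2 * m - 1) * (α + 1) := by
  have h : 0 < α + 1 := by linarith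
  obtain ⟨m, hm⟩ := exists_nat_gt (1 / (α + 1))
  rw [div_lt_iff₀ h] at hm
  refine ⟨m + 1, by omega, hm.trans_le ?_⟩
  push_cast
  have : (0 : ℝ) ≤ m := Nat.cast_nonneg m
  gcongr
  linarith

end

/-! ### Comparison and unique solvability -/

/-- Theorem `princonfc<0`: comparison principle and unique solvability of the
Neumann problem when `c < 0`. -/
theorem stmt14 {N : ℕ} (Ω : Set (EN N)) (nv : EN N → EN N) (hΩ : IsC2Domain Ω nv)
    (α a A C₁ θ C₂ ν : ℝ) (hα : -1 < α)
    (F : EN N → EN N → Mat N → ℝ)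
    (hF1 : CondF1 Ω α F) (hF2 : CondF2 Ω α a A F)
    (hF3 : CondF3 Ω α C₁ θ F) (hF4 : CondF4 Ω α C₂ ν F)
    (b : EN N → EN N) (c g : EN N → ℝ)
    (hbc : ContinuousOn b (closure Ω)) (hcc : ContinuousOn c (closure Ω))
    (hgc : ContinuousOn g (closure Ω))
    (hcneg : ∀ x ∈ closure Ω, c x < 0) :
    -- (a) comparison principle
    ((∀ u v : EN N → ℝ, UpperSemicontinuousOn u (closure Ω) →
        LowerSemicontinuousOn v (closure Ω) →
        IsSubSol Ω F b α (fun x r => c x * |r| ^ α * r) g (BNeu nv) u →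
        IsSuperSol Ω F b α (fun x r => c x * |r| ^ α * r) g (BNeu nv) v →
        (((∃ M, ∀ x ∈ closure Ω, |u x| ≤ M) ∧ (∃ M, ∀ x ∈ closure Ω, |v x| ≤ M)) ∨
          ((∀ x ∈ closure Ω, 0 ≤ v x) ∧ (∃ M, ∀ x ∈ closure Ω, |v x| ≤ M))) →
        ∀ x ∈ closure Ω, u x ≤ v x)) ∧
    -- (b) existence and uniqueness of the viscosity solution
    (∃ u : EN N → ℝ,
      (ContinuousOn u (closure Ω) ∧
        IsSubSol Ω F b α (fun x r => c x * |r| ^ α * r) g (BNeu nv) u ∧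
        IsSuperSol Ω F b α (fun x r => c x * |r| ^ α * r) g (BNeu nv) u) ∧
      ∀ u' : EN N → ℝ,
        (ContinuousOn u' (closure Ω) ∧
          IsSubSol Ω F b α (fun x r => c x * |r| ^ α * r) g (BNeu nv) u' ∧
          IsSuperSol Ω F b α (fun x r => c x * |r| ^ α * r) g (BNeu nv) u') →
        Set.EqOn u u' (closure Ω)) := by
  have hS : Std Ω nv α a A C₁ θ C₂ ν F b c g :=
    ⟨hΩ, hα, hF1, hF2, hF3, hF4, hbc, hcc, hgc, hcneg⟩
  obtain ⟨m, hm, hmβ⟩ := exists_exponent hα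
  obtain ⟨ψ, Cψ, hB⟩ := exists_barrier hΩ (q := 2 * m) (by omega)
  have hcomp : ∀ u v : EN N → ℝ, UpperSemicontinuousOn u (closure Ω) →
      LowerSemicontinuousOn v (closure Ω) →
      IsSubSol Ω F b α (fun x r => c x * |r| ^ α * r) g (BNeu nv) u →
      IsSuperSol Ω F b α (fun x r => c x * |r| ^ α * r) g (BNeu nv) v →
      ∀ x ∈ closure Ω, u x ≤ v x := by
    intro u v hu hv hsub hsup x hx
    have hw : UpperSemicontinuousOn (fun x => -v x) (closure Ω) := fun y hy t ht => by
      filter_upwards [hv y hy (-t) (neg_lt.1 ht)] with z hz using neg_lt.1 hz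
    have := comparison hS hm hB hu hw (hsub.subJ hS hm hmβ hB hu)
      (hsup.dual.subJ hS.dual hm hmβ hB hw) x hx
    linarith
  refine ⟨fun u v hu hv hsub hsup _ => hcomp u v hu hv hsub hsup, ?_⟩
  obtain ⟨u, huc, hu1, hu2⟩ := perron hS hm hmβ hB
  have hsub := hu1.isSubSol hS
  have hsup := (hu2.isSubSol hS.dual).dual
  refine ⟨u, ⟨huc, hsub, hsup⟩, fun u' ⟨hc', hsub', hsup'⟩ x hx => le_antisymm ?_ ?_⟩
  · exact hcomp u u' huc.upperSemicontinuousOn hc'.lowerSemicontinuousOn hsub hsup' x hx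
  · exact hcomp u' u hc'.upperSemicontinuousOn huc.lowerSemicontinuousOn hsub' hsup x hx
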